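/- arXiv:1901.09303 — 2 statements merged into one kernel-verified Lean document; each statement's English description precedes it below -/
import Mathlib

section
/- Fix θ ∈ Θ_M°. As |x| → ∞ the second-order score derivatives satisfy: ℓ_{σσ}(x) = O(1), ℓ_{σα}(x) = O(log|x|), ℓ_{σβ}(x) = O(1), ℓ_{αα}(x) = O(log²|x|), ℓ_{αβ}(x) = O(log|x|), ℓ_{ββ}(x) = O(1). -/
open MeasureTheory Filter

noncomputable section

def ThetaInt : Set (Fin 4 → ℝ) :=
  {θ | 0 < θ 1 ∧ θ 2 ∈ Set.Ioo (0:ℝ) 2 ∧ θ 3 ∈ Set.Ioo (-1:ℝ) 1}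

/-- Cumulant (log characteristic function) of the continuous (M₀) parameterization,
with `θ = (μ, σ, α, β)`. -/
def psiM (θ : Fin 4 → ℝ) (t : ℝ) : ℂ :=
  if θ 2 = 1 then
    ((-(|θ 1 * t|) : ℝ) : ℂ)
      - Complex.I * (((2 * θ 3 / Real.pi) * (θ 1 * t) * Real.log |θ 1 * t| : ℝ) : ℂ)
      + Complex.I * ((θ 0 * t : ℝ) : ℂ)
  else
    ((-(|θ 1 * t| ^ (θ 2)) : ℝ) : ℂ) *
        (1 + Complex.I * ((θ 3 * Real.sign t * Real.tan (Real.pi * θ 2 / 2)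
            * (|θ 1 * t| ^ (1 - θ 2) - 1) : ℝ) : ℂ))
      + Complex.I * ((θ 0 * t : ℝ) : ℂ)

/-- Characteristic function of the (M₀) parameterization. -/
def phiM (θ : Fin 4 → ℝ) (t : ℝ) : ℂ := Complex.exp (psiM θ t)

/-- Stable density in the (M₀) parameterization, via Fourier inversion. -/
def fM (θ : Fin 4 → ℝ) (x : ℝ) : ℝ :=
  (1 / (2 * Real.pi)) *
    (∫ t : ℝ, Complex.exp (-Complex.I * (t : ℂ) * (x : ℂ)) * phiM θ t).re

/-- Partial derivative of the density in parameter `i`. -/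
def fP (i : Fin 4) (θ : Fin 4 → ℝ) (x : ℝ) : ℝ :=
  deriv (fun s => fM (Function.update θ i s) x) (θ i)

/-- Second partial derivative of the density in parameters `i`, `j`. -/
def fPP (i j : Fin 4) (θ : Fin 4 → ℝ) (x : ℝ) : ℝ :=
  deriv (fun s => fP i (Function.update θ j s) x) (θ j)

/-- Derivative of the density in `x`. -/
def fX (θ : Fin 4 → ℝ) (x : ℝ) : ℝ := deriv (fun y => fM θ y) x

/-- Mixed derivative `∂²f/∂x∂θᵢ`. -/
def fPX (i : Fin 4) (θ : Fin 4 → ℝ) (x : ℝ) : ℝ := deriv (fun y => fP i θ y) x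

/-- Score functions. -/
def ellP (i : Fin 4) (θ : Fin 4 → ℝ) (x : ℝ) : ℝ := fP i θ x / fM θ x

/-- Derivative of the score in `x`. -/
def ellPX (i : Fin 4) (θ : Fin 4 → ℝ) (x : ℝ) : ℝ := deriv (fun y => ellP i θ y) x

/-- Derivative of the score `ℓ_{θᵢ}` in the parameter `θⱼ`. -/
def ellPP (i j : Fin 4) (θ : Fin 4 → ℝ) (x : ℝ) : ℝ :=
  deriv (fun s => ellP i (Function.update θ j s) x) (θ j)

/-- `h = O(r)` as `|x| → ∞`. -/
def IsBigOAtInfty (h r : ℝ → ℝ) : Prop :=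
  ∃ c > 0, ∃ M > 0, ∀ x : ℝ, M ≤ |x| → |h x| ≤ c * r x


end

noncomputable section

def EEs (x : ℂ) : ℂ := dslope Complex.exp 0 x

def S1s (u : ℂ) : ℂ := dslope (fun u : ℂ => Complex.sin (Real.pi * u / 2)) 0 u

def kapC (α : ℂ) : ℂ := -Complex.cos (Real.pi * (α - 1) / 2) / S1s (α - 1)

def KC (α L : ℂ) : ℂ := Complex.exp L * (L * EEs ((α - 1) * L))

/-- Unified analytic cumulant. -/
def PsiC (e m : ℝ) (σ α β z : ℂ) : ℂ :=
  -Complex.exp (α * (Complex.log σ + Complex.log z))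
    + Complex.I * e * β * kapC α * KC α (Complex.log σ + Complex.log z)
    + Complex.I * e * m * z

lemma EEs_mul (x : ℂ) : x * EEs x = Complex.exp x - 1 := by
  have h := sub_smul_dslope Complex.exp 0 x
  simpa [EEs] using h

lemma EEs_zero : EEs 0 = 1 := by
  simp [EEs, dslope_same]

lemma EEs_differentiable : Differentiable ℂ EEs := by
  rw [← differentiableOn_univ]
  exact (Complex.differentiableOn_dslope (by simp)).2 Complex.differentiable_exp.differentiableOn

lemma S1s_differentiable : Differentiable ℂ S1s := by
  rw [← differentiableOn_univ]
  refine (Complex.differentiableOn_dslope (by simp)).2 ?_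
  fun_prop

lemma S1s_mul (u : ℂ) : u * S1s u = Complex.sin (Real.pi * u / 2) := by
  have h := sub_smul_dslope (fun u : ℂ => Complex.sin (Real.pi * u / 2)) 0 u
  simpa [S1s] using h

lemma S1s_zero : S1s 0 = Real.pi / 2 := by
  have h : HasDerivAt (fun u : ℂ => Complex.sin (Real.pi * u / 2)) (Real.pi / 2) 0 := by
    have h1 : HasDerivAt (fun u : ℂ => (Real.pi * u / 2 : ℂ)) (Real.pi / 2) 0 := by
      simpa using ((hasDerivAt_id (0:ℂ)).const_mul (Real.pi : ℂ)).div_const 2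
    have := h1.csin
    simpa using this
  simp [S1s, dslope_same, h.deriv]

lemma S1s_real_ne (u : ℝ) (h1 : -1 < u) (h2 : u < 1) : S1s (u : ℂ) ≠ 0 := by
  by_cases hu : u = 0
  · subst hu
    simp [S1s_zero, Real.pi_ne_zero]
  · intro h
    have h3 := S1s_mul (u : ℂ)
    rw [h, mul_zero] at h3
    have h4 : Real.sin (Real.pi * u / 2) = 0 := by
      have : (Real.sin (Real.pi * u / 2) : ℂ) = 0 := by
        push_cast; exact h3.symm
      exact_mod_cast this
    have := (Real.sin_eq_zero_iff_of_lt_of_lt (x := Real.pi * u / 2)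
      (by nlinarith [Real.pi_pos]) (by nlinarith [Real.pi_pos])).1 h4
    have h5 := Real.pi_ne_zero
    apply hu
    have : Real.pi * u = 0 := by linarith
    simpa [h5] using this

lemma EEs_norm_le (x : ℂ) : ‖EEs x‖ ≤ 1 + Real.exp x.re := by
  by_cases hx : x = 0
  · subst hx; simp [EEs_zero]
  · have h := Convex.norm_image_sub_le_of_norm_deriv_le (𝕜 := ℂ) (f := Complex.exp)
      (s := {z : ℂ | z.re ≤ max x.re 0}) (x := 0) (y := x) (C := 1 + Real.exp x.re)
      (fun z _ => Complex.differentiable_exp z) (fun z hz => by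
        rw [Complex.deriv_exp, Complex.norm_exp]
        have hz' : z.re ≤ max x.re 0 := hz
        rcases le_max_iff.1 hz' with h | h
        · have := Real.exp_le_exp.2 h; linarith
        · have := Real.exp_le_exp.2 h
          have h2 := Real.exp_pos x.re
          rw [Real.exp_zero] at this; linarith)
      (convex_halfSpace_re_le _) (by simp) (by simp)
    rw [Complex.exp_zero, ← EEs_mul, sub_zero, norm_mul, mul_comm] at h
    exact le_of_mul_le_mul_right h (norm_pos_iff.2 hx)

lemma KC_ne (α L : ℂ) (h : α ≠ 1) : KC α L = (Complex.exp (α * L) - Complex.exp L) / (α - 1) := by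
  have h' : α - 1 ≠ 0 := sub_ne_zero.2 h
  rw [eq_div_iff h', KC]
  have := EEs_mul ((α - 1) * L)
  have h2 : Complex.exp (α * L) = Complex.exp L * Complex.exp ((α - 1) * L) := by
    rw [← Complex.exp_add]; ring_nf
  rw [h2]
  linear_combination Complex.exp L * this

lemma KC_one (L : ℂ) : KC 1 L = Complex.exp L * L := by
  simp [KC, EEs_zero]

lemma kapC_one : kapC 1 = -(2 / Real.pi) := by
  have : (Real.pi : ℂ) ≠ 0 := by exact_mod_cast Real.pi_ne_zero
  simp only [kapC, sub_self, S1s_zero, mul_zero, zero_div, Complex.cos_zero]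
  field_simp

lemma kapC_real (α : ℝ) (h0 : 0 < α) (h2 : α < 2) (h1 : α ≠ 1) :
    kapC (α : ℂ) = (Real.tan (Real.pi * α / 2) * (α - 1) : ℝ) := by
  have hα : ((α:ℂ) - 1) ≠ 0 := by
    intro h; apply h1; have : (α:ℂ) = 1 := by linear_combination h
    exact_mod_cast this
  have hS := S1s_real_ne (α - 1) (by linarith) (by linarith)
  push_cast at hS
  have hm := S1s_mul ((α:ℂ) - 1)
  have hc : Complex.cos (Real.pi * (α - 1) / 2) = Complex.sin (Real.pi * α / 2) := by
    rw [show (Real.pi * ((α:ℂ) - 1) / 2) = Real.pi * α / 2 - Real.pi / 2 by ring,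
      Complex.cos_sub_pi_div_two]
  have hs : Complex.sin (Real.pi * (α - 1) / 2) = - Complex.cos (Real.pi * α / 2) := by
    rw [show (Real.pi * ((α:ℂ) - 1) / 2) = Real.pi * α / 2 - Real.pi / 2 by ring,
      Complex.sin_sub_pi_div_two]
  rw [hs] at hm
  have hc0 : Complex.cos (Real.pi * α / 2) ≠ 0 := by
    intro h; rw [h, neg_zero] at hm
    exact (mul_ne_zero hα hS) hm
  rw [kapC, hc]
  push_cast
  rw [Complex.tan_eq_sin_div_cos]
  field_simp
  linear_combination (-Complex.sin (Real.pi * α / 2)) * hm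

lemma PsiC_eq_psiM (e : ℝ) (he : e = 1 ∨ e = -1) (θ : Fin 4 → ℝ) (hθ : θ ∈ ThetaInt) (t : ℝ)
    (ht : 0 < t) : psiM θ (e * t) = PsiC e (θ 0) (θ 1) (θ 2) (θ 3) t := by
  obtain ⟨h1, ⟨h20, h22⟩, h3⟩ := hθ
  have hst : 0 < θ 1 * t := mul_pos h1 ht
  have habs : |θ 1 * (e * t)| = θ 1 * t := by
    rcases he with rfl | rfl
    · rw [one_mul, abs_of_pos hst]
    · rw [show θ 1 * (-1 * t) = -(θ 1 * t) by ring, abs_neg, abs_of_pos hst]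
  have hsg : Real.sign (e * t) = e := by
    rcases he with rfl | rfl
    · rw [one_mul, Real.sign_of_pos ht]
    · rw [Real.sign_of_neg (by linarith)]
  have hL : Complex.log (θ 1) + Complex.log t = (Real.log (θ 1 * t) : ℝ) := by
    rw [Real.log_mul h1.ne' ht.ne', Complex.ofReal_add, Complex.ofReal_log h1.le,
      Complex.ofReal_log ht.le]
  have hexp : Complex.exp ((Real.log (θ 1 * t) : ℝ) : ℂ) = θ 1 * t := by
    rw [← Complex.ofReal_exp, Real.exp_log hst]; push_cast; ring
  unfold psiM PsiC
  rw [habs, hsg, hL]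
  by_cases hα : θ 2 = 1
  · rw [if_pos hα, hα]
    rw [Complex.ofReal_one, kapC_one, KC_one, one_mul, hexp]
    push_cast
    ring
  · rw [if_neg hα]
    have hα' : (θ 2 : ℂ) ≠ 1 := by exact_mod_cast hα
    have hα'' : (θ 2 : ℂ) - 1 ≠ 0 := sub_ne_zero.2 hα'
    rw [kapC_real _ h20 h22 hα, KC_ne _ _ hα', hexp]
    have hpow : Complex.exp ((θ 2 : ℂ) * (Real.log (θ 1 * t) : ℝ)) = ((θ 1 * t) ^ (θ 2) : ℝ) := by
      rw [Real.rpow_def_of_pos hst]; push_cast; ring_nf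
    have hpow2 : (θ 1 * t) ^ (θ 2) * (θ 1 * t) ^ (1 - θ 2) = θ 1 * t := by
      rw [← Real.rpow_add hst]; simp
    have hpow2c : (((θ 1 * t) ^ (θ 2) : ℝ) : ℂ) * (((θ 1 * t) ^ (1 - θ 2) : ℝ) : ℂ) = θ 1 * t := by
      rw [← Complex.ofReal_mul, hpow2]; push_cast; ring
    rw [hpow]
    set P := (θ 1 * t) ^ (θ 2)
    set Q := (θ 1 * t) ^ (1 - θ 2)
    set T := Real.tan (Real.pi * θ 2 / 2)
    push_cast
    field_simp
    linear_combination (- (Complex.I * θ 3 * e * T)) * hpow2c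

/-- On the negative imaginary axis, the imaginary part of the cumulant. -/
def BC (e : ℝ) (σ α β : ℂ) (s : ℝ) : ℂ :=
  (1 + e * β) * Complex.exp (α * (Complex.log σ + Real.log s)) * Complex.sin (Real.pi * α / 2)

def BR (e σ α β s : ℝ) : ℝ := (1 + e * β) * (σ * s) ^ α * Real.sin (Real.pi * α / 2)

lemma BC_real (e σ α β s : ℝ) (hσ : 0 < σ) (hs : 0 < s) :
    BC e σ α β s = (BR e σ α β s : ℝ) := by
  unfold BC BR
  rw [Real.rpow_def_of_pos (mul_pos hσ hs), Real.log_mul hσ.ne' hs.ne', ← Complex.ofReal_log hσ.le]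
  push_cast; ring_nf

lemma log_neg_I (s : ℝ) (hs : 0 < s) :
    Complex.log (-(Complex.I * s)) = Real.log s - Complex.I * (Real.pi / 2) := by
  rw [show -(Complex.I * (s:ℂ)) = (s : ℂ) * (-Complex.I) by ring, Complex.log_ofReal_mul hs (by simp),
    Complex.log_neg_I]
  ring

lemma PsiC_im (e : ℝ) (he : e = 1 ∨ e = -1) (m σ α β : ℝ) (hσ : 0 < σ) (h0 : 0 < α) (h2 : α < 2)
    (s : ℝ) (hs : 0 < s) :
    (PsiC e m σ α β (-(Complex.I * s))).im = BR e σ α β s := by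
  have hL : Complex.log σ + Complex.log (-(Complex.I * s))
      = (Real.log (σ * s) : ℝ) - Complex.I * (Real.pi / 2) := by
    rw [log_neg_I s hs, Real.log_mul hσ.ne' hs.ne', Complex.ofReal_add, Complex.ofReal_log hσ.le]
    ring
  have hexp1 : Complex.exp ((Real.log (σ * s) : ℝ) - Complex.I * (Real.pi / 2)) = -(Complex.I * (σ * s : ℝ)) := by
    rw [Complex.exp_sub, ← Complex.ofReal_exp, Real.exp_log (mul_pos hσ hs)]
    rw [mul_comm Complex.I, Complex.exp_pi_div_two_mul_I]
    field_simp
    push_cast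
    linear_combination ((σ:ℂ) * s) * Complex.I_sq
  have hexp2 : Complex.exp (α * ((Real.log (σ * s) : ℝ) - Complex.I * (Real.pi / 2)))
      = (((σ * s) ^ α * Real.cos (Real.pi * α / 2) : ℝ) : ℂ)
        - Complex.I * ((σ * s) ^ α * Real.sin (Real.pi * α / 2) : ℝ) := by
    rw [Real.rpow_def_of_pos (mul_pos hσ hs)]
    rw [show (α : ℂ) * ((Real.log (σ * s) : ℝ) - Complex.I * (Real.pi / 2))
      = ((Real.log (σ * s) * α : ℝ) : ℂ) + (-(Real.pi * α / 2 : ℝ) : ℂ) * Complex.I by push_cast; ring]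
    rw [Complex.exp_add, Complex.exp_mul_I, Complex.cos_neg, Complex.sin_neg, ← Complex.ofReal_exp,
      ← Complex.ofReal_cos, ← Complex.ofReal_sin]
    push_cast; ring
  unfold PsiC BR
  rw [hL, hexp2]
  by_cases hα : α = 1
  · subst hα
    rw [Complex.ofReal_one, kapC_one, KC_one, hexp1]
    have hpi : (Real.pi : ℂ) ≠ 0 := by exact_mod_cast Real.pi_ne_zero
    have hr : -((((σ * s) ^ (1:ℝ) * Real.cos (Real.pi * 1 / 2) : ℝ) : ℂ)
        - Complex.I * ((σ * s) ^ (1:ℝ) * Real.sin (Real.pi * 1 / 2) : ℝ))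
        + Complex.I * e * β * (-(2 / Real.pi)) *
          (-(Complex.I * (σ * s : ℝ)) * ((Real.log (σ * s) : ℝ) - Complex.I * (Real.pi / 2)))
        + Complex.I * e * m * (-(Complex.I * s))
        = ((-(2 / Real.pi * e * β * (σ * s) * Real.log (σ * s)) + e * m * s : ℝ) : ℂ)
          + ((1 + e * β) * (σ * s) : ℝ) * Complex.I := by
      rw [mul_one, Real.cos_pi_div_two, Real.sin_pi_div_two, Real.rpow_one]
      push_cast
      field_simp
      ring_nf
      simp only [Complex.I_sq, Complex.I_pow_three]
      ring
    rw [hr]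
    simp only [Complex.add_im, Complex.ofReal_im, Complex.im_ofReal_mul, Complex.I_im]
    simp
  · have hα' : (α : ℂ) ≠ 1 := by exact_mod_cast hα
    have hα'' : (α : ℂ) - 1 ≠ 0 := sub_ne_zero.2 hα'
    rw [kapC_real _ h0 h2 hα, KC_ne _ _ hα', hexp1, hexp2]
    have hc0 : Real.cos (Real.pi * α / 2) ≠ 0 := by
      intro h
      have h5 := S1s_real_ne (α - 1) (by linarith) (by linarith)
      have hm := S1s_mul ((α:ℂ) - 1)
      rw [show (Real.pi * ((α:ℂ) - 1) / 2) = Real.pi * α / 2 - Real.pi / 2 by ring,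
        Complex.sin_sub_pi_div_two] at hm
      have : Complex.cos (Real.pi * α / 2) = 0 := by
        have h6 : ((Real.cos (Real.pi * α / 2) : ℝ) : ℂ) = 0 := by rw [h]; simp
        push_cast at h6; exact h6
      rw [this, neg_zero] at hm
      push_cast at h5
      exact mul_ne_zero hα'' h5 hm
    have htan : Real.tan (Real.pi * α / 2) * Real.cos (Real.pi * α / 2) = Real.sin (Real.pi * α / 2) :=
      Real.tan_mul_cos hc0
    set P := (σ * s) ^ α
    set T := Real.tan (Real.pi * α / 2)
    set c := Real.cos (Real.pi * α / 2)
    set S := Real.sin (Real.pi * α / 2)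
    have hr : -(((P * c : ℝ) : ℂ) - Complex.I * (P * S : ℝ))
        + Complex.I * e * β * (T * (α - 1) : ℝ) *
          ((((P * c : ℝ) : ℂ) - Complex.I * (P * S : ℝ) - -(Complex.I * (σ * s : ℝ))) / ((α:ℂ) - 1))
        + Complex.I * e * m * (-(Complex.I * s))
        = ((-(P * c) + e * β * T * (P * S - σ * s) + e * m * s : ℝ) : ℂ)
          + ((P * S + e * β * (T * c) * P : ℝ) : ℂ) * Complex.I := by
      push_cast
      field_simp
      ring_nf
      simp only [Complex.I_sq]
      ring
    rw [hr, htan]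
    simp only [Complex.add_im, Complex.ofReal_im, Complex.im_ofReal_mul, Complex.I_im]
    ring

end

structure Ctx (σ0 α0 β0 ρ Ck : ℝ) : Prop where
  hρ : 0 < ρ
  hρ1 : ρ ≤ 1
  hσ : 2 * ρ ≤ σ0
  hα : 2 * ρ ≤ α0
  hα2 : α0 + ρ < 2
  hβ : |β0| + ρ < 1
  hk : ∀ α : ℂ, ‖α - α0‖ ≤ ρ → S1s (α - 1) ≠ 0 ∧ ‖kapC α‖ ≤ Ck

def Nb (σ0 α0 β0 ρ : ℝ) (σ α β : ℂ) : Prop :=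
  ‖σ - σ0‖ ≤ ρ ∧ ‖α - α0‖ ≤ ρ ∧ ‖β - β0‖ ≤ ρ

lemma ctx_exists (σ0 α0 β0 : ℝ) (hσ : 0 < σ0) (hα : 0 < α0) (hα2 : α0 < 2) (hβ : |β0| < 1) :
    ∃ ρ Ck, Ctx σ0 α0 β0 ρ Ck := by
  have hS := S1s_real_ne (α0 - 1) (by linarith) (by linarith)
  push_cast at hS
  have hc : ContinuousAt (fun α : ℂ => S1s (α - 1)) (α0 : ℂ) := by
    have := S1s_differentiable.continuous
    fun_prop
  have hk : ContinuousAt kapC (α0 : ℂ) := by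
    unfold kapC
    refine ContinuousAt.div (by fun_prop) hc hS
  have h1 := hc.eventually_ne hS
  have h2 : ∀ᶠ α in nhds (α0 : ℂ), ‖kapC α‖ < ‖kapC α0‖ + 1 :=
    hk.norm.eventually_lt_const (by linarith)
  obtain ⟨r, hr, hr2⟩ := Metric.eventually_nhds_iff.1 (h1.and h2)
  refine ⟨min (r / 2) (min 1 (min (σ0 / 2) (min (α0 / 2) (min ((2 - α0) / 2) ((1 - |β0|) / 2))))), 
    ‖kapC α0‖ + 1, ?_⟩
  set ρ := min (r / 2) (min 1 (min (σ0 / 2) (min (α0 / 2) (min ((2 - α0) / 2) ((1 - |β0|) / 2)))))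
    with hρ
  have h := le_refl ρ
  conv_rhs at h => rw [hρ]
  simp only [le_min_iff] at h
  obtain ⟨a1, a2, a3, a4, a5, a6⟩ := h
  refine ⟨?_, a2, by linarith, by linarith, by linarith, by linarith, ?_⟩
  · simp only [hρ, lt_min_iff]
    refine ⟨by linarith, by norm_num, by linarith, by linarith, by linarith, by linarith⟩
  · intro α hα
    have := hr2 (y := α) (by rw [dist_eq_norm]; linarith)
    exact ⟨this.1, this.2.le⟩

section
variable {σ0 α0 β0 ρ Ck : ℝ}

lemma Nb.sigma_re (h : Ctx σ0 α0 β0 ρ Ck) {σ α β : ℂ} (n : Nb σ0 α0 β0 ρ σ α β) :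
    σ0 / 2 ≤ σ.re := by
  have := (Complex.abs_re_le_norm (σ - σ0)).trans n.1
  have h2 := h.hσ
  simp at this
  rw [abs_le] at this
  linarith [this.1]

lemma Nb.sigma_norm (h : Ctx σ0 α0 β0 ρ Ck) {σ α β : ℂ} (n : Nb σ0 α0 β0 ρ σ α β) :
    σ0 / 2 ≤ ‖σ‖ ∧ ‖σ‖ ≤ 2 * σ0 := by
  refine ⟨(n.sigma_re h).trans (Complex.re_le_norm _), ?_⟩
  have h1 : ‖σ‖ ≤ ‖σ - σ0‖ + ‖(σ0 : ℂ)‖ := by simpa using norm_add_le (σ - σ0) (σ0 : ℂ)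
  have h2 := h.hσ
  have h3 := h.hρ
  rw [Complex.norm_of_nonneg (by linarith)] at h1
  linarith [n.1]

lemma Nb.alpha (h : Ctx σ0 α0 β0 ρ Ck) {σ α β : ℂ} (n : Nb σ0 α0 β0 ρ σ α β) :
    α0 - ρ ≤ α.re ∧ α.re < 2 ∧ |α.im| ≤ 1 := by
  have h1 := (Complex.abs_re_le_norm (α - α0)).trans n.2.1
  have h2 := (Complex.abs_im_le_norm (α - α0)).trans n.2.1
  simp at h1 h2
  rw [abs_le] at h1
  exact ⟨by linarith [h1.1], by linarith [h1.2, h.hα2], h2.trans h.hρ1⟩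

lemma Nb.beta (h : Ctx σ0 α0 β0 ρ Ck) {σ α β : ℂ} (n : Nb σ0 α0 β0 ρ σ α β) :
    ‖β‖ ≤ 1 := by
  have h1 : ‖β‖ ≤ ‖β - β0‖ + ‖(β0 : ℂ)‖ := by simpa using norm_add_le (β - β0) (β0 : ℂ)
  simp at h1
  linarith [n.2.2, h.hβ]

lemma exp_alpha_le (α L : ℂ) (Λ ℓ : ℝ) (h1 : α.re < 2) (h0 : 0 ≤ α.re) (h2 : |α.im| ≤ 1)
    (hL : |L.im| ≤ Real.pi) (hre : |L.re - ℓ| ≤ Λ) :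
    ‖Complex.exp (α * L)‖ ≤ Real.exp (2 * Λ + 4) * Real.exp (α.re * ℓ) := by
  rw [Complex.norm_exp, ← Real.exp_add, Complex.mul_re]
  apply Real.exp_le_exp.2
  have e1 : α.re * L.re = α.re * (L.re - ℓ) + α.re * ℓ := by ring
  have e2 : α.re * (L.re - ℓ) ≤ 2 * Λ := by
    calc _ ≤ |α.re * (L.re - ℓ)| := le_abs_self _
      _ = α.re * |L.re - ℓ| := by rw [abs_mul, abs_of_nonneg h0]
      _ ≤ 2 * Λ := mul_le_mul h1.le hre (abs_nonneg _) (by norm_num)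
  have e3 : -(α.im * L.im) ≤ 4 := by
    calc _ ≤ |α.im * L.im| := neg_le_abs _
      _ = |α.im| * |L.im| := abs_mul _ _
      _ ≤ 1 * Real.pi := mul_le_mul h2 hL (abs_nonneg _) (by norm_num)
      _ ≤ 4 := by linarith [Real.pi_le_four]
  linarith

/-- bound on log sigma -/
lemma log_sigma_bd (h : Ctx σ0 α0 β0 ρ Ck) {σ α β : ℂ} (n : Nb σ0 α0 β0 ρ σ α β) :
    |Real.log ‖σ‖| ≤ |Real.log (σ0 / 2)| + |Real.log (2 * σ0)| := by
  have h1 := n.sigma_norm h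
  have h0 : 0 < σ0 := by linarith [h.hσ, h.hρ]
  have a1 := Real.log_le_log (by linarith) h1.1
  have a2 := Real.log_le_log (by linarith) h1.2
  rw [abs_le]
  constructor
  · linarith [neg_abs_le (Real.log (σ0 / 2)), abs_nonneg (Real.log (2 * σ0))]
  · linarith [le_abs_self (Real.log (2 * σ0)), abs_nonneg (Real.log (σ0 / 2))]

lemma PsiC_bound (h : Ctx σ0 α0 β0 ρ Ck) (e : ℝ) (he : e = 1 ∨ e = -1) (m : ℝ) :
    ∃ C > 0, ∀ σ α β : ℂ, Nb σ0 α0 β0 ρ σ α β → ∀ z : ℂ, z ≠ 0 → 0 ≤ z.re →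
      ‖PsiC e m σ α β z‖ ≤ C * (1 + |Real.log ‖z‖|) * (‖z‖ + ‖z‖ ^ α.re) := by
  set Λ := |Real.log (σ0 / 2)| + |Real.log (2 * σ0)| with hΛ
  have hΛ0 : 0 ≤ Λ := by positivity
  set C1 := Real.exp (2 * Λ + 4)
  have hC1 : 0 < C1 := Real.exp_pos _
  have hCk : 0 ≤ Ck := (norm_nonneg _).trans (h.hk α0 (by simpa using h.hρ.le)).2
  refine ⟨C1 + Ck * ((Λ + 4) * C1) + |m|, by positivity, ?_⟩
  intro σ α β n z hz hzre
  have he1 : |e| = 1 := by rcases he with rfl | rfl <;> simp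
  obtain ⟨al1, al2, al3⟩ := n.alpha h
  have al0 : 0 ≤ α.re := by linarith [h.hα, h.hρ]
  set L := Complex.log σ + Complex.log z with hLdef
  have hzn : 0 < ‖z‖ := norm_pos_iff.2 hz
  have hLre : L.re = Real.log ‖σ‖ + Real.log ‖z‖ := by
    simp [hLdef, Complex.log_re]
  have hLim : |L.im| ≤ Real.pi := by
    have a1 : |σ.arg| ≤ Real.pi / 2 := Complex.abs_arg_le_pi_div_two_iff.2 (by
      linarith [n.sigma_re h, h.hσ, h.hρ])
    have a2 : |z.arg| ≤ Real.pi / 2 := Complex.abs_arg_le_pi_div_two_iff.2 hzre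
    have : L.im = σ.arg + z.arg := by simp [hLdef, Complex.log_im]
    rw [this]
    exact (abs_add_le _ _).trans (by linarith)
  have hls := log_sigma_bd h n
  rw [← hΛ] at hls
  have hexpα : ‖Complex.exp (α * L)‖ ≤ C1 * ‖z‖ ^ α.re := by
    rw [Real.rpow_def_of_pos hzn, mul_comm (Real.log ‖z‖)]
    apply exp_alpha_le α L Λ _ al2 al0 al3 hLim
    rw [hLre]; simpa using hls
  have hexp1 : ‖Complex.exp L‖ ≤ C1 * ‖z‖ := by
    have := exp_alpha_le 1 L Λ (Real.log ‖z‖) (by simp) (by simp) (by simp) hLim (by rw [hLre]; simpa using hls)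
    simpa [Real.exp_log hzn] using this
  have hLn : ‖L‖ ≤ (Λ + 4) * (1 + |Real.log ‖z‖|) := by
    have := Complex.norm_le_abs_re_add_abs_im L
    have h2 : |L.re| ≤ Λ + |Real.log ‖z‖| := by
      rw [hLre]; exact (abs_add_le _ _).trans (by linarith)
    nlinarith [Real.pi_le_four, abs_nonneg (Real.log ‖z‖)]
  have hX : 0 ≤ ‖z‖ ^ α.re := by positivity
  have hK : ‖KC α L‖ ≤ (Λ + 4) * (1 + |Real.log ‖z‖|) * (C1 * (‖z‖ + ‖z‖ ^ α.re)) := by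
    have e1 := EEs_norm_le ((α - 1) * L)
    rw [← Complex.norm_exp] at e1
    have e2 : ‖Complex.exp L‖ * ‖Complex.exp ((α - 1) * L)‖ = ‖Complex.exp (α * L)‖ := by
      rw [← norm_mul, ← Complex.exp_add]; ring_nf
    have e3 : ‖KC α L‖ = ‖L‖ * (‖Complex.exp L‖ * ‖EEs ((α - 1) * L)‖) := by
      rw [KC, norm_mul, norm_mul]; ring
    rw [e3]
    refine mul_le_mul hLn ?_ (by positivity) (by positivity)
    calc _ ≤ ‖Complex.exp L‖ * (1 + ‖Complex.exp ((α - 1) * L)‖) := by gcongr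
      _ = ‖Complex.exp L‖ + ‖Complex.exp (α * L)‖ := by rw [mul_add, e2, mul_one]
      _ ≤ _ := by linarith
  have hk := (h.hk α n.2.1).2
  have hb := n.beta h
  have t2 : ‖Complex.I * e * β * kapC α * KC α L‖ ≤
      Ck * ((Λ + 4) * (1 + |Real.log ‖z‖|) * (C1 * (‖z‖ + ‖z‖ ^ α.re))) := by
    rw [norm_mul]
    refine mul_le_mul ?_ hK (norm_nonneg _) hCk
    rw [norm_mul, norm_mul, norm_mul, Complex.norm_I, Complex.norm_real, Real.norm_eq_abs, he1]
    simp only [one_mul]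
    calc _ ≤ 1 * Ck := mul_le_mul hb hk (norm_nonneg _) (by norm_num)
      _ = Ck := one_mul _
  have t3 : ‖Complex.I * e * m * z‖ ≤ |m| * ‖z‖ := by
    rw [norm_mul, norm_mul, norm_mul, Complex.norm_I, Complex.norm_real, Real.norm_eq_abs, he1]
    simp
  have t0 : ‖PsiC e m σ α β z‖ ≤ ‖Complex.exp (α * L)‖ + ‖Complex.I * e * β * kapC α * KC α L‖ +
      ‖Complex.I * e * m * z‖ := by
    unfold PsiC
    rw [← hLdef]
    refine (norm_add_le _ _).trans ?_
    gcongr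
    refine (norm_add_le _ _).trans ?_
    rw [norm_neg]
  have hl : 0 ≤ |Real.log ‖z‖| := abs_nonneg _
  set Y := (1 + |Real.log ‖z‖|) * (‖z‖ + ‖z‖ ^ α.re) with hY
  have y1 : ‖z‖ ^ α.re ≤ Y := by nlinarith
  have y2 : ‖z‖ ≤ Y := by nlinarith
  calc _ ≤ C1 * Y + Ck * ((Λ + 4) * C1) * Y + |m| * Y := by
        have : Ck * ((Λ + 4) * (1 + |Real.log ‖z‖|) * (C1 * (‖z‖ + ‖z‖ ^ α.re)))
          = Ck * ((Λ + 4) * C1) * Y := by rw [hY]; ring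
        have z1 : C1 * ‖z‖ ^ α.re ≤ C1 * Y := by gcongr
        have z2 : |m| * ‖z‖ ≤ |m| * Y := by gcongr
        linarith
    _ = _ := by rw [hY]; ring

lemma PsiC_poly (h : Ctx σ0 α0 β0 ρ Ck) (e : ℝ) (he : e = 1 ∨ e = -1) (m : ℝ) :
    ∃ C ≥ 1, ∀ σ α β : ℂ, Nb σ0 α0 β0 ρ σ α β → ∀ z : ℂ, z ≠ 0 → 0 ≤ z.re →
      ‖PsiC e m σ α β z‖ ≤ C * (1 + ‖z‖) ^ 3 := by
  obtain ⟨C, hC, hb⟩ := PsiC_bound h e he m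
  have hρ := h.hρ
  refine ⟨max 1 (C * (3 + 1 / ρ)), le_max_left _ _, ?_⟩
  intro σ α β n z hz hzre
  refine (hb σ α β n z hz hzre).trans ?_
  obtain ⟨al1, al2, al3⟩ := n.alpha h
  have al0 : ρ ≤ α.re := by linarith [h.hα, h.hρ]
  have hzn : 0 < ‖z‖ := norm_pos_iff.2 hz
  set r := ‖z‖
  have hq : 0 < 1 / ρ := by positivity
  have key : (1 + |Real.log r|) * (r + r ^ α.re) ≤ (3 + 1 / ρ) * (1 + r) ^ 3 := by
    rcases le_total r 1 with hr | hr
    · have b1 : r ^ α.re ≤ 1 := Real.rpow_le_one hzn.le hr (by linarith)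
      have b2 : |Real.log r| * r ^ α.re ≤ 1 / ρ := by
        have := (Real.abs_log_mul_self_rpow_lt r α.re hzn hr (by linarith)).le
        rw [abs_mul, abs_of_nonneg (Real.rpow_nonneg hzn.le _)] at this
        refine this.trans ?_
        gcongr
      have b3 : |Real.log r| * r ≤ 1 := by
        have := (Real.abs_log_mul_self_lt r hzn hr).le
        rwa [abs_mul, abs_of_pos hzn] at this
      have : 1 ≤ (1 + r) ^ 3 := one_le_pow₀ (by linarith)
      nlinarith
    · have b1 : r ^ α.re ≤ r ^ 2 := by
        have := Real.rpow_le_rpow_of_exponent_le hr al2.le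
        simpa using this
      have b2 : |Real.log r| ≤ r - 1 := by
        rw [abs_of_nonneg (Real.log_nonneg hr)]
        exact Real.log_le_sub_one_of_pos hzn
      calc _ ≤ r * (r + r ^ 2) := by
            gcongr
            linarith
        _ ≤ 3 * (1 + r) ^ 3 := by nlinarith [pow_pos hzn 3, pow_pos hzn 2]
        _ ≤ _ := by gcongr; linarith
  calc _ = C * ((1 + |Real.log r|) * (r + r ^ α.re)) := by ring
    _ ≤ C * ((3 + 1 / ρ) * (1 + r) ^ 3) := by gcongr
    _ = (C * (3 + 1 / ρ)) * (1 + r) ^ 3 := by ring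
    _ ≤ _ := by gcongr; exact le_max_right _ _

lemma PsiC_differentiableAt_z (e m : ℝ) (σ α β z : ℂ) (hz : z ∈ Complex.slitPlane) :
    DifferentiableAt ℂ (fun z => PsiC e m σ α β z) z := by
  unfold PsiC KC
  have h1 := EEs_differentiable
  have h2 : DifferentiableAt ℂ Complex.log z := Complex.differentiableAt_log hz
  have h3 : DifferentiableAt ℂ (fun z => Complex.log σ + Complex.log z) z := by fun_prop
  have h4 : DifferentiableAt ℂ (fun z => EEs ((α - 1) * (Complex.log σ + Complex.log z))) z :=
    DifferentiableAt.comp (g := EEs) z (h1 _) (by fun_prop)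
  fun_prop

lemma re_slit {z : ℂ} (hz : z ≠ 0) (hre : 0 ≤ z.re) : z ∈ Complex.slitPlane := by
  rw [Complex.mem_slitPlane_iff]
  rcases hre.lt_or_eq with h | h
  · exact Or.inl h
  · right; intro h2; apply hz; apply Complex.ext <;> simp [h2, h.symm]

lemma contDiff_EEs : ContDiff ℂ 2 EEs := EEs_differentiable.contDiff

lemma PsiC_contDiffAt (h : Ctx σ0 α0 β0 ρ Ck) (e m : ℝ) (z : ℂ) {σ α β : ℂ} (n : Nb σ0 α0 β0 ρ σ α β) :
    ContDiffAt ℂ 2 (fun p : ℂ × ℂ × ℂ => PsiC e m p.1 p.2.1 p.2.2 z) (σ, α, β) := by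
  have hσ : σ ∈ Complex.slitPlane := Or.inl (by linarith [n.sigma_re h, h.hσ, h.hρ])
  have hl : ContDiffAt ℂ 2 (fun p : ℂ × ℂ × ℂ => Complex.log p.1) (σ, α, β) :=
    ContDiffAt.comp (g := Complex.log) _ (Complex.contDiffAt_log hσ) (by fun_prop)
  have hS : ContDiff ℂ 2 S1s := S1s_differentiable.contDiff
  have hk : ContDiffAt ℂ 2 (fun p : ℂ × ℂ × ℂ => kapC p.2.1) (σ, α, β) := by
    unfold kapC
    refine ContDiffAt.div ?_ ?_ (h.hk α n.2.1).1
    · have : ContDiff ℂ 2 (fun p : ℂ × ℂ × ℂ => Complex.cos (Real.pi * (p.2.1 - 1) / 2)) :=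
        ContDiff.ccos (by fun_prop)
      exact this.contDiffAt.neg
    · have : ContDiff ℂ 2 (fun p : ℂ × ℂ × ℂ => S1s (p.2.1 - 1)) := hS.comp (by fun_prop)
      exact this.contDiffAt
  have hL : ContDiffAt ℂ 2 (fun p : ℂ × ℂ × ℂ => Complex.log p.1 + Complex.log z) (σ, α, β) := by
    fun_prop
  have hE : ContDiffAt ℂ 2 (fun p : ℂ × ℂ × ℂ => EEs ((p.2.1 - 1) * (Complex.log p.1 + Complex.log z)))
      (σ, α, β) := ContDiffAt.comp (g := EEs) _ contDiff_EEs.contDiffAt (by fun_prop)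
  unfold PsiC KC
  fun_prop

lemma psiM_re (e : ℝ) (he : e = 1 ∨ e = -1) (θ : Fin 4 → ℝ) (hθ : θ ∈ ThetaInt) (u : ℝ)
    (hu : 0 < u) : (psiM θ (e * u)).re = -(θ 1 * u) ^ (θ 2) := by
  have hst : 0 < θ 1 * u := mul_pos hθ.1 hu
  have habs : |θ 1 * (e * u)| = θ 1 * u := by
    rcases he with rfl | rfl
    · rw [one_mul, abs_of_pos hst]
    · rw [show θ 1 * (-1 * u) = -(θ 1 * u) by ring, abs_neg, abs_of_pos hst]
  unfold psiM
  rw [habs]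
  by_cases hα : θ 2 = 1
  · rw [if_pos hα, hα, Real.rpow_one]
    simp only [Complex.add_re, Complex.sub_re, Complex.ofReal_re, Complex.mul_re, Complex.I_re,
      Complex.ofReal_im, Complex.I_im]
    ring
  · rw [if_neg hα]
    simp only [Complex.add_re, Complex.ofReal_re, Complex.mul_re, Complex.I_re,
      Complex.ofReal_im, Complex.I_im, Complex.one_re]
    ring

lemma PsiC_re_real (e : ℝ) (he : e = 1 ∨ e = -1) (m σ α β : ℝ) (hσ : 0 < σ) (h0 : 0 < α)
    (h2 : α < 2) (hβ : |β| < 1) (u : ℝ) (hu : 0 < u) :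
    (PsiC e m σ α β u).re = -(σ * u) ^ α := by
  have hθ : (![m, σ, α, β] : Fin 4 → ℝ) ∈ ThetaInt := by
    refine ⟨hσ, ⟨h0, h2⟩, ?_⟩
    rw [abs_lt] at hβ
    exact hβ
  have := PsiC_eq_psiM e he ![m, σ, α, β] hθ u hu
  have e1 : PsiC e (![m, σ, α, β] 0) ((![m, σ, α, β] 1 : ℝ) : ℂ) ((![m, σ, α, β] 2 : ℝ) : ℂ)
      ((![m, σ, α, β] 3 : ℝ) : ℂ) u = PsiC e m σ α β u := rfl
  rw [e1] at this
  rw [← this]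
  exact psiM_re e he ![m, σ, α, β] hθ u hu

end

section
variable {σ0 α0 β0 ρ Ck : ℝ}

lemma Nb_real (h : Ctx σ0 α0 β0 ρ Ck) {σ α β : ℝ} (n : Nb σ0 α0 β0 ρ σ α β) :
    0 < σ ∧ σ0 / 2 ≤ σ ∧ α0 - ρ ≤ α ∧ 0 < α ∧ α < 2 ∧ |β| < 1 := by
  have h1 := n.sigma_re h
  have h2 := n.alpha h
  have h3 : |β| < 1 := by
    have a : |β - β0| ≤ ρ := by
      have := n.2.2
      rwa [← Complex.ofReal_sub, Complex.norm_real, Real.norm_eq_abs] at this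
    have : |β| ≤ |β - β0| + |β0| := by simpa using abs_add_le (β - β0) β0
    linarith [h.hβ]
  simp only [Complex.ofReal_re] at h1 h2
  have a1 := h.hσ
  have a2 := h.hρ
  have a3 := h.hα
  exact ⟨by linarith, h1, h2.1, by linarith [h2.1], h2.2.1, h3⟩

lemma PsiC_decay (h : Ctx σ0 α0 β0 ρ Ck) (e : ℝ) (he : e = 1 ∨ e = -1) (m : ℝ) (δ : ℝ) (hδ : 0 < δ)
    (hδ1 : δ ≤ 1) :
    ∃ C > 0, ∃ c > 0, ∀ σ α β : ℝ, Nb σ0 α0 β0 ρ σ α β → ∀ u : ℝ, 0 < u → ∀ y : ℝ, -δ ≤ y → y ≤ 0 →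
      ‖Complex.exp (PsiC e m σ α β (u + y * Complex.I))‖ ≤ C * Real.exp (-c * u ^ (α0 - ρ)) := by
  obtain ⟨C, hC, hb⟩ := PsiC_bound h e he m
  obtain ⟨C2, hC2, hp⟩ := PsiC_poly h e he m
  have hρ := h.hρ
  have hσ0 : 0 < σ0 := by linarith [h.hσ]
  set κ := ρ / 2 with hκ
  have hκ0 : 0 < κ := by positivity
  set D := 18 * C * (1 + 3 / κ) * 2 with hD
  have hD0 : 0 < D := by positivity
  set c1 := (min 1 (σ0 / 2)) ^ (2:ℝ) with hc1
  have hmin : 0 < min 1 (σ0 / 2) := lt_min one_pos (by linarith)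
  have hc10 : 0 < c1 := Real.rpow_pos_of_pos hmin _
  obtain ⟨U1, hU1⟩ := eventually_atTop.1 ((tendsto_rpow_atTop hκ0).eventually_ge_atTop (2 * δ * D / c1))
  set U0 := max 2 U1 with hU0
  refine ⟨Real.exp (C2 * (1 + (U0 + δ)) ^ 3 + c1 / 2 * U0 ^ (α0 - ρ)), Real.exp_pos _, c1 / 2, half_pos hc10, ?_⟩
  intro σ α β n u hu y hy1 hy2
  obtain ⟨r1, r2, r3, r4, r5, r6⟩ := Nb_real h n
  have ha : 0 < α0 - ρ := by linarith [h.hα]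
  rw [Complex.norm_exp, ← Real.exp_add]
  apply Real.exp_le_exp.2
  have hU02 : 2 ≤ U0 := le_max_left _ _
  rcases le_total U0 u with hu0 | hu0
  · -- large u
    have hu2 : 2 ≤ u := hU02.trans hu0
    have hu1 : 1 ≤ u := by linarith
    set W := u ^ (α - ρ) with hW
    have hW1 : 1 ≤ W := Real.one_le_rpow hu1 (by linarith [h.hα])
    have hWα : u ^ α = u ^ ρ * W := by rw [hW, ← Real.rpow_add hu]; ring_nf
    have hur : u ^ ρ ≤ u := by
      simpa using Real.rpow_le_rpow_of_exponent_le hu1 h.hρ1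
    have huk : 1 ≤ u ^ κ := Real.one_le_rpow hu1 hκ0.le
    have hlog : 1 + Real.log (3 * u) ≤ (1 + 3 / κ) * u ^ κ := by
      have h1 := Real.log_le_rpow_div (x := 3 * u) (by linarith) hκ0
      have h2 : (3 * u) ^ κ ≤ 3 * u ^ κ := by
        rw [Real.mul_rpow (by norm_num) hu.le]
        gcongr
        have := Real.rpow_le_rpow_of_exponent_le (x := 3) (by norm_num) (show κ ≤ 1 by linarith [h.hρ1])
        simpa using this
      calc _ ≤ u ^ κ + (3 * u ^ κ) / κ := by
            refine add_le_add huk (h1.trans ?_)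
            gcongr
        _ = _ := by ring
    have hder : ∀ z : ℂ, z.re = u → -δ ≤ z.im → z.im ≤ 0 →
        ‖deriv (fun z => PsiC e m σ α β z) z‖ ≤ D * u ^ κ * W := by
      intro z hz1 hz2 hz3
      have hzn : ‖z‖ ≤ u + 1 := by
        refine (Complex.norm_le_abs_re_add_abs_im z).trans ?_
        rw [hz1, abs_of_pos hu]
        have : |z.im| ≤ 1 := abs_le.2 ⟨by linarith, by linarith⟩
        linarith
      have hball : ∀ ζ ∈ Metric.closedBall z (u / 2), u / 2 ≤ ζ.re := by
        intro ζ hζ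
        rw [mem_closedBall_iff_norm] at hζ
        have := (Complex.abs_re_le_norm (ζ - z)).trans hζ
        rw [Complex.sub_re, hz1, abs_le] at this
        linarith [this.1]
      have hdc : DifferentiableOn ℂ (fun z => PsiC e m σ α β z) (Metric.closedBall z (u / 2)) := by
        intro ζ hζ
        exact (PsiC_differentiableAt_z e m σ α β ζ (Or.inl (by linarith [hball ζ hζ]))).differentiableWithinAt
      have hcauchy := Complex.norm_deriv_le_of_forall_mem_sphere_norm_le (c := z) (R := u / 2)
        (C := C * ((1 + 3 / κ) * u ^ κ) * (18 * (u * W))) (f := fun z => PsiC e m σ α β z)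
        (by linarith) (hdc.diffContOnCl_ball subset_rfl) (by
          intro ζ hζ
          have hζ' := Metric.sphere_subset_closedBall hζ
          have b1 := hball ζ hζ'
          have b0 : ζ ≠ 0 := by intro h0; rw [h0] at b1; simp at b1; linarith
          refine (hb σ α β n ζ b0 (by linarith)).trans ?_
          have b2 : 1 ≤ ‖ζ‖ := by
            have := Complex.re_le_norm ζ; linarith
          have b3 : ‖ζ‖ ≤ 3 * u := by
            have h1 : ‖ζ‖ ≤ ‖ζ - z‖ + ‖z‖ := by simpa using norm_add_le (ζ - z) z
            rw [mem_closedBall_iff_norm] at hζ'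
            linarith
          have b4 : 1 + |Real.log ‖ζ‖| ≤ (1 + 3 / κ) * u ^ κ := by
            rw [abs_of_nonneg (Real.log_nonneg b2)]
            have := Real.log_le_log (by linarith) b3
            linarith
          have b5 : ‖ζ‖ ^ (α : ℂ).re ≤ 9 * (u * W) := by
            rw [Complex.ofReal_re]
            calc ‖ζ‖ ^ α ≤ (3 * u) ^ α := Real.rpow_le_rpow (by linarith) b3 r4.le
              _ = 3 ^ α * u ^ α := Real.mul_rpow (by norm_num) hu.le
              _ ≤ 9 * (u * W) := by
                rw [hWα]
                have : (3:ℝ) ^ α ≤ 9 := by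
                  have := Real.rpow_le_rpow_of_exponent_le (x := 3) (by norm_num) r5.le
                  norm_num at this ⊢; exact this
                gcongr
          have b6 : ‖ζ‖ ≤ 9 * (u * W) := by nlinarith
          gcongr
          linarith)
      refine hcauchy.trans (le_of_eq ?_)
      rw [hD]; field_simp
    have hmv := Convex.norm_image_sub_le_of_norm_deriv_le (𝕜 := ℂ) (f := fun z => PsiC e m σ α β z)
      (s := {z : ℂ | u ≤ z.re} ∩ {z : ℂ | z.re ≤ u} ∩ ({z : ℂ | -δ ≤ z.im} ∩ {z : ℂ | z.im ≤ 0}))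
      (x := (u : ℂ)) (y := (u : ℂ) + y * Complex.I) (C := D * u ^ κ * W)
      (fun z hz => PsiC_differentiableAt_z e m σ α β z (Or.inl (lt_of_lt_of_le hu hz.1.1)))
      (fun z hz => hder z (le_antisymm hz.1.2 hz.1.1) hz.2.1 hz.2.2)
      (((convex_halfSpace_re_ge _).inter (convex_halfSpace_re_le _)).inter
        ((convex_halfSpace_im_ge _).inter (convex_halfSpace_im_le _)))
      (by simp [hδ.le]) (by simp [hy1, hy2])
    have hyn : ‖((u : ℂ) + y * Complex.I) - u‖ ≤ δ := by
      simp; exact abs_le.2 ⟨by linarith, by linarith⟩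
    have hre := PsiC_re_real e he m σ α β r1 r4 r5 r6 u hu
    have hdiff : (PsiC e m σ α β (u + y * Complex.I)).re ≤ (PsiC e m σ α β u).re + D * u ^ κ * W * δ := by
      have h1 := (Complex.re_le_norm (PsiC e m σ α β (u + y * Complex.I) - PsiC e m σ α β u)).trans
        (hmv.trans (mul_le_mul_of_nonneg_left hyn (by positivity)))
      rw [Complex.sub_re] at h1
      linarith
    rw [hre] at hdiff
    have hs : c1 * u ^ α ≤ (σ * u) ^ α := by
      rw [Real.mul_rpow r1.le hu.le]
      gcongr
      calc c1 ≤ (min 1 (σ0 / 2)) ^ α :=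
            Real.rpow_le_rpow_of_exponent_ge hmin (min_le_left _ _) r5.le
        _ ≤ σ ^ α := Real.rpow_le_rpow hmin.le ((min_le_right _ _).trans r2) r4.le
    have hsm : D * u ^ κ * W * δ ≤ c1 / 2 * u ^ α := by
      have h1 := hU1 u ((le_max_right _ _).trans hu0)
      rw [div_le_iff₀ hc10] at h1
      have h2 : u ^ ρ = u ^ κ * u ^ κ := by rw [← Real.rpow_add hu]; congr 1; rw [hκ]; ring
      rw [hWα, h2]
      have h3 : 0 ≤ u ^ κ * W := by positivity
      nlinarith
    have hmono : u ^ (α0 - ρ) ≤ u ^ α := Real.rpow_le_rpow_of_exponent_le hu1 r3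
    have : c1 / 2 * u ^ (α0 - ρ) ≤ c1 / 2 * u ^ α := by gcongr
    have hpos : 0 ≤ C2 * (1 + (U0 + δ)) ^ 3 + c1 / 2 * U0 ^ (α0 - ρ) := by
      have : 0 ≤ U0 := by linarith
      positivity
    linarith
  · have hne : (u : ℂ) + y * Complex.I ≠ 0 := by
      intro h0
      have := congrArg Complex.re h0
      simp at this
      linarith
    have h1 := hp σ α β n (u + y * Complex.I) hne (by simpa using hu.le)
    have h2 : ‖(u : ℂ) + y * Complex.I‖ ≤ U0 + δ := by
      refine (Complex.norm_le_abs_re_add_abs_im _).trans ?_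
      have : |y| ≤ δ := abs_le.2 ⟨by linarith, by linarith⟩
      simp [abs_of_pos hu]
      linarith
    have h3 := (Complex.re_le_norm _).trans h1
    have h4 : C2 * (1 + ‖(u : ℂ) + y * Complex.I‖) ^ 3 ≤ C2 * (1 + (U0 + δ)) ^ 3 := by gcongr
    have h5 : u ^ (α0 - ρ) ≤ U0 ^ (α0 - ρ) := Real.rpow_le_rpow hu.le hu0 ha.le
    have : c1 / 2 * u ^ (α0 - ρ) ≤ c1 / 2 * U0 ^ (α0 - ρ) := by gcongr
    linarith

noncomputable def HC (e m : ℝ) (σ α β : ℂ) (s : ℝ) : ℂ :=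
  Complex.exp (PsiC e m σ α β (-(Complex.I * s)) - Complex.I * BC e σ α β s) * Complex.sin (BC e σ α β s)

lemma HC_real (e : ℝ) (he : e = 1 ∨ e = -1) (m σ α β : ℝ) (hσ : 0 < σ) (h0 : 0 < α) (h2 : α < 2)
    (s : ℝ) (hs : 0 < s) :
    HC e m σ α β s =
      ((Real.exp (PsiC e m σ α β (-(Complex.I * s))).re * Real.sin (BR e σ α β s) : ℝ) : ℂ) := by
  have h := PsiC_im e he m σ α β hσ h0 h2 s hs
  unfold HC
  rw [BC_real e σ α β s hσ hs]
  have h3 : PsiC e m σ α β (-(Complex.I * s)) - Complex.I * (BR e σ α β s : ℝ)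
      = ((PsiC e m σ α β (-(Complex.I * s))).re : ℂ) := by
    rw [← h]
    conv_lhs => rw [← Complex.re_add_im (PsiC e m σ α β (-(Complex.I * s)))]
    simp [mul_comm]
  rw [h3]
  push_cast
  rfl

lemma HC_real_im (e : ℝ) (he : e = 1 ∨ e = -1) (m σ α β : ℝ) (hσ : 0 < σ) (h0 : 0 < α) (h2 : α < 2)
    (s : ℝ) (hs : 0 < s) :
    HC e m σ α β s = ((Complex.exp (PsiC e m σ α β (-(Complex.I * s)))).im : ℝ) := by
  rw [HC_real e he m σ α β hσ h0 h2 s hs, Complex.exp_im, PsiC_im e he m σ α β hσ h0 h2 s hs]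

lemma norm_sin_le' (w : ℂ) : ‖Complex.sin w‖ ≤ ‖w‖ * (1 + Real.exp ‖w‖) := by
  have h1 : Complex.sin w = ((-w * Complex.I) * EEs (-w * Complex.I) - (w * Complex.I) * EEs (w * Complex.I))
      * Complex.I / 2 := by
    rw [EEs_mul, EEs_mul, Complex.sin]; ring
  have key : ∀ v : ℂ, ‖v‖ = ‖w‖ → ‖v * EEs v‖ ≤ ‖w‖ * (1 + Real.exp ‖w‖) := by
    intro v hv
    rw [norm_mul, hv]
    gcongr
    refine (EEs_norm_le v).trans ?_
    gcongr
    exact (Complex.re_le_norm v).trans hv.le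
  rw [h1, norm_div, norm_mul, Complex.norm_I]
  have h2 := norm_sub_le ((-w * Complex.I) * EEs (-w * Complex.I)) ((w * Complex.I) * EEs (w * Complex.I))
  have h3 := key (-w * Complex.I) (by simp)
  have h4 := key (w * Complex.I) (by simp)
  simp only [mul_one, Complex.norm_ofNat]
  linarith

lemma HC_bound (h : Ctx σ0 α0 β0 ρ Ck) (e : ℝ) (he : e = 1 ∨ e = -1) (m : ℝ) :
    ∃ C > 0, ∀ σ α β : ℂ, Nb σ0 α0 β0 ρ σ α β → ∀ s : ℝ, 0 < s → s ≤ 1 →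
      ‖HC e m σ α β s‖ ≤ C * s ^ α.re := by
  obtain ⟨C2, hC2, hp⟩ := PsiC_poly h e he m
  set Λ := |Real.log (σ0 / 2)| + |Real.log (2 * σ0)| with hΛ
  have hρ := h.hρ
  have hsin : ∃ S > 0, ∀ α : ℂ, ‖α - α0‖ ≤ ρ → ‖Complex.sin (Real.pi * α / 2)‖ ≤ S := by
    refine ⟨Real.exp 6 * 7 + 7 , by positivity, ?_⟩
    intro α hα
    have h1 : ‖α‖ ≤ 3 := by
      have h1 : ‖α‖ ≤ ‖α - α0‖ + ‖(α0 : ℂ)‖ := by simpa using norm_add_le (α - α0) (α0 : ℂ)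
      rw [Complex.norm_of_nonneg (by linarith [h.hα])] at h1
      linarith [h.hα2, h.hρ1]
    have h2 : ‖(Real.pi * α / 2 : ℂ)‖ ≤ 6 := by
      rw [norm_div, norm_mul, Complex.norm_real, Real.norm_of_nonneg Real.pi_pos.le]
      simp only [Complex.norm_ofNat]
      nlinarith [Real.pi_le_four, norm_nonneg α, Real.pi_pos]
    refine (norm_sin_le' _).trans ?_
    calc _ ≤ 7 * (1 + Real.exp 6) := by gcongr; linarith
      _ = _ := by ring
  obtain ⟨S, hS, hSb⟩ := hsin
  set B1 := 2 * Real.exp (2 * Λ + 4) * S with hB1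
  have hB10 : 0 < B1 := by positivity
  refine ⟨Real.exp (C2 * 8 + B1) * (B1 * (1 + Real.exp B1)), by positivity, ?_⟩
  intro σ α β n s hs hs1
  obtain ⟨al1, al2, al3⟩ := n.alpha h
  have al0 : 0 ≤ α.re := by linarith [h.hα, h.hρ]
  have hB : ‖BC e σ α β s‖ ≤ B1 * s ^ α.re := by
    unfold BC
    rw [norm_mul, norm_mul]
    have e1 : ‖(1 + e * β : ℂ)‖ ≤ 2 := by
      refine (norm_add_le _ _).trans ?_
      have he1 : |e| = 1 := by rcases he with rfl | rfl <;> simp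
      rw [norm_mul, Complex.norm_real, Real.norm_eq_abs, he1]
      have := n.beta h
      simp only [norm_one]; linarith
    have e2 : ‖Complex.exp (α * (Complex.log σ + Real.log s))‖ ≤ Real.exp (2 * Λ + 4) * s ^ α.re := by
      rw [Real.rpow_def_of_pos hs, mul_comm (Real.log s)]
      apply exp_alpha_le _ _ _ _ al2 al0 al3
      · simp [Complex.log_im]; exact Complex.abs_arg_le_pi σ
      · simp [Complex.log_re]; exact log_sigma_bd h n
    have e3 := hSb α n.2.1
    calc _ ≤ 2 * (Real.exp (2 * Λ + 4) * s ^ α.re) * S := by gcongr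
      _ = _ := by rw [hB1]; ring
  have hs2 : s ^ α.re ≤ 1 := Real.rpow_le_one hs.le hs1 al0
  have hB' : ‖BC e σ α β s‖ ≤ B1 := hB.trans (by nlinarith)
  have hne : -(Complex.I * (s : ℂ)) ≠ 0 := by simp [hs.ne']
  have hP := hp σ α β n _ hne (by simp)
  have hP' : ‖PsiC e m σ α β (-(Complex.I * s))‖ ≤ C2 * 8 := by
    refine hP.trans ?_
    have : ‖-(Complex.I * (s : ℂ))‖ ≤ 1 := by simp [abs_of_pos hs, hs1]
    have h2 : (1 + ‖-(Complex.I * (s : ℂ))‖) ^ 3 ≤ (1 + 1) ^ 3 := by gcongr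
    norm_num at h2 ⊢
    nlinarith
  unfold HC
  rw [norm_mul, mul_assoc]
  refine mul_le_mul ?_ ?_ (norm_nonneg _) (by positivity)
  · rw [Complex.norm_exp]
    apply Real.exp_le_exp.2
    refine (Complex.re_le_norm _).trans ((norm_sub_le _ _).trans ?_)
    rw [norm_mul, Complex.norm_I, one_mul]
    linarith
  · refine (norm_sin_le' _).trans ?_
    calc _ ≤ (B1 * s ^ α.re) * (1 + Real.exp B1) := by gcongr
      _ = _ := by ring

lemma HC_lower (h : Ctx σ0 α0 β0 ρ Ck) (e : ℝ) (he : e = 1 ∨ e = -1) (m : ℝ) :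
    ∃ δ > 0, δ ≤ 1 ∧ ∃ c > 0, ∀ s : ℝ, 0 < s → s ≤ δ → c * s ^ α0 ≤ (HC e m σ0 α0 β0 s).re := by
  obtain ⟨C2, hC2, hp⟩ := PsiC_poly h e he m
  have n : Nb σ0 α0 β0 ρ σ0 α0 β0 := by simp [Nb, h.hρ.le]
  obtain ⟨r1, r2, r3, r4, r5, r6⟩ := Nb_real h n
  set b := (1 + e * β0) * σ0 ^ α0 * Real.sin (Real.pi * α0 / 2) with hb
  have hb0 : 0 < b := by
    have h1 : 0 < 1 + e * β0 := by
      rw [abs_lt] at r6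
      rcases he with rfl | rfl <;> linarith
    have h2 : 0 < Real.sin (Real.pi * α0 / 2) := by
      apply Real.sin_pos_of_pos_of_lt_pi <;> nlinarith [Real.pi_pos]
    positivity
  have hev : ∀ᶠ s in nhdsWithin (0:ℝ) (Set.Ioi 0), b * s ^ α0 < Real.pi / 2 := by
    have hc : ContinuousAt (fun s : ℝ => b * s ^ α0) 0 := by
      have := Real.continuousAt_rpow_const 0 α0 (Or.inr r4.le)
      fun_prop
    have : (fun s : ℝ => b * s ^ α0) 0 < Real.pi / 2 := by
      simp [Real.zero_rpow r4.ne', Real.pi_pos]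
    exact (hc.eventually_lt_const this).filter_mono nhdsWithin_le_nhds
  obtain ⟨δ1, hδ1, hδ1'⟩ := mem_nhdsGT_iff_exists_Ioc_subset.1 hev
  refine ⟨min δ1 1, lt_min hδ1 one_pos, min_le_right _ _, Real.exp (-(C2 * 8)) * (2 / Real.pi * b), by
    have := Real.pi_pos; positivity, ?_⟩
  intro s hs hsδ
  have hs1 : s ≤ 1 := hsδ.trans (min_le_right _ _)
  rw [HC_real e he m σ0 α0 β0 r1 r4 r5 s hs, Complex.ofReal_re, mul_assoc]
  have hBR : BR e σ0 α0 β0 s = b * s ^ α0 := by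
    rw [BR, Real.mul_rpow r1.le hs.le, hb]; ring
  have hlt : b * s ^ α0 < Real.pi / 2 := hδ1' ⟨hs, hsδ.trans (min_le_left _ _)⟩
  have hne : -(Complex.I * (s : ℂ)) ≠ 0 := by simp [hs.ne']
  have hP := hp σ0 α0 β0 n _ hne (by simp)
  have hP' : ‖PsiC e m σ0 α0 β0 (-(Complex.I * s))‖ ≤ C2 * 8 := by
    refine hP.trans ?_
    have : ‖-(Complex.I * (s : ℂ))‖ ≤ 1 := by simp [abs_of_pos hs, hs1]
    have h2 : (1 + ‖-(Complex.I * (s : ℂ))‖) ^ 3 ≤ (1 + 1) ^ 3 := by gcongr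
    norm_num at h2 ⊢
    nlinarith
  refine mul_le_mul ?_ ?_ (by have := Real.pi_pos; positivity) (by positivity)
  · apply Real.exp_le_exp.2
    have := (Complex.abs_re_le_norm (PsiC e m σ0 α0 β0 (-(Complex.I * s)))).trans hP'
    linarith [(abs_le.1 this).1]
  · rw [hBR, mul_assoc]
    exact Real.mul_le_sin (by positivity) hlt.le

end

lemma contour_abs (F : ℂ → ℂ) (δ : ℝ) (hδ : 0 < δ)
    (hd : ∀ z : ℂ, z ≠ 0 → 0 ≤ z.re → DifferentiableAt ℂ F z)
    (h0 : Tendsto F (nhdsWithin 0 {z : ℂ | z ≠ 0 ∧ 0 ≤ z.re}) (nhds 1))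
    (g : ℝ → ℝ) (hg : IntegrableOn g (Set.Ioi 0)) (hg0 : Tendsto g atTop (nhds 0))
    (hF : ∀ u : ℝ, 0 < u → ∀ y : ℝ, -δ ≤ y → y ≤ 0 → ‖F (u + y * Complex.I)‖ ≤ g u) :
    IntegrableOn (fun t : ℝ => F t) (Set.Ioi 0) ∧
    IntegrableOn (fun t : ℝ => F (t + ((-δ : ℝ) : ℂ) * Complex.I)) (Set.Ioi 0) ∧
    ∫ t in Set.Ioi (0:ℝ), F t = (∫ t in Set.Ioi (0:ℝ), F (t + ((-δ : ℝ) : ℂ) * Complex.I))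
      - Complex.I * ∫ y in (-δ)..0, F (y * Complex.I) := by
  have hint : ∀ y : ℝ, -δ ≤ y → y ≤ 0 →
      IntegrableOn (fun t : ℝ => F (t + (y : ℂ) * Complex.I)) (Set.Ioi 0) := by
    intro y hy1 hy2
    refine Integrable.mono' hg ?_ ?_
    · refine ContinuousOn.aestronglyMeasurable ?_ measurableSet_Ioi
      intro t ht
      have ht : 0 < t := ht
      have : ContinuousAt F (t + (y : ℂ) * Complex.I) := by
        refine (hd _ ?_ ?_).continuousAt
        · intro hh
          have := congrArg Complex.re hh
          simp at this; linarith
        · simp; exact ht.le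
      have h2 : ContinuousAt (fun t : ℝ => F (t + (y : ℂ) * Complex.I)) t :=
        ContinuousAt.comp (f := fun t : ℝ => (t + (y : ℂ) * Complex.I)) this (by fun_prop)
      exact h2.continuousWithinAt
    · filter_upwards [ae_restrict_mem measurableSet_Ioi] with t ht
      exact hF t ht y hy1 hy2
  have i1 : IntegrableOn (fun t : ℝ => F t) (Set.Ioi 0) := by
    have := hint 0 (by linarith) le_rfl
    simpa using this
  have i2 := hint (-δ) le_rfl (by linarith)
  refine ⟨i1, i2, ?_⟩
  set Ft := Function.update F 0 1 with hFt
  have hFtne : ∀ z, z ≠ 0 → Ft z = F z := fun z hz => Function.update_of_ne hz _ _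
  have hrect : ∀ R : ℝ, 0 < R → (∫ t in (0:ℝ)..R, F (t + ((-δ : ℝ) : ℂ) * Complex.I)) -
      (∫ t in (0:ℝ)..R, F t) + Complex.I * (∫ y in (-δ)..0, F (R + y * Complex.I)) -
      Complex.I * (∫ y in (-δ)..0, F (y * Complex.I)) = 0 := by
    intro R hR
    have key := Complex.integral_boundary_rect_eq_zero_of_continuousOn_of_differentiableOn Ft
      (((-δ : ℝ) : ℂ) * Complex.I) (R : ℂ) ?_ ?_
    · simp only [Complex.mul_re, Complex.ofReal_re, Complex.I_re, mul_zero, Complex.ofReal_im,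
        Complex.I_im, mul_one, sub_self, Complex.mul_im, add_zero, smul_eq_mul, zero_mul,
        Complex.ofReal_zero, zero_add] at key
      rw [← key]
      congr 1
      · congr 1
        · congr 1
          · apply intervalIntegral.integral_congr
            intro t ht
            refine (hFtne _ ?_).symm
            intro hh
            have := congrArg Complex.im hh
            simp at this; linarith
          · apply intervalIntegral.integral_congr_ae
            refine ae_of_all _ fun t ht => ?_
            rw [Set.uIoc_of_le hR.le] at ht
            refine (hFtne _ ?_).symm
            exact_mod_cast ht.1.ne'
        · congr 1
          apply intervalIntegral.integral_congr
          intro t ht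
          refine (hFtne _ ?_).symm
          intro hh
          have := congrArg Complex.re hh
          simp at this; linarith
      · congr 1
        apply intervalIntegral.integral_congr_ae
        have : ∀ᵐ y : ℝ, y ≠ 0 := by simp [ae_iff]
        filter_upwards [this] with y hy hy2
        refine (hFtne _ ?_).symm
        simpa using hy
    · intro z hz
      have hz' : z ∈ {z : ℂ | 0 ≤ z.re} := by
        have := hz.1
        simp [Set.uIcc_of_le hR.le] at this
        exact this.1
      by_cases hz0 : z = 0
      · subst hz0
        have : ContinuousWithinAt Ft {z : ℂ | 0 ≤ z.re} 0 := by
          rw [hFt, continuousWithinAt_update_same]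
          refine h0.mono_left (nhdsWithin_mono _ ?_)
          intro w hw
          exact ⟨hw.2, hw.1⟩
        refine this.mono ?_
        intro w hw
        have := hw.1
        simp [Set.uIcc_of_le hR.le] at this
        exact this.1
      · have h1 : ContinuousAt F z := (hd z hz0 hz').continuousAt
        have h2 : Ft =ᶠ[nhds z] F := by
          filter_upwards [isOpen_ne.mem_nhds hz0] with w hw
          exact hFtne w hw
        exact (h1.congr h2.symm).continuousWithinAt
    · intro z hz
      have hzr : 0 < z.re := by
        have := hz.1
        simp [hR.le] at this
        exact this.1
      have hz0 : z ≠ 0 := by rintro rfl; simp at hzr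
      have h2 : Ft =ᶠ[nhds z] F := by
          filter_upwards [isOpen_ne.mem_nhds hz0] with w hw
          exact hFtne w hw
      exact ((hd z hz0 hzr.le).congr_of_eventuallyEq h2).differentiableWithinAt
  have t1 := intervalIntegral_tendsto_integral_Ioi (0:ℝ) i2 tendsto_id
  have t2 := intervalIntegral_tendsto_integral_Ioi (0:ℝ) i1 tendsto_id
  have t3 : Tendsto (fun R : ℝ => Complex.I * (∫ y in (-δ)..0, F (R + y * Complex.I))) atTop (nhds 0) := by
    rw [← mul_zero Complex.I]
    refine Tendsto.const_mul _ ?_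
    apply squeeze_zero_norm' (a := fun R => g R * |0 - (-δ)|)
    · filter_upwards [eventually_gt_atTop 0] with R hR
      apply intervalIntegral.norm_integral_le_of_norm_le_const
      intro y hy
      rw [Set.uIoc_of_le (by linarith)] at hy
      exact hF R hR y hy.1.le hy.2
    · simpa using hg0.mul_const |0 - (-δ)|
  have t4 := ((t1.sub t2).add t3).sub_const (Complex.I * (∫ y in (-δ)..0, F (y * Complex.I)))
  have t5 := tendsto_nhds_unique (t4.congr' (by
    filter_upwards [eventually_gt_atTop 0] with R hR
    exact hrect R hR)) tendsto_const_nhds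
  linear_combination -t5

noncomputable def FC (e m X : ℝ) (σ α β z : ℂ) : ℂ :=
  Complex.exp (-(Complex.I * z * X)) * Complex.exp (PsiC e m σ α β z)

lemma decay_integrable {a c : ℝ} (ha : 0 < a) (hc : 0 < c) (C : ℝ) :
    IntegrableOn (fun u : ℝ => C * Real.exp (-c * u ^ a)) (Set.Ioi 0) := by
  have := integrableOn_rpow_mul_exp_neg_mul_rpow (s := 0) (p := a) (b := c) (by norm_num) ha hc
  refine Integrable.const_mul ?_ C
  have h2 : IntegrableOn (fun u : ℝ => Real.exp (-c * u ^ a)) (Set.Ioi 0) := by simpa using this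
  exact h2

lemma decay_tendsto {a c : ℝ} (ha : 0 < a) (hc : 0 < c) (C : ℝ) :
    Tendsto (fun u : ℝ => C * Real.exp (-c * u ^ a)) atTop (nhds 0) := by
  rw [← mul_zero C]
  refine Tendsto.const_mul _ ?_
  refine Real.tendsto_exp_atBot.comp ?_
  exact (tendsto_rpow_atTop ha).const_mul_atTop_of_neg (by linarith)

lemma log_rpow_tendsto {a : ℝ} (ha : 0 < a) :
    Tendsto (fun x : ℝ => (1 + |Real.log x|) * x ^ a) (nhdsWithin 0 (Set.Ioi 0)) (nhds 0) := by
  have h1 := (tendsto_log_mul_rpow_nhdsGT_zero ha).abs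
  have h2 : Tendsto (fun x : ℝ => x ^ a) (nhdsWithin 0 (Set.Ioi 0)) (nhds 0) := by
    have := (Real.continuous_rpow_const ha.le).tendsto 0
    rw [Real.zero_rpow ha.ne'] at this
    exact this.mono_left nhdsWithin_le_nhds
  have h3 := h2.add h1
  simp only [abs_zero, add_zero] at h3
  refine h3.congr' ?_
  filter_upwards [self_mem_nhdsWithin] with x hx
  have : 0 ≤ x ^ a := Real.rpow_nonneg (le_of_lt hx) _
  rw [abs_mul, abs_of_nonneg this]; ring

section
variable {σ0 α0 β0 ρ Ck : ℝ}

lemma FC_tendsto (h : Ctx σ0 α0 β0 ρ Ck) (e : ℝ) (he : e = 1 ∨ e = -1) (m X : ℝ) {σ α β : ℝ}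
    (n : Nb σ0 α0 β0 ρ σ α β) :
    Tendsto (FC e m X σ α β) (nhdsWithin 0 {z : ℂ | z ≠ 0 ∧ 0 ≤ z.re}) (nhds 1) := by
  obtain ⟨C, hC, hb⟩ := PsiC_bound h e he m
  obtain ⟨r1, r2, r3, r4, r5, r6⟩ := Nb_real h n
  have hP : Tendsto (PsiC e m σ α β) (nhdsWithin 0 {z : ℂ | z ≠ 0 ∧ 0 ≤ z.re}) (nhds 0) := by
    have hn : Tendsto (fun z : ℂ => ‖z‖) (nhdsWithin 0 {z : ℂ | z ≠ 0 ∧ 0 ≤ z.re})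
        (nhdsWithin 0 (Set.Ioi 0)) := by
      apply tendsto_nhdsWithin_of_tendsto_nhds_of_eventually_within
      · have := (continuous_norm (E := ℂ)).tendsto 0
        rw [norm_zero] at this
        exact this.mono_left nhdsWithin_le_nhds
      · filter_upwards [self_mem_nhdsWithin] with z hz
        exact norm_pos_iff.2 hz.1
    have h2 := ((log_rpow_tendsto one_pos).add (log_rpow_tendsto r4)).const_mul C
    have h3 := h2.comp hn
    simp only [add_zero, mul_zero] at h3
    apply squeeze_zero_norm' _ h3
    filter_upwards [self_mem_nhdsWithin] with z hz
    refine (hb σ α β n z hz.1 hz.2).trans (le_of_eq ?_)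
    simp only [Function.comp, Complex.ofReal_re, Real.rpow_one]
    ring
  have h1 : Tendsto (fun z : ℂ => Complex.exp (-(Complex.I * z * X)))
      (nhdsWithin 0 {z : ℂ | z ≠ 0 ∧ 0 ≤ z.re}) (nhds 1) := by
    have : Continuous (fun z : ℂ => Complex.exp (-(Complex.I * z * X))) := by fun_prop
    have := this.tendsto 0
    simp at this
    simpa using this.mono_left nhdsWithin_le_nhds
  have h2 := h1.mul ((Complex.continuous_exp.tendsto 0).comp hP)
  simp only [Complex.exp_zero, mul_one] at h2
  exact h2

lemma FC_differentiableAt (e m X : ℝ) (σ α β z : ℂ) (hz : z ≠ 0) (hre : 0 ≤ z.re) :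
    DifferentiableAt ℂ (FC e m X σ α β) z := by
  unfold FC
  have := PsiC_differentiableAt_z e m σ α β z (re_slit hz hre)
  exact (by fun_prop : DifferentiableAt ℂ (fun z : ℂ => Complex.exp (-(Complex.I * z * X))) z).mul this.cexp

lemma FC_exp_norm (X u y : ℝ) :
    ‖Complex.exp (-(Complex.I * (u + y * Complex.I) * X))‖ = Real.exp (y * X) := by
  rw [Complex.norm_exp]; congr 1; simp

lemma psiM_neg (θ : Fin 4 → ℝ) (t : ℝ) : psiM θ (-t) = (starRingEnd ℂ) (psiM θ t) := by
  unfold psiM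
  split_ifs
  · simp only [mul_neg, abs_neg, map_add, map_sub, map_mul, Complex.conj_I, Complex.conj_ofReal]
    push_cast; ring
  · have : Real.sign (-t) = - Real.sign t := Real.sign_neg 
    simp only [mul_neg, abs_neg, this, map_add, map_mul, Complex.conj_I, Complex.conj_ofReal, map_one]
    push_cast; ring

lemma contour_FC (h : Ctx σ0 α0 β0 ρ Ck) (e : ℝ) (he : e = 1 ∨ e = -1) (m X : ℝ) (hX : 0 ≤ X) {σ α β : ℝ}
    (n : Nb σ0 α0 β0 ρ σ α β) (δ : ℝ) (hδ : 0 < δ) (hδ1 : δ ≤ 1) :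
    IntegrableOn (fun t : ℝ => FC e m X σ α β t) (Set.Ioi 0) ∧
    IntegrableOn (fun t : ℝ => FC e m X σ α β (t + ((-δ : ℝ) : ℂ) * Complex.I)) (Set.Ioi 0) ∧
    ∫ t in Set.Ioi (0:ℝ), FC e m X σ α β t =
      (∫ t in Set.Ioi (0:ℝ), FC e m X σ α β (t + ((-δ : ℝ) : ℂ) * Complex.I))
      - Complex.I * ∫ y in (-δ)..0, FC e m X σ α β (y * Complex.I) := by
  obtain ⟨C, hC, c, hc, hb⟩ := PsiC_decay h e he m δ hδ hδ1
  have ha : 0 < α0 - ρ := by linarith [h.hα, h.hρ]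
  refine contour_abs _ δ hδ (fun z h1 h2 => FC_differentiableAt e m X σ α β z h1 h2) (FC_tendsto h e he m X n)
    (fun u => C * Real.exp (-c * u ^ (α0 - ρ))) (decay_integrable ha hc C) (decay_tendsto ha hc C) ?_
  intro u hu y hy1 hy2
  rw [FC, norm_mul, FC_exp_norm]
  have h1 : Real.exp (y * X) ≤ 1 := Real.exp_le_one_iff.2 (mul_nonpos_of_nonpos_of_nonneg hy2 hX)
  calc _ ≤ 1 * _ := mul_le_mul_of_nonneg_right h1 (norm_nonneg _)
    _ ≤ _ := by rw [one_mul]; exact hb σ α β n u hu y hy1 hy2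

lemma fM_eq (h : Ctx σ0 α0 β0 ρ Ck) (e : ℝ) (he : e = 1 ∨ e = -1) (X : ℝ) (hX : 0 ≤ X)
    (θ : Fin 4 → ℝ) (hθ : θ ∈ ThetaInt)
    (n : Nb σ0 α0 β0 ρ (θ 1) (θ 2) (θ 3)) (δ : ℝ) (hδ : 0 < δ) (hδ1 : δ ≤ 1) :
    fM θ (e * X) = 1 / Real.pi *
      ((∫ s in Set.Ioc 0 δ, Complex.exp (-((s * X : ℝ) : ℂ)) * HC e (θ 0) (θ 1) (θ 2) (θ 3) s) +
       ∫ t in Set.Ioi (0:ℝ), FC e (θ 0) X (θ 1) (θ 2) (θ 3) (t + ((-δ : ℝ) : ℂ) * Complex.I)).re := by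
  obtain ⟨i1, i2, hc⟩ := contour_FC h e he (θ 0) X hX n δ hδ hδ1
  obtain ⟨r1, r2, r3, r4, r5, r6⟩ := Nb_real h n
  set G : ℝ → ℂ := fun t => Complex.exp (-Complex.I * (t : ℂ) * ((e * X : ℝ) : ℂ)) * phiM θ t with hG
  have hee : e * e = 1 := by rcases he with rfl | rfl <;> norm_num
  have heC : (e : ℂ) * e = 1 := by exact_mod_cast hee
  have hGF : ∀ t : ℝ, 0 < t → G (e * t) = FC e (θ 0) X (θ 1) (θ 2) (θ 3) t := by
    intro t ht
    simp only [hG, FC, phiM]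
    rw [PsiC_eq_psiM e he θ hθ t ht]
    congr 2
    push_cast
    linear_combination (-Complex.I * t * X) * heC
  have hGn : ∀ t : ℝ, G (-t) = (starRingEnd ℂ) (G t) := by
    intro t
    simp only [hG, phiM, psiM_neg, map_mul, ← Complex.exp_conj]
    congr 2
    simp
  have hGp : Set.EqOn (fun t => ((G t).re : ℝ)) (fun t : ℝ => (FC e (θ 0) X (θ 1) (θ 2) (θ 3) t).re) (Set.Ioi 0) := by
    intro t ht
    simp only
    rw [← hGF t ht]
    rcases he with rfl | rfl
    · simp
    · rw [neg_one_mul, hGn]; simp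
  have hGint : IntegrableOn G (Set.Ioi 0) := by
    rcases he with rfl | rfl
    · refine i1.congr_fun ?_ measurableSet_Ioi
      intro t ht
      have := hGF t ht
      simp only [one_mul] at this
      exact this.symm
    · have i1' := (Complex.conjCLE.toContinuousLinearMap.integrable_comp i1)
      refine IntegrableOn.congr_fun i1' ?_ measurableSet_Ioi
      intro t ht
      have := hGF t ht
      simp only
      rw [← this, neg_one_mul, hGn]
      simp
  have hGint2 : IntegrableOn G (Set.Iic 0) := by
    have i1' : IntegrableOn (fun t => (starRingEnd ℂ) (G t)) (Set.Ioi 0) :=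
      (Complex.conjCLE.toContinuousLinearMap.integrable_comp hGint)
    have := (integrableOn_Ici_iff_integrableOn_Ioi (by finiteness)).2 i1'
    rw [show (0:ℝ) = -0 by simp] at this
    have := this.comp_neg_Iic
    refine this.congr_fun ?_ measurableSet_Iic
    intro t ht
    simp only
    rw [← hGn, neg_neg]
  have hsum : (∫ t : ℝ, G t) = (∫ t in Set.Iic 0, G t) + ∫ t in Set.Ioi 0, G t :=
    (intervalIntegral.integral_Iic_add_Ioi hGint2 hGint).symm
  have hneg : (∫ t in Set.Iic 0, G t) = (starRingEnd ℂ) (∫ t in Set.Ioi 0, G t) := by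
    rw [← integral_conj]
    have := integral_comp_neg_Ioi (0:ℝ) G
    rw [neg_zero] at this
    rw [← this]
    simp only [hGn]
  have hre : (∫ t : ℝ, G t).re = 2 * (∫ t in Set.Ioi (0:ℝ), FC e (θ 0) X (θ 1) (θ 2) (θ 3) (t : ℝ)).re := by
    rw [hsum, hneg, Complex.add_re, Complex.conj_re]
    have e1 : (∫ t in Set.Ioi 0, G t).re = ∫ t in Set.Ioi 0, (G t).re := by
      simpa using (integral_re hGint).symm
    have e2 : (∫ t in Set.Ioi (0:ℝ), FC e (θ 0) X (θ 1) (θ 2) (θ 3) t).re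
        = ∫ t in Set.Ioi (0:ℝ), (FC e (θ 0) X (θ 1) (θ 2) (θ 3) t).re := by
      simpa using (integral_re i1).symm
    rw [e1, e2, setIntegral_congr_fun measurableSet_Ioi hGp]
    ring
  have hv : (-Complex.I * ∫ y in (-δ)..0, FC e (θ 0) X (θ 1) (θ 2) (θ 3) (y * Complex.I)).re =
      (∫ s in Set.Ioc 0 δ, Complex.exp (-((s * X : ℝ) : ℂ)) * HC e (θ 0) (θ 1) (θ 2) (θ 3) s).re := by
    have hsub : (∫ y in (-δ)..0, FC e (θ 0) X (θ 1) (θ 2) (θ 3) (y * Complex.I)) =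
        ∫ s in Set.Ioc 0 δ, FC e (θ 0) X (θ 1) (θ 2) (θ 3) (-(Complex.I * s)) := by
      rw [← intervalIntegral.integral_of_le hδ.le]
      have := intervalIntegral.integral_comp_neg (a := 0) (b := δ)
        (fun y : ℝ => FC e (θ 0) X (θ 1) (θ 2) (θ 3) (y * Complex.I))
      rw [neg_zero] at this
      rw [← this]
      congr 1
      ext s
      congr 1
      push_cast; ring
    have hI : IntegrableOn (fun s : ℝ => FC e (θ 0) X (θ 1) (θ 2) (θ 3) (-(Complex.I * s))) (Set.Ioc 0 δ) := by
      obtain ⟨C2, hC2, hp⟩ := PsiC_poly h e he (θ 0)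
      refine Integrable.mono' (integrableOn_const (C := Real.exp (C2 * 2 ^ 3)) (by simp : volume (Set.Ioc 0 δ) ≠ ⊤)) ?_ ?_
      · refine ContinuousOn.aestronglyMeasurable ?_ (measurableSet_Ioc (a := (0:ℝ)) (b := δ))
        intro t ht
        have : ContinuousAt (FC e (θ 0) X (θ 1) (θ 2) (θ 3)) (-(Complex.I * t)) := by
          refine (FC_differentiableAt _ _ _ _ _ _ _ ?_ ?_).continuousAt
          · simpa using ht.1.ne'
          · simp
        exact (ContinuousAt.comp (f := fun t : ℝ => (-(Complex.I * t))) this (by fun_prop)).continuousWithinAt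
      · filter_upwards [ae_restrict_mem measurableSet_Ioc] with s hs
        have q := hp (θ 1) (θ 2) (θ 3) n (-(Complex.I * s)) (by simpa using hs.1.ne') (by simp)
        rw [FC, ← Complex.exp_add, Complex.norm_exp]
        apply Real.exp_le_exp.2
        have n1 : ‖(-(Complex.I * s) : ℂ)‖ = s := by simp [abs_of_pos hs.1]
        rw [n1] at q
        have q2 : C2 * (1 + s) ^ 3 ≤ C2 * 2 ^ 3 := by
          have : 1 + s ≤ 2 := by linarith [hs.2]
          have := hs.1
          gcongr
        have q3 := Complex.re_le_norm (PsiC e (θ 0) (θ 1) (θ 2) (θ 3) (-(Complex.I * s)))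
        have q4 : (-(Complex.I * -(Complex.I * s) * X)).re = -(s * X) := by simp
        rw [Complex.add_re, q4]
        have := mul_nonneg hs.1.le hX
        linarith
    have e3 : ∀ w : ℂ, (-Complex.I * w).re = w.im := by intro w; simp
    have e4 : (∫ s in Set.Ioc 0 δ, FC e (θ 0) X (θ 1) (θ 2) (θ 3) (-(Complex.I * (s:ℝ)))).im
        = ∫ s in Set.Ioc 0 δ, (FC e (θ 0) X (θ 1) (θ 2) (θ 3) (-(Complex.I * (s:ℝ)))).im := by
      simpa using (integral_im hI).symm
    rw [hsub, e3, e4]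
    have e5 : (∫ s in Set.Ioc 0 δ, Complex.exp (-((s * X : ℝ) : ℂ)) * HC e (θ 0) (θ 1) (θ 2) (θ 3) s) =
       ∫ s in Set.Ioc 0 δ, (((FC e (θ 0) X (θ 1) (θ 2) (θ 3) (-(Complex.I * (s:ℝ)))).im : ℝ) : ℂ) := by
      refine setIntegral_congr_fun measurableSet_Ioc ?_
      intro s hs
      simp only
      rw [HC_real_im e he (θ 0) (θ 1) (θ 2) (θ 3) r1 r4 r5 s hs.1, FC]
      have q4 : (-(Complex.I * -(Complex.I * s) * X)) = ((-(s * X) : ℝ) : ℂ) := by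
        push_cast; linear_combination (s * X : ℂ) * Complex.I_mul_I
      rw [q4, ← Complex.ofReal_neg, ← Complex.ofReal_exp, Complex.im_ofReal_mul, ← Complex.ofReal_mul]
    rw [e5, integral_complex_ofReal]
    simp
  have : fM θ (e * X) = 1 / (2 * Real.pi) * (∫ t : ℝ, G t).re := rfl
  rw [this, hre, hc, Complex.add_re, ← hv, Complex.sub_re, neg_mul, Complex.neg_re]
  field_simp
  ring
end

lemma cauchy_bd (f : ℂ → ℂ) (a : ℂ) (R G : ℝ) (hR : 0 < R)
    (hd : ∀ z : ℂ, ‖z‖ ≤ R → DifferentiableAt ℂ f (a + z)) (hb : ∀ z : ℂ, ‖z‖ ≤ R → ‖f (a + z)‖ ≤ G) :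
    ‖deriv f a‖ ≤ G / R := by
  apply Complex.norm_deriv_le_of_forall_mem_sphere_norm_le hR
  · apply DifferentiableOn.diffContOnCl_ball (U := Metric.closedBall a R) _ subset_rfl
    intro w hw
    have := hd (w - a) (by simpa [dist_eq_norm] using hw)
    rw [add_sub_cancel] at this
    exact this.differentiableWithinAt
  · intro w hw
    have := hb (w - a) (by simpa [dist_eq_norm] using (Metric.sphere_subset_closedBall hw))
    rwa [add_sub_cancel] at this

lemma hasDeriv_int {U : Type*} [MeasurableSpace U] (ν : Measure U) (f : ℂ → U → ℂ) (r : ℝ) (hr : 0 < r)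
    (R G : U → ℝ) (hR : ∀ᵐ u ∂ν, 0 < R u)
    (hd : ∀ᵐ u ∂ν, ∀ a : ℝ, |a| < r → ∀ z : ℂ, ‖z‖ ≤ R u → DifferentiableAt ℂ (fun w => f w u) (a + z))
    (hb : ∀ᵐ u ∂ν, ∀ a : ℝ, |a| < r → ∀ z : ℂ, ‖z‖ ≤ R u → ‖f (a + z) u‖ ≤ G u)
    (hm : ∀ a : ℝ, |a| < r → AEStronglyMeasurable (fun u => f a u) ν)
    (hG : Integrable G ν) (hGR : Integrable (fun u => G u / R u) ν) :
    AEStronglyMeasurable (fun u => deriv (fun w => f w u) 0) ν ∧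
    HasDerivAt (fun a : ℝ => ∫ u, f a u ∂ν) (∫ u, deriv (fun w => f w u) 0 ∂ν) 0 ∧
    ‖∫ u, deriv (fun w => f w u) 0 ∂ν‖ ≤ ∫ u, G u / R u ∂ν := by
  have hder : ∀ᵐ u ∂ν, ∀ a : ℝ, |a| < r → HasDerivAt (fun a : ℝ => f a u) (deriv (fun w => f w u) a) a := by
    filter_upwards [hR, hd] with u h1 h2 a ha
    have := h2 a ha 0 (by simpa using h1.le)
    rw [add_zero] at this
    exact this.hasDerivAt.comp_ofReal
  have hbd : ∀ᵐ u ∂ν, ∀ a : ℝ, |a| < r → ‖deriv (fun w => f w u) a‖ ≤ G u / R u := by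
    filter_upwards [hR, hd, hb] with u h1 h2 h3 a ha
    exact cauchy_bd _ _ _ _ h1 (h2 a ha) (h3 a ha)
  have hmeas : AEStronglyMeasurable (fun u => deriv (fun w => f w u) 0) ν := by
    have hseq : Tendsto (fun n : ℕ => r / ((n : ℝ) + 2)) atTop (nhdsWithin 0 {0}ᶜ) := by
      apply tendsto_nhdsWithin_of_tendsto_nhds_of_eventually_within
      · exact tendsto_const_nhds.div_atTop (tendsto_atTop_add_const_right _ _ tendsto_natCast_atTop_atTop)
      · filter_upwards with n
        have : 0 < r / ((n : ℝ) + 2) := by positivity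
        exact this.ne'
    refine aestronglyMeasurable_of_tendsto_ae (u := atTop)
      (f := fun n : ℕ => fun u => (r / ((n : ℝ) + 2))⁻¹ • (f ((r / ((n : ℝ) + 2) : ℝ)) u - f ((0:ℝ) : ℂ) u)) ?_ ?_
    · intro n
      have h1 : |r / ((n : ℝ) + 2)| < r := by
        rw [abs_of_pos (by positivity)]
        apply div_lt_self hr
        have : (0:ℝ) ≤ n := Nat.cast_nonneg n
        linarith
      exact ((hm _ h1).sub (hm 0 (by simpa using hr))).const_smul ((r / ((n : ℝ) + 2))⁻¹)
    · filter_upwards [hder] with u hu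
      have := (hu 0 (by simpa using hr)).tendsto_slope
      have := this.comp hseq
      rw [Complex.ofReal_zero] at this
      refine this.congr ?_
      intro n
      simp only [Function.comp, slope, vsub_eq_sub, sub_zero]
  have hball : ∀ a ∈ Metric.ball (0:ℝ) r, |a| < r := fun a ha => by simpa using ha
  refine ⟨hmeas, ?_, ?_⟩
  · have := hasDerivAt_integral_of_dominated_loc_of_deriv_le (μ := ν) (F := fun a : ℝ => fun u => f a u)
      (F' := fun a : ℝ => fun u => deriv (fun w => f w u) a) (x₀ := (0:ℝ)) (bound := fun u => G u / R u)
      (s := Metric.ball (0:ℝ) r) (Metric.ball_mem_nhds _ hr) ?_ ?_ ?_ ?_ hGR ?_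
    · simpa using this.2
    · filter_upwards [Metric.ball_mem_nhds (0:ℝ) hr] with a ha
      exact hm a (hball a ha)
    · refine Integrable.mono' hG (hm 0 (by simpa using hr)) ?_
      filter_upwards [hR, hb] with u h1 h2
      simpa using h2 0 (by simpa using hr) 0 (by simpa using h1.le)
    · simpa using hmeas
    · filter_upwards [hbd] with u hu a ha
      exact hu a (hball a ha)
    · filter_upwards [hder] with u hu a ha
      exact hu a (hball a ha)
  · refine norm_integral_le_of_norm_le hGR ?_
    filter_upwards [hbd] with u hu
    simpa using hu 0 (by simpa using hr)

lemma diff_deriv (g : ℂ → ℂ → ℂ) (b : ℂ) (h : ContDiffAt ℂ 2 (fun p : ℂ × ℂ => g p.1 p.2) (0, b)) :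
    DifferentiableAt ℂ (fun w => deriv (fun z => g z w) 0) b := by
  have h1 : ∀ᶠ p in nhds ((0, b) : ℂ × ℂ), ContDiffAt ℂ 2 (fun p : ℂ × ℂ => g p.1 p.2) p :=
    h.eventually (by simp)
  have h2 : ContDiffAt ℂ 1 (fderiv ℂ (fun p : ℂ × ℂ => g p.1 p.2)) (0, b) := h.fderiv_right (by norm_num)
  have hi : Continuous (fun w : ℂ => ((0, w) : ℂ × ℂ)) := by fun_prop
  have h3 : ∀ᶠ w in nhds b, ContDiffAt ℂ 2 (fun p : ℂ × ℂ => g p.1 p.2) (0, w) :=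
    (hi.tendsto b).eventually h1
  have h4 : (fun w => deriv (fun z => g z w) 0) =ᶠ[nhds b]
      fun w => fderiv ℂ (fun p : ℂ × ℂ => g p.1 p.2) (0, w) (1, 0) := by
    filter_upwards [h3] with w hw
    have hf := (hw.differentiableAt (by norm_num)).hasFDerivAt
    have hc : HasDerivAt (fun z : ℂ => ((z, w) : ℂ × ℂ)) (1, 0) 0 :=
      (hasDerivAt_id 0).prodMk (hasDerivAt_const 0 w)
    exact (hf.comp_hasDerivAt (0:ℂ) hc).deriv
  refine DifferentiableAt.congr_of_eventuallyEq ?_ h4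
  have h5 : DifferentiableAt ℂ (fun w : ℂ => fderiv ℂ (fun p : ℂ × ℂ => g p.1 p.2) (0, w)) b :=
    (h2.differentiableAt (by norm_num)).comp b (by fun_prop)
  exact h5.clm_apply (differentiableAt_const _)

lemma double_int {U : Type*} [MeasurableSpace U] (ν : Measure U) (g : ℂ → ℂ → U → ℂ) (r : ℝ) (hr : 0 < r)
    (R1 R2 G : U → ℝ) (hR1 : ∀ᵐ u ∂ν, 0 < R1 u) (hR2 : ∀ᵐ u ∂ν, 0 < R2 u)
    (hd : ∀ᵐ u ∂ν, ∀ a b : ℝ, |a| < r → |b| < r → ∀ z w : ℂ, ‖z‖ ≤ R1 u → ‖w‖ ≤ R2 u →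
      ContDiffAt ℂ 2 (fun p : ℂ × ℂ => g p.1 p.2 u) (a + z, b + w))
    (hb : ∀ᵐ u ∂ν, ∀ a b : ℝ, |a| < r → |b| < r → ∀ z w : ℂ, ‖z‖ ≤ R1 u → ‖w‖ ≤ R2 u →
      ‖g (a + z) (b + w) u‖ ≤ G u)
    (hm : ∀ a b : ℝ, |a| < r → |b| < r → AEStronglyMeasurable (fun u => g a b u) ν)
    (hG : Integrable G ν) (hG1 : Integrable (fun u => G u / R1 u) ν)
    (hG2 : Integrable (fun u => G u / R2 u) ν) (hG12 : Integrable (fun u => G u / R1 u / R2 u) ν) :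
    ∃ A : ℝ → ℂ, ∃ B D : ℂ,
      (∀ b : ℝ, |b| < r → HasDerivAt (fun a : ℝ => ∫ u, g a b u ∂ν) (A b) 0) ∧
      HasDerivAt A D 0 ∧ HasDerivAt (fun b : ℝ => ∫ u, g 0 b u ∂ν) B 0 ∧
      ‖A 0‖ ≤ ∫ u, G u / R1 u ∂ν ∧ ‖B‖ ≤ ∫ u, G u / R2 u ∂ν ∧ ‖D‖ ≤ ∫ u, G u / R1 u / R2 u ∂ν := by
  have hr0 : |(0:ℝ)| < r := by simpa using hr
  have s1 : ∀ b : ℝ, |b| < r → _ := fun b hb' => hasDeriv_int ν (fun z u => g z b u) r hr R1 G hR1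
    (by
      filter_upwards [hR2, hd] with u h2 h3 a ha z hz
      have := h3 a b ha hb' z 0 hz (by simpa using h2.le)
      rw [add_zero] at this
      exact (this.differentiableAt (by norm_num)).comp (a + z : ℂ) (f := fun w : ℂ => ((w, (b:ℂ)) : ℂ × ℂ)) (by fun_prop))
    (by
      filter_upwards [hR2, hb] with u h2 h3 a ha z hz
      have := h3 a b ha hb' z 0 hz (by simpa using h2.le)
      rwa [add_zero] at this)
    (fun a ha => hm a b ha hb') hG hG1
  have s2 := hasDeriv_int ν (fun w u => g 0 w u) r hr R2 G hR2
    (by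
      filter_upwards [hR1, hd] with u h2 h3 a ha z hz
      have := h3 0 a hr0 ha 0 z (by simpa using h2.le) hz
      rw [add_zero, Complex.ofReal_zero] at this
      exact (this.differentiableAt (by norm_num)).comp (a + z : ℂ) (f := fun w : ℂ => (((0:ℂ), w) : ℂ × ℂ)) (by fun_prop))
    (by
      filter_upwards [hR1, hb] with u h2 h3 a ha z hz
      have := h3 0 a hr0 ha 0 z (by simpa using h2.le) hz
      rwa [add_zero, Complex.ofReal_zero] at this)
    (fun a ha => by simpa using hm 0 a hr0 ha) hG hG2
  have s3 := hasDeriv_int ν (fun w u => deriv (fun z => g z w u) 0) r hr R2 (fun u => G u / R1 u) hR2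
    (by
      filter_upwards [hR1, hd] with u h2 h3 a ha z hz
      have := h3 0 a hr0 ha 0 z (by simpa using h2.le) hz
      rw [add_zero, Complex.ofReal_zero] at this
      exact diff_deriv (fun z w => g z w u) _ this)
    (by
      filter_upwards [hR1, hb, hd] with u h2 h3 h4 a ha z hz
      refine cauchy_bd (fun z' => g z' (a + z) u) 0 _ _ h2 ?_ ?_
      · intro z' hz'
        have := h4 0 a hr0 ha z' z hz' hz
        rw [Complex.ofReal_zero] at this
        exact (this.differentiableAt (by norm_num)).comp (0 + z' : ℂ) (f := fun w : ℂ => ((w, (a + z:ℂ)) : ℂ × ℂ)) (by fun_prop)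
      · intro z' hz'
        have := h3 0 a hr0 ha z' z hz' hz
        rwa [Complex.ofReal_zero] at this)
    (fun b hb => (s1 b hb).1) hG1 hG12
  refine ⟨fun b => ∫ u, deriv (fun z => g z b u) 0 ∂ν, _, _, fun b hb => (s1 b hb).2.1, s3.2.1, s2.2.1, (s1 0 hr0).2.2, s2.2.2, s3.2.2⟩

def dl (i k : Fin 4) : ℝ := if i = k then 1 else 0

noncomputable def pp (θ : Fin 4 → ℝ) (i j : Fin 4) (a b : ℂ) (k : Fin 4) : ℂ := θ k + a * dl i k + b * dl j k

noncomputable def lam (i : Fin 4) (X : ℝ) : ℝ := if i = 2 then Real.log X else 1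

lemma dl_norm (i k : Fin 4) : ‖(dl i k : ℂ)‖ = dl i k := by unfold dl; split_ifs <;> simp
lemma dl_nonneg (i k : Fin 4) : 0 ≤ dl i k := by unfold dl; split_ifs <;> simp
lemma dl_le (i k : Fin 4) : dl i k ≤ 1 := by unfold dl; split_ifs <;> simp

lemma pp_norm (θ : Fin 4 → ℝ) (i j : Fin 4) (a b : ℂ) (k : Fin 4) :
    ‖pp θ i j a b k - θ k‖ ≤ ‖a‖ * dl i k + ‖b‖ * dl j k := by
  unfold pp
  rw [show (θ k + a * dl i k + b * dl j k - θ k : ℂ) = a * dl i k + b * dl j k by ring]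
  refine (norm_add_le _ _).trans ?_
  rw [norm_mul, norm_mul, dl_norm, dl_norm]

lemma pp_Nb (θ : Fin 4 → ℝ) (i j : Fin 4) (a b : ℂ) (ρ : ℝ) (h : ‖a‖ + ‖b‖ ≤ ρ) :
    Nb (θ 1) (θ 2) (θ 3) ρ (pp θ i j a b 1) (pp θ i j a b 2) (pp θ i j a b 3) := by
  have : ∀ k, ‖pp θ i j a b k - θ k‖ ≤ ρ := by
    intro k
    refine (pp_norm θ i j a b k).trans (le_trans ?_ h)
    have h1 := mul_le_mul_of_nonneg_left (dl_le i k) (norm_nonneg a)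
    have h2 := mul_le_mul_of_nonneg_left (dl_le j k) (norm_nonneg b)
    linarith
  exact ⟨this 1, this 2, this 3⟩

lemma pp_real (θ : Fin 4 → ℝ) (i j : Fin 4) (a b : ℝ) (k : Fin 4) :
    pp θ i j a b k = ((θ k + a * dl i k + b * dl j k : ℝ) : ℂ) := by
  unfold pp; push_cast; ring

lemma pp_contDiff (θ : Fin 4 → ℝ) (i j : Fin 4) :
    ContDiff ℂ 2 (fun p : ℂ × ℂ => (pp θ i j p.1 p.2 1, pp θ i j p.1 p.2 2, pp θ i j p.1 p.2 3)) := by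
  unfold pp; fun_prop

section
variable {σ0 α0 β0 ρ Ck : ℝ}
lemma BC_contDiffAt (h : Ctx σ0 α0 β0 ρ Ck) (e : ℝ) (s : ℝ) {σ α β : ℂ} (n : Nb σ0 α0 β0 ρ σ α β) :
    ContDiffAt ℂ 2 (fun p : ℂ × ℂ × ℂ => BC e p.1 p.2.1 p.2.2 s) (σ, α, β) := by
  have hσ : σ ∈ Complex.slitPlane := Or.inl (by linarith [n.sigma_re h, h.hσ, h.hρ])
  have hl : ContDiffAt ℂ 2 (fun p : ℂ × ℂ × ℂ => Complex.log p.1) (σ, α, β) :=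
    ContDiffAt.comp (g := Complex.log) _ (Complex.contDiffAt_log hσ) (by fun_prop)
  have : ContDiff ℂ 2 (fun p : ℂ × ℂ × ℂ => Complex.sin (Real.pi * p.2.1 / 2)) :=
    ContDiff.csin (by fun_prop)
  have := this.contDiffAt (x := (σ, α, β))
  unfold BC
  fun_prop

lemma HC_contDiffAt (h : Ctx σ0 α0 β0 ρ Ck) (e m : ℝ) (s : ℝ) {σ α β : ℂ} (n : Nb σ0 α0 β0 ρ σ α β) :
    ContDiffAt ℂ 2 (fun p : ℂ × ℂ × ℂ => HC e m p.1 p.2.1 p.2.2 s) (σ, α, β) := by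
  have h1 := BC_contDiffAt h e s n
  have h2 := PsiC_contDiffAt h e m (-(Complex.I * s)) n
  have h3 := h1.csin
  unfold HC
  fun_prop

lemma HC_meas (e m : ℝ) (σ α β : ℂ) (δ : ℝ) :
    ContinuousOn (fun s : ℝ => HC e m σ α β s) (Set.Ioc 0 δ) := by
  intro t ht
  apply ContinuousAt.continuousWithinAt
  have h1 : ContinuousAt (fun s : ℝ => PsiC e m σ α β (-(Complex.I * s))) t := by
    have := (PsiC_differentiableAt_z e m σ α β (-(Complex.I * t)) (re_slit (by simpa using ht.1.ne') (by simp))).continuousAt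
    exact ContinuousAt.comp (f := fun t : ℝ => (-(Complex.I * t))) this (by fun_prop)
  have h0 : ContinuousAt (fun s : ℝ => ((Real.log s : ℝ) : ℂ)) t :=
    Complex.continuous_ofReal.continuousAt.comp (Real.continuousAt_log ht.1.ne')
  have h2 : ContinuousAt (fun s : ℝ => BC e σ α β s) t := by
    unfold BC
    exact (continuousAt_const.mul (Complex.continuous_exp.continuousAt.comp (by fun_prop))).mul continuousAt_const
  unfold HC
  exact (Complex.continuous_exp.continuousAt.comp (by fun_prop)).mul (Complex.continuous_sin.continuousAt.comp h2)
end

lemma exp_half_bd (t : ℝ) (ht : 0 ≤ t) : Real.exp (-t) * (1 + t ^ 2) ≤ 8 * Real.exp (-(t / 2)) := by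
  have h1 := Real.quadratic_le_exp_of_nonneg (x := t / 2) (by positivity)
  have h2 : Real.exp (-t) * Real.exp (t / 2) = Real.exp (-(t / 2)) := by rw [← Real.exp_add]; ring_nf
  rw [← h2]
  have := Real.exp_pos (-t)
  nlinarith

lemma rpow_le_one_add_sq (t κ : ℝ) (ht : 0 ≤ t) (h0 : 0 ≤ κ) (h2 : κ ≤ 2) : t ^ κ ≤ 1 + t ^ 2 := by
  rcases le_total t 1 with h | h
  · have := Real.rpow_le_one ht h h0
    nlinarith
  · have := Real.rpow_le_rpow_of_exponent_le h h2
    rw [Real.rpow_two] at this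
    linarith

lemma lam_ge (i : Fin 4) (X : ℝ) (hX : Real.exp 1 ≤ X) : 1 ≤ lam i X := by
  unfold lam; split_ifs
  · rw [Real.le_log_iff_exp_le (lt_of_lt_of_le (Real.exp_pos 1) hX)]; exact hX
  · exact le_rfl

/-- integrals of the dominating function -/
lemma vert_int (K X δ : ℝ) (hK : 0 ≤ K) (hX : 0 < X) :
    IntegrableOn (fun s : ℝ => K * Real.exp (-(X / 2) * s)) (Set.Ioc 0 δ) ∧
    ∫ s in Set.Ioc 0 δ, K * Real.exp (-(X / 2) * s) ≤ 2 * K / X := by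
  have h1 : IntegrableOn (fun s : ℝ => K * Real.exp (-(X / 2) * s)) (Set.Ioi 0) :=
    Integrable.const_mul (integrableOn_exp_mul_Ioi (by linarith) 0) K
  refine ⟨h1.mono_set Set.Ioc_subset_Ioi_self, ?_⟩
  have h2 : ∫ s in Set.Ioc 0 δ, K * Real.exp (-(X / 2) * s) ≤ ∫ s in Set.Ioi 0, K * Real.exp (-(X / 2) * s) := by
    refine setIntegral_mono_set h1 ?_ (ae_of_all _ Set.Ioc_subset_Ioi_self)
    exact ae_of_all _ fun s => mul_nonneg hK (Real.exp_pos _).le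
  refine h2.trans (le_of_eq ?_)
  rw [integral_const_mul, integral_exp_mul_Ioi (by linarith) 0]
  simp; field_simp

lemma vert (θ : Fin 4 → ℝ) {ρ Ck : ℝ} (h : Ctx (θ 1) (θ 2) (θ 3) ρ Ck) (e : ℝ) (he : e = 1 ∨ e = -1) (m : ℝ)
    (δ : ℝ) (hδ1 : δ ≤ 1) :
    ∃ C > 0, ∀ i j : Fin 4, ∀ X : ℝ, Real.exp 1 ≤ X → ∃ r > 0, ∃ A : ℝ → ℂ, ∃ B D : ℂ,
      (∀ b : ℝ, |b| < r → HasDerivAt (fun a : ℝ => ∫ s in Set.Ioc 0 δ, Complex.exp (-((s * X : ℝ) : ℂ)) *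
        HC e m (pp θ i j a b 1) (pp θ i j a b 2) (pp θ i j a b 3) s) (A b) 0) ∧
      HasDerivAt A D 0 ∧ HasDerivAt (fun b : ℝ => ∫ s in Set.Ioc 0 δ, Complex.exp (-((s * X : ℝ) : ℂ)) *
        HC e m (pp θ i j 0 b 1) (pp θ i j 0 b 2) (pp θ i j 0 b 3) s) B 0 ∧
      ‖A 0‖ ≤ C * X ^ (-θ 2 - 1) * lam i X ∧ ‖B‖ ≤ C * X ^ (-θ 2 - 1) * lam j X ∧
      ‖D‖ ≤ C * X ^ (-θ 2 - 1) * (lam i X * lam j X) := by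
  obtain ⟨C, hC, hHC⟩ := HC_bound h e he m
  have hρ := h.hρ
  have hρ1 := h.hρ1
  set K0 := 16 * C * Real.exp (ρ / 2) with hK0
  refine ⟨K0 * (8 / ρ) + K0 * (8 / ρ) ^ 2, by positivity, ?_⟩
  intro i j X hX
  have hX0 : 0 < X := lt_of_lt_of_le (Real.exp_pos 1) hX
  have hlog : 1 ≤ Real.log X := by
    rw [Real.le_log_iff_exp_le hX0]; exact hX
  have li := lam_ge i X hX
  have lj := lam_ge j X hX
  set η := ρ / (2 * Real.log X) with hη
  set r := ρ / (8 * Real.log X) with hr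
  have hr0 : 0 < r := by positivity
  have hηρ : η ≤ ρ / 2 := by
    rw [hη, div_le_div_iff₀ (by positivity) (by positivity)]; nlinarith
  have hη0 : 0 < η := by positivity
  have hrr : 4 * r = η := by rw [hr, hη]; field_simp; norm_num
  set K := 8 * C * Real.exp (ρ / 2) * X ^ (-θ 2) with hK
  have hKp : 0 < K := by have := Real.rpow_pos_of_pos hX0 (-θ 2); positivity
  have hR : ∀ i, ρ / (8 * lam i X) ≤ ρ / 8 := by
    intro i
    have := lam_ge i X hX
    rw [div_le_div_iff₀ (by positivity) (by positivity)]; nlinarith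
  have hRd : ∀ i, ρ / (8 * lam i X) * dl i 2 ≤ r * dl i 2 := by
    intro i
    unfold dl lam
    split_ifs <;> simp [hr]
  have hr8 : r ≤ ρ / 8 := by linarith
  have hnorm : ∀ (a b : ℝ), |a| < r → |b| < r → ∀ z w : ℂ, ‖z‖ ≤ ρ / (8 * lam i X) → ‖w‖ ≤ ρ / (8 * lam j X) →
      Nb (θ 1) (θ 2) (θ 3) ρ (pp θ i j (a + z) (b + w) 1) (pp θ i j (a + z) (b + w) 2) (pp θ i j (a + z) (b + w) 3) ∧
      θ 2 - η ≤ (pp θ i j (a + z) (b + w) 2).re := by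
    intro a b ha hb z w hz hw
    have na : ‖(a + z : ℂ)‖ ≤ |a| + ‖z‖ := by simpa using norm_add_le (a : ℂ) z
    have nb : ‖(b + w : ℂ)‖ ≤ |b| + ‖w‖ := by simpa using norm_add_le (b : ℂ) w
    constructor
    · apply pp_Nb
      linarith [hR i, hR j]
    · have h1 := pp_norm θ i j (a + z) (b + w) 2
      have h2 := (Complex.abs_re_le_norm _).trans h1
      have h3 : ‖(a + z : ℂ)‖ * dl i 2 ≤ 2 * r := by
        have := mul_le_mul_of_nonneg_right (na.trans (add_le_add ha.le hz)) (dl_nonneg i 2)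
        have h4 := hRd i
        have h5 := mul_le_mul_of_nonneg_left (dl_le i 2) hr0.le
        linarith
      have h3' : ‖(b + w : ℂ)‖ * dl j 2 ≤ 2 * r := by
        have := mul_le_mul_of_nonneg_right (nb.trans (add_le_add hb.le hw)) (dl_nonneg j 2)
        have h4 := hRd j
        have h5 := mul_le_mul_of_nonneg_left (dl_le j 2) hr0.le
        linarith
      rw [Complex.sub_re, Complex.ofReal_re] at h2
      have := (abs_le.1 h2).1
      linarith
  obtain ⟨vi, vb⟩ := vert_int K X δ hKp.le hX0
  obtain ⟨A, B, D, q1, q2, q3, q4, q5, q6⟩ := double_int (volume.restrict (Set.Ioc 0 δ))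
    (fun a b s => Complex.exp (-((s * X : ℝ) : ℂ)) * HC e m (pp θ i j a b 1) (pp θ i j a b 2) (pp θ i j a b 3) s)
    r hr0 (fun _ => ρ / (8 * lam i X)) (fun _ => ρ / (8 * lam j X)) (fun s => K * Real.exp (-(X / 2) * s))
    (ae_of_all _ fun _ => by positivity) (ae_of_all _ fun _ => by positivity)
    (by
      refine ae_of_all _ fun s a b ha hb z w hz hw => ?_
      have n := (hnorm a b ha hb z w hz hw).1
      have h1 := HC_contDiffAt h e m s n
      have h2 := ContDiffAt.comp (f := fun p : ℂ × ℂ => (pp θ i j p.1 p.2 1, pp θ i j p.1 p.2 2, pp θ i j p.1 p.2 3))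
        ((a + z, b + w) : ℂ × ℂ) h1 (pp_contDiff θ i j).contDiffAt
      exact contDiffAt_const.mul h2)
    (by
      filter_upwards [ae_restrict_mem measurableSet_Ioc] with s hs a b ha hb z w hz hw
      obtain ⟨n, hre⟩ := hnorm a b ha hb z w hz hw
      have hs1 : s ≤ 1 := hs.2.trans hδ1
      have b1 := hHC _ _ _ n s hs.1 hs1
      have b2 := Real.rpow_le_rpow_of_exponent_ge hs.1 hs1 hre
      have e1 : ‖Complex.exp (-((s * X : ℝ) : ℂ))‖ = Real.exp (-(s * X)) := by
        rw [Complex.norm_exp]; simp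
      have hsX : 0 ≤ s * X := mul_nonneg hs.1.le hX0.le
      have e2 : s ^ (θ 2 - η) = (s * X) ^ (θ 2 - η) * (X ^ (-θ 2) * X ^ η) := by
        rw [Real.mul_rpow hs.1.le hX0.le, mul_assoc, ← Real.rpow_add hX0, ← Real.rpow_add hX0]
        simp
      have e3 : X ^ η = Real.exp (ρ / 2) := by
        rw [Real.rpow_def_of_pos hX0, hη]; congr 1; field_simp
      have b3 := rpow_le_one_add_sq (s * X) (θ 2 - η) hsX (by linarith [h.hα]) (by linarith [h.hα2])
      have b4 := exp_half_bd (s * X) hsX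
      have e4 : Real.exp (-(s * X / 2)) = Real.exp (-(X / 2) * s) := by congr 1; ring
      rw [norm_mul, e1]
      have hXp := Real.rpow_pos_of_pos hX0 (-θ 2)
      have hep := Real.exp_pos (ρ / 2)
      calc Real.exp (-(s * X)) * ‖HC e m (pp θ i j (a + z) (b + w) 1) (pp θ i j (a + z) (b + w) 2) (pp θ i j (a + z) (b + w) 3) s‖
          ≤ Real.exp (-(s * X)) * (C * ((1 + (s * X) ^ 2) * (X ^ (-θ 2) * Real.exp (ρ / 2)))) := by
            refine mul_le_mul_of_nonneg_left ?_ (Real.exp_pos _).le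
            refine b1.trans (mul_le_mul_of_nonneg_left (b2.trans ?_) hC.le)
            rw [e2, e3]
            exact mul_le_mul_of_nonneg_right b3 (by positivity)
        _ = (Real.exp (-(s * X)) * (1 + (s * X) ^ 2)) * (C * (X ^ (-θ 2) * Real.exp (ρ / 2))) := by ring
        _ ≤ (8 * Real.exp (-(s * X / 2))) * (C * (X ^ (-θ 2) * Real.exp (ρ / 2))) :=
            mul_le_mul_of_nonneg_right b4 (by positivity)
        _ = K * Real.exp (-(X / 2) * s) := by rw [e4, hK]; ring)
    (by
      intro a b ha hb
      refine ContinuousOn.aestronglyMeasurable ?_ measurableSet_Ioc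
      exact ContinuousOn.mul (by fun_prop) (HC_meas _ _ _ _ _ _))
    vi (vi.div_const _) (vi.div_const _) ((vi.div_const _).div_const _)
  refine ⟨r, hr0, A, B, D, q1, q2, q3, ?_, ?_, ?_⟩
  all_goals
    have eX : X ^ (-θ 2 - 1) = X ^ (-θ 2) / X := by rw [Real.rpow_sub hX0, Real.rpow_one]
    have eK : 2 * K / X = K0 * X ^ (-θ 2 - 1) := by rw [eX, hK, hK0]; ring
    rw [eK] at vb
    have hXp : 0 < X ^ (-θ 2 - 1) := Real.rpow_pos_of_pos hX0 _
    have hK0p : 0 < K0 := by positivity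
  · refine q4.trans ?_
    rw [integral_div, div_le_iff₀ (by positivity)]
    refine vb.trans ?_
    have : (K0 * (8 / ρ) + K0 * (8 / ρ) ^ 2) * X ^ (-θ 2 - 1) * lam i X * (ρ / (8 * lam i X))
       = (K0 + K0 * (8 / ρ)) * X ^ (-θ 2 - 1) := by field_simp
    rw [this]
    have : 0 < K0 * (8 / ρ) * X ^ (-θ 2 - 1) := by positivity
    linarith
  · refine q5.trans ?_
    rw [integral_div, div_le_iff₀ (by positivity)]
    refine vb.trans ?_
    have : (K0 * (8 / ρ) + K0 * (8 / ρ) ^ 2) * X ^ (-θ 2 - 1) * lam j X * (ρ / (8 * lam j X))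
       = (K0 + K0 * (8 / ρ)) * X ^ (-θ 2 - 1) := by field_simp
    rw [this]
    have : 0 < K0 * (8 / ρ) * X ^ (-θ 2 - 1) := by positivity
    linarith
  · refine q6.trans ?_
    rw [integral_div, integral_div, div_div, div_le_iff₀ (by positivity)]
    refine vb.trans ?_
    have : (K0 * (8 / ρ) + K0 * (8 / ρ) ^ 2) * X ^ (-θ 2 - 1) * (lam i X * lam j X) * (ρ / (8 * lam i X) * (ρ / (8 * lam j X)))
       = (K0 * (ρ / 8) + K0) * X ^ (-θ 2 - 1) := by field_simp
    rw [this]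
    have : 0 < K0 * (ρ / 8) * X ^ (-θ 2 - 1) := by positivity
    linarith

lemma lip_one (f : ℂ → ℂ) (M : ℝ) (hM : 1 ≤ M) (hd : ∀ t : ℂ, ‖t‖ ≤ 2 * M → DifferentiableAt ℂ f t)
    (hb : ∀ t : ℂ, ‖t‖ ≤ 2 * M → ‖f t‖ ≤ M) : ‖f 1 - f 0‖ ≤ 1 := by
  have key : ∀ t ∈ Metric.closedBall (0:ℂ) 1, ‖deriv f t‖ ≤ 1 := by
    intro t ht
    have ht : ‖t‖ ≤ 1 := by simpa using ht
    have hn : ∀ z : ℂ, ‖z‖ ≤ M → ‖t + z‖ ≤ 2 * M := fun z hz => by linarith [norm_add_le t z]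
    have := cauchy_bd f t M M (by linarith) (fun z hz => hd _ (hn z hz)) (fun z hz => hb _ (hn z hz))
    rwa [div_self (by linarith)] at this
  have := Convex.norm_image_sub_le_of_norm_deriv_le (f := f) (C := 1) (s := Metric.closedBall (0:ℂ) 1) (x := 0) (y := 1)
    (fun t ht => hd t (by have : ‖t‖ ≤ 1 := by simpa using ht
                          linarith)) key (convex_closedBall _ _) (by simp) (by simp)
  simpa using this

lemma poly_decay_integrable {a c : ℝ} (ha : 0 < a) (hc : 0 < c) (k : ℕ) :
    IntegrableOn (fun u : ℝ => (2 + u) ^ k * Real.exp (-c * u ^ a)) (Set.Ioi 0) := by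
  have h1 := integrableOn_rpow_mul_exp_neg_mul_rpow (s := k) (p := a) (b := c)
    (by have : (0:ℝ) ≤ k := Nat.cast_nonneg k
        linarith) ha hc
  have h2 := decay_integrable ha hc (2 ^ (k - 1) * 2 ^ k)
  have h3 := h2.add (h1.const_mul (2 ^ (k - 1)))
  refine Integrable.mono' h3 ?_ ?_
  · refine ContinuousOn.aestronglyMeasurable ?_ measurableSet_Ioi
    refine ContinuousOn.mul (by fun_prop) ?_
    refine Real.continuous_exp.comp_continuousOn ?_
    refine continuousOn_const.mul ?_
    exact continuousOn_id.rpow_const (fun x hx => Or.inl (ne_of_gt hx))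
  · filter_upwards [ae_restrict_mem measurableSet_Ioi] with u hu
    have hu : 0 < u := hu
    rw [Real.norm_eq_abs, abs_of_nonneg (by positivity)]
    have h4 := add_pow_le (by norm_num : (0:ℝ) ≤ 2) hu.le k
    have h5 := Real.exp_pos (-c * u ^ a)
    simp only [Pi.add_apply, Real.rpow_natCast]
    calc _ ≤ (2 ^ (k - 1) * (2 ^ k + u ^ k)) * Real.exp (-c * u ^ a) := mul_le_mul_of_nonneg_right h4 h5.le
      _ = _ := by ring

lemma horiz (θ : Fin 4 → ℝ) {ρ Ck : ℝ} (h : Ctx (θ 1) (θ 2) (θ 3) ρ Ck) (e : ℝ) (he : e = 1 ∨ e = -1) (m : ℝ)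
    (δ : ℝ) (hδ : 0 < δ) (hδ1 : δ ≤ 1) :
    ∃ C > 0, ∃ r > 0, r ≤ ρ / 8 ∧ ∀ i j : Fin 4, ∀ X : ℝ, 0 ≤ X → ∃ A : ℝ → ℂ, ∃ B D : ℂ,
      (∀ b : ℝ, |b| < r → HasDerivAt (fun a : ℝ => ∫ t in Set.Ioi (0:ℝ),
        FC e m X (pp θ i j a b 1) (pp θ i j a b 2) (pp θ i j a b 3) (t + ((-δ : ℝ) : ℂ) * Complex.I)) (A b) 0) ∧
      HasDerivAt A D 0 ∧ HasDerivAt (fun b : ℝ => ∫ t in Set.Ioi (0:ℝ),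
        FC e m X (pp θ i j 0 b 1) (pp θ i j 0 b 2) (pp θ i j 0 b 3) (t + ((-δ : ℝ) : ℂ) * Complex.I)) B 0 ∧
      ‖A 0‖ ≤ C * Real.exp (-δ * X) ∧ ‖B‖ ≤ C * Real.exp (-δ * X) ∧
      ‖D‖ ≤ C * Real.exp (-δ * X) ∧
      ‖∫ t in Set.Ioi (0:ℝ),
        FC e m X (θ 1) (θ 2) (θ 3) (t + ((-δ : ℝ) : ℂ) * Complex.I)‖ ≤ C * Real.exp (-δ * X) := by
  obtain ⟨C, hC, c, hc, hdec⟩ := PsiC_decay h e he m δ hδ hδ1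
  obtain ⟨C2, hC2, hp⟩ := PsiC_poly h e he m
  have hρ := h.hρ
  have hρ1 := h.hρ1
  have ha : 0 < θ 2 - ρ := by linarith [h.hα]
  set M : ℝ → ℝ := fun u => C2 * (2 + u) ^ 3 with hM
  set E : ℝ → ℝ := fun u => Real.exp (-c * u ^ (θ 2 - ρ)) with hE
  set I0 := ∫ u in Set.Ioi (0:ℝ), (2 + u) ^ 0 * E u with hI0
  set I3 := ∫ u in Set.Ioi (0:ℝ), (2 + u) ^ 3 * E u with hI3
  set I6 := ∫ u in Set.Ioi (0:ℝ), (2 + u) ^ 6 * E u with hI6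
  have hIn : ∀ k : ℕ, 0 ≤ ∫ u in Set.Ioi (0:ℝ), (2 + u) ^ k * E u := by
    intro k
    refine setIntegral_nonneg measurableSet_Ioi fun u hu => ?_
    have hu : 0 < u := hu
    have := Real.exp_pos (-c * u ^ (θ 2 - ρ))
    positivity
  have i0 : 0 ≤ I0 := hIn 0
  have i3 : 0 ≤ I3 := hIn 3
  have i6 : 0 ≤ I6 := hIn 6
  set K := Real.exp 1 * C with hK
  have hK0 : 0 < K := by positivity
  set k1 := 16 * C2 / ρ with hk1
  have hk10 : 0 < k1 := by positivity
  refine ⟨1 + K * I0 + K * k1 * I3 + K * k1 ^ 2 * I6, by positivity, ρ / 8, by positivity, le_rfl, ?_⟩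
  intro i j X hX
  set L := Real.exp (-δ * X) with hL
  have hL0 : 0 < L := Real.exp_pos _
  set G : ℝ → ℝ := fun u => K * L * E u with hG
  set R : ℝ → ℝ := fun u => ρ / (16 * M u) with hR
  have hM1 : ∀ u, 0 < u → 1 ≤ M u := by
    intro u hu
    have : (1:ℝ) ≤ (2 + u) ^ 3 := one_le_pow₀ (by linarith)
    simp only [hM]; nlinarith
  have hR0 : ∀ u, 0 < u → 0 < R u := by
    intro u hu
    have := hM1 u hu
    simp only [hR]; positivity
  have hz0 : ∀ u : ℝ, 0 < u → (u + ((-δ : ℝ) : ℂ) * Complex.I) ≠ 0 ∧ 0 ≤ (u + ((-δ : ℝ) : ℂ) * Complex.I).re ∧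
      ‖(u + ((-δ : ℝ) : ℂ) * Complex.I)‖ ≤ u + 1 := by
    intro u hu
    refine ⟨?_, by simp; exact hu.le, ?_⟩
    · intro hh
      have := congrArg Complex.re hh
      simp at this; linarith
    · refine (norm_add_le _ _).trans ?_
      rw [norm_mul, Complex.norm_real, Complex.norm_real, Complex.norm_I, Real.norm_eq_abs, Real.norm_eq_abs,
        abs_of_pos hu, abs_neg, abs_of_pos hδ]
      linarith
  have hNb : ∀ u, 0 < u → ∀ a b : ℝ, |a| < ρ / 8 → |b| < ρ / 8 → ∀ z w : ℂ, ‖z‖ ≤ R u → ‖w‖ ≤ R u →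
      ∀ t : ℂ, ‖t‖ ≤ 2 * M u → Nb (θ 1) (θ 2) (θ 3) ρ (pp θ i j (a + t * z) (b + t * w) 1)
        (pp θ i j (a + t * z) (b + t * w) 2) (pp θ i j (a + t * z) (b + t * w) 3) := by
    intro u hu a b ha hb z w hz hw t ht
    have hM' := hM1 u hu
    apply pp_Nb
    have key : ∀ z : ℂ, ‖z‖ ≤ R u → ‖t * z‖ ≤ ρ / 8 := by
      intro z hz
      rw [norm_mul]
      calc _ ≤ (2 * M u) * R u := mul_le_mul ht hz (norm_nonneg _) (by positivity)
        _ = ρ / 8 := by simp only [hR]; field_simp; norm_num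
    have na : ‖(a + t * z : ℂ)‖ ≤ |a| + ‖t * z‖ := by simpa using norm_add_le (a : ℂ) (t * z)
    have nb : ‖(b + t * w : ℂ)‖ ≤ |b| + ‖t * w‖ := by simpa using norm_add_le (b : ℂ) (t * w)
    linarith [key z hz, key w hw]
  have hcd : ∀ (Z a b : ℂ), Nb (θ 1) (θ 2) (θ 3) ρ (pp θ i j a b 1) (pp θ i j a b 2) (pp θ i j a b 3) →
      ContDiffAt ℂ 2 (fun p : ℂ × ℂ => PsiC e m (pp θ i j p.1 p.2 1) (pp θ i j p.1 p.2 2) (pp θ i j p.1 p.2 3) Z) (a, b) := by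
    intro Z a b n
    exact ContDiffAt.comp (f := fun p : ℂ × ℂ => (pp θ i j p.1 p.2 1, pp θ i j p.1 p.2 2, pp θ i j p.1 p.2 3))
        ((a, b) : ℂ × ℂ) (PsiC_contDiffAt h e m Z n) (pp_contDiff θ i j).contDiffAt
  have hbound : ∀ u, 0 < u → ∀ a b : ℝ, |a| < ρ / 8 → |b| < ρ / 8 → ∀ z w : ℂ, ‖z‖ ≤ R u → ‖w‖ ≤ R u →
      ‖FC e m X (pp θ i j (a + z) (b + w) 1) (pp θ i j (a + z) (b + w) 2) (pp θ i j (a + z) (b + w) 3)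
        (u + ((-δ : ℝ) : ℂ) * Complex.I)‖ ≤ G u := by
    intro u hu a b ha hb z w hz hw
    have hM' := hM1 u hu
    obtain ⟨z1, z2, z3⟩ := hz0 u hu
    set Z := (u + ((-δ : ℝ) : ℂ) * Complex.I) with hZ
    have hl := lip_one (fun t => PsiC e m (pp θ i j (a + t * z) (b + t * w) 1)
        (pp θ i j (a + t * z) (b + t * w) 2) (pp θ i j (a + t * z) (b + t * w) 3) Z) (M u) hM'
      (by
        intro t ht
        have := (hcd Z _ _ (hNb u hu a b ha hb z w hz hw t ht)).differentiableAt (by norm_num)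
        exact this.comp t (f := fun t : ℂ => ((a + t * z, b + t * w) : ℂ × ℂ)) (by fun_prop))
      (by
        intro t ht
        refine (hp _ _ _ (hNb u hu a b ha hb z w hz hw t ht) Z z1 z2).trans ?_
        simp only [hM]
        have : 1 + ‖Z‖ ≤ 2 + u := by linarith
        gcongr)
    simp only [one_mul, zero_mul, add_zero] at hl
    have n0 := hNb u hu a b ha hb z w hz hw 0 (by simp; linarith)
    simp only [zero_mul, add_zero, pp_real] at n0
    have hd0 := hdec _ _ _ n0 u hu (-δ) le_rfl (by linarith)
    simp only [← pp_real] at hd0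
    rw [← hZ, Complex.norm_exp] at hd0
    rw [FC, norm_mul, hZ, FC_exp_norm, ← hZ, Complex.norm_exp]
    have hre := (Complex.re_le_norm _).trans hl
    rw [Complex.sub_re] at hre
    calc _ ≤ Real.exp (-δ * X) * (Real.exp 1 * (C * Real.exp (-c * u ^ (θ 2 - ρ)))) := by
          refine mul_le_mul_of_nonneg_left ?_ (Real.exp_pos _).le
          refine le_trans ?_ (mul_le_mul_of_nonneg_left hd0 (Real.exp_pos 1).le)
          rw [← Real.exp_add]
          apply Real.exp_le_exp.2
          linarith
      _ = G u := by simp only [hG, hK, hL, hE]; ring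
  have int0 : IntegrableOn (fun u => (2 + u) ^ 0 * E u) (Set.Ioi 0) := poly_decay_integrable ha hc 0
  have int3 : IntegrableOn (fun u => (2 + u) ^ 3 * E u) (Set.Ioi 0) := poly_decay_integrable ha hc 3
  have int6 : IntegrableOn (fun u => (2 + u) ^ 6 * E u) (Set.Ioi 0) := poly_decay_integrable ha hc 6
  have eq0 : G = fun u => K * L * ((2 + u) ^ 0 * E u) := by ext u; simp [hG]
  have eq3 : (fun u => G u / R u) = fun u => K * L * k1 * ((2 + u) ^ 3 * E u) := by
    ext u; simp only [hG, hR, hM, hk1]; rw [div_div_eq_mul_div]; field_simp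
  have eq6 : (fun u => G u / R u / R u) = fun u => K * L * k1 ^ 2 * ((2 + u) ^ 6 * E u) := by
    ext u; simp only [hG, hR, hM, hk1]; rw [div_div_eq_mul_div, div_div_eq_mul_div]; field_simp
  have iG : IntegrableOn G (Set.Ioi 0) := by rw [eq0]; exact int0.const_mul _
  have iG3 : IntegrableOn (fun u => G u / R u) (Set.Ioi 0) := by rw [eq3]; exact int3.const_mul _
  have iG6 : IntegrableOn (fun u => G u / R u / R u) (Set.Ioi 0) := by rw [eq6]; exact int6.const_mul _
  have v0 : ∫ u in Set.Ioi 0, G u = K * L * I0 := by rw [eq0, integral_const_mul]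
  have v3 : ∫ u in Set.Ioi 0, G u / R u = K * L * k1 * I3 := by rw [eq3, integral_const_mul]
  have v6 : ∫ u in Set.Ioi 0, G u / R u / R u = K * L * k1 ^ 2 * I6 := by rw [eq6, integral_const_mul]
  obtain ⟨A, B, D, q1, q2, q3, q4, q5, q6⟩ := double_int (volume.restrict (Set.Ioi (0:ℝ)))
    (fun a b u => FC e m X (pp θ i j a b 1) (pp θ i j a b 2) (pp θ i j a b 3) (u + ((-δ : ℝ) : ℂ) * Complex.I))
    (ρ / 8) (by positivity) R R G
    (by filter_upwards [ae_restrict_mem measurableSet_Ioi] with u hu using hR0 u hu)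
    (by filter_upwards [ae_restrict_mem measurableSet_Ioi] with u hu using hR0 u hu)
    (by
      filter_upwards [ae_restrict_mem measurableSet_Ioi] with u hu a b ha hb z w hz hw
      have n := hNb u hu a b ha hb z w hz hw 1 (by simp; linarith [hM1 u hu])
      simp only [one_mul] at n
      have := (hcd (u + ((-δ : ℝ) : ℂ) * Complex.I) _ _ n).cexp
      unfold FC
      exact contDiffAt_const.mul this)
    (by
      filter_upwards [ae_restrict_mem measurableSet_Ioi] with u hu a b ha hb z w hz hw
      exact hbound u hu a b ha hb z w hz hw)
    (by
      intro a b ha hb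
      refine ContinuousOn.aestronglyMeasurable ?_ measurableSet_Ioi
      intro u hu
      obtain ⟨z1, z2, z3⟩ := hz0 u hu
      have := (FC_differentiableAt e m X (pp θ i j a b 1) (pp θ i j a b 2) (pp θ i j a b 3) _ z1 z2).continuousAt
      exact (ContinuousAt.comp (f := fun t : ℝ => (t + ((-δ : ℝ) : ℂ) * Complex.I)) this (by fun_prop)).continuousWithinAt)
    iG iG3 iG3 iG6
  rw [v3] at q4 q5
  rw [v6] at q6
  have w0 : 0 ≤ K * I0 * L := by positivity
  have w3 : 0 ≤ K * k1 * I3 * L := by positivity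
  have w6 : 0 ≤ K * k1 ^ 2 * I6 * L := by positivity
  refine ⟨A, B, D, q1, q2, q3, by linarith, by linarith, by linarith, ?_⟩
  have : ‖∫ t in Set.Ioi (0:ℝ), FC e m X (θ 1) (θ 2) (θ 3) (t + ((-δ : ℝ) : ℂ) * Complex.I)‖ ≤ ∫ u in Set.Ioi 0, G u := by
    refine norm_integral_le_of_norm_le iG ?_
    filter_upwards [ae_restrict_mem measurableSet_Ioi] with u hu
    have := hbound u hu 0 0 (by simp; positivity) (by simp; positivity) 0 0 (by simpa using (hR0 u hu).le) (by simpa using (hR0 u hu).le)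
    simpa [pp] using this
  rw [v0] at this
  linarith

lemma upd_eq (θ : Fin 4 → ℝ) (i j : Fin 4) (a b : ℝ) :
    Function.update (Function.update θ j (θ j + b)) i ((Function.update θ j (θ j + b)) i + a) =
      fun k => θ k + a * dl i k + b * dl j k := by
  ext k
  by_cases hk : k = i
  · subst hk
    by_cases hj : k = j
    · subst hj; simp [dl]; ring
    · have : ¬ j = k := fun h => hj h.symm
      simp [dl, hj, this]
  · have hki : ¬ i = k := fun h => hk h.symm
    by_cases hj : k = j
    · subst hj; simp [dl, hk, hki]
    · have : ¬ j = k := fun h => hj h.symm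
      simp [dl, hj, this, hk, hki]

lemma upd_eq0 (θ : Fin 4 → ℝ) (i j : Fin 4) (b : ℝ) :
    Function.update θ j (θ j + b) = fun k => θ k + 0 * dl i k + b * dl j k := by
  have := upd_eq θ i j 0 b
  rw [add_zero, Function.update_eq_self] at this
  exact this

lemma theta_int_of_Nb {θ : Fin 4 → ℝ} {ρ Ck : ℝ} (h : Ctx (θ 1) (θ 2) (θ 3) ρ Ck) (θ' : Fin 4 → ℝ)
    (n : Nb (θ 1) (θ 2) (θ 3) ρ (θ' 1) (θ' 2) (θ' 3)) : θ' ∈ ThetaInt := by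
  obtain ⟨r1, r2, r3, r4, r5, r6⟩ := Nb_real h n
  exact ⟨r1, ⟨r4, r5⟩, abs_lt.1 r6⟩

lemma lower (θ : Fin 4 → ℝ) {ρ Ck : ℝ} (h : Ctx (θ 1) (θ 2) (θ 3) ρ Ck) (e : ℝ) (he : e = 1 ∨ e = -1) (m : ℝ) :
    ∃ δ > 0, δ ≤ 1 ∧ ∃ c > 0, ∀ X : ℝ, 1 / δ ≤ X → c * X ^ (-θ 2 - 1) ≤
      (∫ s in Set.Ioc 0 δ, Complex.exp (-((s * X : ℝ) : ℂ)) * HC e m (θ 1) (θ 2) (θ 3) s).re := by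
  obtain ⟨δ, hδ, hδ1, c, hc, hlow⟩ := HC_lower h e he m
  obtain ⟨C, hC, hHC⟩ := HC_bound h e he m
  have n : Nb (θ 1) (θ 2) (θ 3) ρ (θ 1) (θ 2) (θ 3) := by simp [Nb, h.hρ.le]
  have hα : 0 < θ 2 := by linarith [h.hα, h.hρ]
  refine ⟨δ, hδ, hδ1, c * Real.exp (-1) * (1 / 2) ^ (θ 2) * (1 / 2), by positivity, ?_⟩
  intro X hX
  have hX0 : 0 < X := lt_of_lt_of_le (by positivity) hX
  have hXδ : 1 / X ≤ δ := by rw [div_le_comm₀ hX0 hδ]; exact hX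
  have hI : IntegrableOn (fun s : ℝ => Complex.exp (-((s * X : ℝ) : ℂ)) * HC e m (θ 1) (θ 2) (θ 3) s) (Set.Ioc 0 δ) := by
    refine Integrable.mono' (integrableOn_const (C := C) (by simp : volume (Set.Ioc 0 δ) ≠ ⊤)) ?_ ?_
    · refine ContinuousOn.aestronglyMeasurable ?_ measurableSet_Ioc
      exact ContinuousOn.mul (by fun_prop) (HC_meas _ _ _ _ _ _)
    · filter_upwards [ae_restrict_mem measurableSet_Ioc] with s hs
      rw [norm_mul, Complex.norm_exp]
      have h1 := hHC _ _ _ n s hs.1 (hs.2.trans hδ1)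
      rw [Complex.ofReal_re] at h1
      have h2 := Real.rpow_le_one hs.1.le (hs.2.trans hδ1) hα.le
      have h3 : Real.exp ((-((s * X : ℝ) : ℂ)).re) ≤ 1 := by
        apply Real.exp_le_one_iff.2
        have := mul_nonneg hs.1.le hX0.le
        simp only [Complex.neg_re, Complex.ofReal_re]; linarith
      calc _ ≤ 1 * (C * 1) := mul_le_mul h3 (h1.trans (mul_le_mul_of_nonneg_left h2 hC.le)) (norm_nonneg _) (by norm_num)
        _ = C := by ring
  have e1 : (∫ s in Set.Ioc 0 δ, Complex.exp (-((s * X : ℝ) : ℂ)) * HC e m (θ 1) (θ 2) (θ 3) s).re =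
      ∫ s in Set.Ioc 0 δ, Real.exp (-(s * X)) * (HC e m (θ 1) (θ 2) (θ 3) s).re := by
    have : ∀ s : ℝ, (Complex.exp (-((s * X : ℝ) : ℂ)) * HC e m (θ 1) (θ 2) (θ 3) s).re =
      Real.exp (-(s * X)) * (HC e m (θ 1) (θ 2) (θ 3) s).re := by
      intro s
      rw [← Complex.ofReal_neg, ← Complex.ofReal_exp, Complex.re_ofReal_mul]
    simp only [← this]
    simpa using (integral_re hI).symm
  have hI2 : IntegrableOn (fun s : ℝ => Real.exp (-(s * X)) * (HC e m (θ 1) (θ 2) (θ 3) s).re) (Set.Ioc 0 δ) := by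
    have : IntegrableOn (fun s : ℝ => (Complex.exp (-((s * X : ℝ) : ℂ)) * HC e m (θ 1) (θ 2) (θ 3) s).re) (Set.Ioc 0 δ) := hI.re
    refine this.congr_fun ?_ measurableSet_Ioc
    intro s hs
    simp only
    rw [← Complex.ofReal_neg, ← Complex.ofReal_exp, Complex.re_ofReal_mul]
  rw [e1]
  have hsub : Set.Ioc (1 / (2 * X)) (1 / X) ⊆ Set.Ioc 0 δ :=
    Set.Ioc_subset_Ioc (by positivity) hXδ
  have hmono : ∫ s in Set.Ioc (1 / (2 * X)) (1 / X), Real.exp (-(s * X)) * (HC e m (θ 1) (θ 2) (θ 3) s).re ≤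
      ∫ s in Set.Ioc 0 δ, Real.exp (-(s * X)) * (HC e m (θ 1) (θ 2) (θ 3) s).re := by
    refine setIntegral_mono_set hI2 ?_ (ae_of_all _ hsub)
    filter_upwards [ae_restrict_mem measurableSet_Ioc] with s hs
    have := hlow s hs.1 hs.2
    have h2 : 0 ≤ c * s ^ θ 2 := mul_nonneg hc.le (Real.rpow_nonneg hs.1.le _)
    exact mul_nonneg (Real.exp_pos _).le (h2.trans this)
  refine le_trans ?_ hmono
  set Q := Real.exp (-1) * (c * (1 / (2 * X)) ^ θ 2) with hQ
  have hconst : ∫ s in Set.Ioc (1 / (2 * X)) (1 / X), Q = (1 / X - 1 / (2 * X)) * Q := by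
    rw [setIntegral_const]
    have : 1 / (2 * X) ≤ 1 / X := by
      apply one_div_le_one_div_of_le hX0; linarith
    rw [Real.volume_real_Ioc_of_le this, smul_eq_mul]
  have hm2 : ∫ s in Set.Ioc (1 / (2 * X)) (1 / X), Q ≤
      ∫ s in Set.Ioc (1 / (2 * X)) (1 / X), Real.exp (-(s * X)) * (HC e m (θ 1) (θ 2) (θ 3) s).re := by
    refine setIntegral_mono_on (integrableOn_const (by simp)) (hI2.mono_set hsub) measurableSet_Ioc ?_
    intro s hs
    have hs0 := (hsub hs).1
    have h1 := hlow s hs0 (hsub hs).2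
    have h2 : (1 / (2 * X)) ^ θ 2 ≤ s ^ θ 2 := Real.rpow_le_rpow (by positivity) hs.1.le hα.le
    have h3 : s * X ≤ 1 := by
      have := mul_le_mul_of_nonneg_right hs.2 hX0.le
      rwa [one_div, inv_mul_cancel₀ hX0.ne'] at this
    refine mul_le_mul (Real.exp_le_exp.2 (by linarith)) (le_trans (mul_le_mul_of_nonneg_left h2 hc.le) h1) (by positivity) (Real.exp_pos _).le
  rw [hconst] at hm2
  refine le_trans (le_of_eq ?_) hm2
  have e5 : (1 / (2 * X)) ^ θ 2 = (1 / 2) ^ θ 2 * X ^ (-θ 2) := by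
    rw [show 1 / (2 * X) = (1 / 2) * X⁻¹ by field_simp, Real.mul_rpow (by norm_num) (by positivity),
      Real.inv_rpow hX0.le, Real.rpow_neg hX0.le]
  rw [hQ, e5, Real.rpow_sub hX0, Real.rpow_one]
  field_simp
  norm_num

lemma ratio_bd {C c y l1 l2 P D Φ B : ℝ} (hC : 0 < C) (hc : 0 < c) (hy : 0 < y) (h1 : 1 ≤ l1) (h2 : 1 ≤ l2)
    (hP : |P| ≤ C * y * l1) (hB : |B| ≤ C * y * l2) (hD : |D| ≤ C * y * (l1 * l2)) (hΦ : c * y ≤ Φ) :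
    |(D * Φ - P * B) / Φ ^ 2| ≤ (C / c + C ^ 2 / c ^ 2) * (l1 * l2) := by
  have hcy : 0 < c * y := mul_pos hc hy
  have hΦ0 : 0 < Φ := lt_of_lt_of_le hcy hΦ
  have e1 : (D * Φ - P * B) / Φ ^ 2 = D / Φ - (P / Φ) * (B / Φ) := by field_simp
  rw [e1]
  have key : ∀ Z l : ℝ, |Z| ≤ C * y * l → |Z / Φ| ≤ C / c * l := by
    intro Z l hZ
    rw [abs_div, abs_of_pos hΦ0]
    have h3 : |Z| / Φ ≤ |Z| / (c * y) := div_le_div_of_nonneg_left (abs_nonneg _) hcy hΦ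
    refine h3.trans ?_
    rw [div_le_iff₀ hcy]
    refine hZ.trans (le_of_eq ?_)
    field_simp
  have k1 := key _ _ hP
  have k2 := key _ _ hB
  have k3 := key _ _ hD
  calc _ ≤ |D / Φ| + |P / Φ * (B / Φ)| := abs_sub _ _
    _ ≤ C / c * (l1 * l2) + (C / c * l1) * (C / c * l2) := by
      rw [abs_mul]
      refine add_le_add k3 (mul_le_mul k1 k2 (abs_nonneg _) ((abs_nonneg _).trans k1))
    _ = _ := by field_simp

lemma side (θ : Fin 4 → ℝ) (hθ : θ ∈ ThetaInt) (e : ℝ) (he : e = 1 ∨ e = -1) :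
    ∃ C > 0, ∃ M > 0, ∀ i j : Fin 4, i ≠ 0 → j ≠ 0 → ∀ X : ℝ, M ≤ X →
      |ellPP i j θ (e * X)| ≤ C * (lam i X * lam j X) := by
  obtain ⟨ρ, Ck, h⟩ := ctx_exists (θ 1) (θ 2) (θ 3) hθ.1 hθ.2.1.1 hθ.2.1.2 (abs_lt.2 hθ.2.2)
  have hρ := h.hρ
  obtain ⟨δ, hδ, hδ1, c, hc, hlow⟩ := lower θ h e he (θ 0)
  obtain ⟨Cv, hCv, hv⟩ := vert θ h e he (θ 0) δ hδ1
  obtain ⟨Ch, hCh, rh, hrh, hrh8, hh⟩ := horiz θ h e he (θ 0) δ hδ hδ1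
  have hev := (tendsto_rpow_mul_exp_neg_mul_atTop_nhds_zero (θ 2 + 1) δ hδ).const_mul Ch
  rw [mul_zero] at hev
  have hc2 : 0 < min (c / 2) 1 := lt_min (by positivity) one_pos
  obtain ⟨X1, hX1⟩ := eventually_atTop.1 (hev.eventually (gt_mem_nhds hc2))
  have hπ := Real.pi_pos
  refine ⟨((Cv + 1) / Real.pi) / (c / 2 / Real.pi) + ((Cv + 1) / Real.pi) ^ 2 / (c / 2 / Real.pi) ^ 2, by positivity,
    max (max (Real.exp 1) (1 / δ)) X1, lt_max_of_lt_left (lt_max_of_lt_left (Real.exp_pos 1)), ?_⟩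
  intro i j hi hj X hX
  have hXe : Real.exp 1 ≤ X := (le_max_left _ _).trans ((le_max_left _ _).trans hX)
  have hXδ : 1 / δ ≤ X := (le_max_right _ _).trans ((le_max_left _ _).trans hX)
  have hXX : X1 ≤ X := (le_max_right _ _).trans hX
  have hX0 : 0 < X := lt_of_lt_of_le (Real.exp_pos 1) hXe
  have li := lam_ge i X hXe
  have lj := lam_ge j X hXe
  set y := X ^ (-θ 2 - 1) with hy
  have hy0 : 0 < y := Real.rpow_pos_of_pos hX0 _
  have hsmall : Ch * Real.exp (-δ * X) ≤ min (c / 2) 1 * y := by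
    have h1 := (hX1 X hXX).le
    have h2 : X ^ (θ 2 + 1) * y = 1 := by rw [hy, ← Real.rpow_add hX0]; simp
    have h3 := mul_le_mul_of_nonneg_right h1 hy0.le
    calc _ = Ch * (X ^ (θ 2 + 1) * Real.exp (-δ * X)) * y := by linear_combination (-Ch * Real.exp (-δ * X)) * h2
      _ ≤ _ := h3
  have hs1 : Ch * Real.exp (-δ * X) ≤ c / 2 * y := hsmall.trans (mul_le_mul_of_nonneg_right (min_le_left _ _) hy0.le)
  have hs2 : Ch * Real.exp (-δ * X) ≤ y := by
    have := hsmall.trans (mul_le_mul_of_nonneg_right (min_le_right _ _) hy0.le)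
    linarith
  obtain ⟨rv, hrv, Av, Bv, Dv, v1, v2, v3, v4, v5, v6⟩ := hv i j X hXe
  obtain ⟨Ah, Bh, Dh, w1, w2, w3, w4, w5, w6, w7⟩ := hh i j X hX0.le
  have hi0 : dl i 0 = 0 := by simp [dl, hi]
  have hj0 : dl j 0 = 0 := by simp [dl, hj]
  set J : ℝ → ℝ → ℂ := fun a b => (∫ s in Set.Ioc 0 δ, Complex.exp (-((s * X : ℝ) : ℂ)) *
        HC e (θ 0) (pp θ i j a b 1) (pp θ i j a b 2) (pp θ i j a b 3) s) +
      ∫ t in Set.Ioi (0:ℝ),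
        FC e (θ 0) X (pp θ i j a b 1) (pp θ i j a b 2) (pp θ i j a b 3) (t + ((-δ : ℝ) : ℂ) * Complex.I) with hJ
  have hfM : ∀ a b : ℝ, |a| < ρ / 8 → |b| < ρ / 8 →
      fM (fun k => θ k + a * dl i k + b * dl j k) (e * X) = 1 / Real.pi * (J a b).re := by
    intro a b ha hb
    have n : Nb (θ 1) (θ 2) (θ 3) ρ (pp θ i j a b 1) (pp θ i j a b 2) (pp θ i j a b 3) := by
      apply pp_Nb
      simp only [Complex.norm_real, Real.norm_eq_abs]
      linarith
    simp only [pp_real] at n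
    have := fM_eq h e he X hX0.le (fun k => θ k + a * dl i k + b * dl j k)
      (theta_int_of_Nb h (fun k => θ k + a * dl i k + b * dl j k) n) n δ hδ hδ1
    rw [this]
    simp only [hJ, pp_real, hi0, hj0, mul_zero, add_zero]
  have hre : ∀ (f : ℝ → ℂ) (f' : ℂ), HasDerivAt f f' 0 →
      HasDerivAt (fun t => 1 / Real.pi * (f t).re) (1 / Real.pi * f'.re) 0 := by
    intro f f' hf
    have := (Complex.reCLM.hasFDerivAt (x := f 0)).comp_hasDerivAt (0:ℝ) hf
    exact HasDerivAt.const_mul _ this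
  set r := min rv rh with hr
  have hr0 : 0 < r := lt_min hrv hrh
  have hr8 : r ≤ ρ / 8 := (min_le_right _ _).trans hrh8
  have hnear : ∀ᶠ b : ℝ in nhds 0, |b| < r := by
    filter_upwards [Metric.ball_mem_nhds (0:ℝ) hr0] with b hb
    simpa using hb
  have hfP : ∀ b : ℝ, |b| < r → fP i (Function.update θ j (θ j + b)) (e * X) = 1 / Real.pi * (Av b + Ah b).re := by
    intro b hb
    unfold fP
    rw [show deriv (fun s => fM (Function.update (Function.update θ j (θ j + b)) i s) (e * X))
        (Function.update θ j (θ j + b) i) = deriv (fun a => fM (Function.update (Function.update θ j (θ j + b)) i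
          (Function.update θ j (θ j + b) i + a)) (e * X)) 0 by
        rw [deriv_comp_const_add (f := fun s => fM (Function.update (Function.update θ j (θ j + b)) i s) (e * X)), add_zero]]
    refine HasDerivAt.deriv ?_
    have h1 := hre _ _ ((v1 b (hb.trans_le (min_le_left _ _))).add (w1 b (hb.trans_le (min_le_right _ _))))
    refine h1.congr_of_eventuallyEq ?_
    filter_upwards [hnear] with a ha
    rw [upd_eq, hfM a b (ha.trans_le hr8) (hb.trans_le hr8)]
    rfl
  have hf0 : ∀ b : ℝ, |b| < r → fM (Function.update θ j (θ j + b)) (e * X) = 1 / Real.pi * (J 0 b).re := by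
    intro b hb
    rw [upd_eq0 θ i j b, hfM 0 b (by simpa using (by positivity : 0 < ρ / 8)) (hb.trans_le hr8)]
  have hPd := hre _ _ (v2.add w2)
  have hFd := hre _ _ (v3.add w3)
  have hJ0 : c / 2 / Real.pi * y ≤ 1 / Real.pi * (J 0 0).re := by
    have h1 := hlow X hXδ
    have h2 := (abs_le.1 ((Complex.abs_re_le_norm _).trans w7)).1
    have h3 : (J 0 0).re = (∫ s in Set.Ioc 0 δ, Complex.exp (-((s * X : ℝ) : ℂ)) * HC e (θ 0) (θ 1) (θ 2) (θ 3) s).re +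
       (∫ t in Set.Ioi (0:ℝ), FC e (θ 0) X (θ 1) (θ 2) (θ 3) (t + ((-δ : ℝ) : ℂ) * Complex.I)).re := by
      rw [← Complex.add_re]; simp only [hJ, pp, Complex.ofReal_zero, zero_mul, add_zero]
    have h4 : c / 2 * y ≤ (J 0 0).re := by rw [h3]; linarith
    calc c / 2 / Real.pi * y = 1 / Real.pi * (c / 2 * y) := by ring
      _ ≤ _ := mul_le_mul_of_nonneg_left h4 (by positivity)
  have hΦd : HasDerivAt (fun b : ℝ => 1 / Real.pi * (J 0 b).re) (1 / Real.pi * (Bv + Bh).re) 0 := by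
    refine hFd.congr_of_eventuallyEq (Eventually.of_forall fun b => ?_)
    simp [hJ]
  have hell : ellPP i j θ (e * X) = ((1 / Real.pi * (Dv + Dh).re) * (1 / Real.pi * (J 0 0).re) -
      (1 / Real.pi * (Av 0 + Ah 0).re) * (1 / Real.pi * (Bv + Bh).re)) / (1 / Real.pi * (J 0 0).re) ^ 2 := by
    unfold ellPP ellP
    rw [show deriv (fun s => fP i (Function.update θ j s) (e * X) / fM (Function.update θ j s) (e * X)) (θ j) =
       deriv (fun b => fP i (Function.update θ j (θ j + b)) (e * X) / fM (Function.update θ j (θ j + b)) (e * X)) 0 by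
        rw [deriv_comp_const_add (f := fun s => fP i (Function.update θ j s) (e * X) / fM (Function.update θ j s) (e * X)), add_zero]]
    refine HasDerivAt.deriv ?_
    have hne : 1 / Real.pi * (J 0 0).re ≠ 0 := ne_of_gt (lt_of_lt_of_le (by positivity) hJ0)
    refine (hPd.fun_div hΦd hne).congr_of_eventuallyEq ?_
    filter_upwards [hnear] with b hb
    rw [hfP b hb, hf0 b hb]
    rfl
  rw [hell]
  have hbd : ∀ (p q : ℂ) (l : ℝ), 1 ≤ l → ‖p‖ ≤ Cv * y * l → ‖q‖ ≤ Ch * Real.exp (-δ * X) →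
      |1 / Real.pi * (p + q).re| ≤ (Cv + 1) / Real.pi * y * l := by
    intro p q l hl hp hq
    rw [abs_mul, abs_of_pos (by positivity : 0 < 1 / Real.pi)]
    have h1 := (Complex.abs_re_le_norm (p + q)).trans (norm_add_le p q)
    have h2 : |(p + q).re| ≤ (Cv + 1) * y * l := by nlinarith
    calc _ ≤ 1 / Real.pi * ((Cv + 1) * y * l) := mul_le_mul_of_nonneg_left h2 (by positivity)
      _ = _ := by ring
  have hlij : 1 ≤ lam i X * lam j X := by nlinarith
  exact ratio_bd (by positivity) (by positivity) hy0 li lj (hbd _ _ _ li v4 w4) (hbd _ _ _ lj v5 w5)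
    (hbd _ _ _ hlij v6 w6) hJ0

/-- Tail behavior of the second-order score derivatives:
`ℓ_{σσ} = O(1)`, `ℓ_{σα} = O(log|x|)`, `ℓ_{σβ} = O(1)`,
`ℓ_{αα} = O(log²|x|)`, `ℓ_{αβ} = O(log|x|)`, `ℓ_{ββ} = O(1)`. -/
theorem second_score_tail_bounds (θ : Fin 4 → ℝ) (hθ : θ ∈ ThetaInt) :
    IsBigOAtInfty (ellPP 1 1 θ) (fun _ => 1) ∧
    IsBigOAtInfty (ellPP 1 2 θ) (fun x => Real.log |x|) ∧
    IsBigOAtInfty (ellPP 1 3 θ) (fun _ => 1) ∧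
    IsBigOAtInfty (ellPP 2 2 θ) (fun x => (Real.log |x|) ^ 2) ∧
    IsBigOAtInfty (ellPP 2 3 θ) (fun x => Real.log |x|) ∧
    IsBigOAtInfty (ellPP 3 3 θ) (fun _ => 1) := by
  obtain ⟨C1, hC1, M1, hM1, h1⟩ := side θ hθ 1 (Or.inl rfl)
  obtain ⟨C2, hC2, M2, hM2, h2⟩ := side θ hθ (-1) (Or.inr rfl)
  have key : ∀ i j : Fin 4, i ≠ 0 → j ≠ 0 → ∀ x : ℝ, max (max M1 M2) (Real.exp 1) ≤ |x| →
      |ellPP i j θ x| ≤ (C1 + C2) * (lam i |x| * lam j |x|) := by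
    intro i j hi hj x hx
    have a1 : M1 ≤ |x| := (le_max_left _ _).trans ((le_max_left _ _).trans hx)
    have a2 : M2 ≤ |x| := (le_max_right _ _).trans ((le_max_left _ _).trans hx)
    have a3 : Real.exp 1 ≤ |x| := (le_max_right _ _).trans hx
    have li := lam_ge i |x| a3
    have lj := lam_ge j |x| a3
    have hl : 0 < lam i |x| * lam j |x| := by positivity
    rcases le_total 0 x with hx0 | hx0
    · have := h1 i j hi hj |x| a1
      rw [one_mul, abs_of_nonneg hx0] at this
      rw [abs_of_nonneg hx0] at hl ⊢
      nlinarith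
    · have := h2 i j hi hj |x| a2
      rw [abs_of_nonpos hx0, neg_one_mul, neg_neg] at this
      rw [abs_of_nonpos hx0] at hl ⊢
      nlinarith
  have hM : 0 < max (max M1 M2) (Real.exp 1) := lt_max_of_lt_right (Real.exp_pos 1)
  have hC : 0 < C1 + C2 := by positivity
  refine ⟨⟨_, hC, _, hM, fun x hx => ?_⟩, ⟨_, hC, _, hM, fun x hx => ?_⟩, ⟨_, hC, _, hM, fun x hx => ?_⟩,
    ⟨_, hC, _, hM, fun x hx => ?_⟩, ⟨_, hC, _, hM, fun x hx => ?_⟩, ⟨_, hC, _, hM, fun x hx => ?_⟩⟩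
  · simpa [lam] using key 1 1 (by decide) (by decide) x hx
  · simpa [lam] using key 1 2 (by decide) (by decide) x hx
  · simpa [lam] using key 1 3 (by decide) (by decide) x hx
  · simpa [lam, pow_two] using key 2 2 (by decide) (by decide) x hx
  · simpa [lam] using key 2 3 (by decide) (by decide) x hx
  · simpa [lam] using key 3 3 (by decide) (by decide) x hx
end

section
/- For every x ∈ ℝ, the map θ ↦ f(x;θ) is twice continuously differentiable on Θ_M°; for each i the partial derivative f_{θi}(·;θ) is continuously differentiable with respect to x; and all of f_{θi}, f_{θi}' = ∂f_{θi}/∂x, and f_{θiθj} (i,j = 1,…,4) are jointly continuous in (x,θ) on ℝ × Θ_M°. -/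
open MeasureTheory Filter

namespace StableAux

open Topology

abbrev P4 := Fin 4 → ℝ

/-- complexified coordinate projection -/
noncomputable def LL (i : Fin 4) : P4 →L[ℝ] ℂ :=
  Complex.ofRealCLM.comp (ContinuousLinearMap.proj (R := ℝ) (φ := fun _ : Fin 4 => ℝ) i)

lemma LL_apply (i : Fin 4) (v : P4) : LL i v = ((v i : ℝ) : ℂ) := rfl

lemma isOpen_ThetaInt : IsOpen ThetaInt := by
  have h1 : IsOpen {θ : P4 | 0 < θ 1} := isOpen_lt continuous_const (continuous_apply 1)
  have h2 : IsOpen {θ : P4 | θ 2 ∈ Set.Ioo (0:ℝ) 2} := isOpen_Ioo.preimage (continuous_apply 2)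
  have h3 : IsOpen {θ : P4 | θ 3 ∈ Set.Ioo (-1:ℝ) 1} := isOpen_Ioo.preimage (continuous_apply 3)
  exact h1.inter (h2.inter h3)

structure Base (B : Set (ℝ → ℝ)) (A : P4 → ℝ → ℂ) : Prop where
  meas : ∀ p ∈ ThetaInt, Measurable (A p)
  cont : ∀ t : ℝ, t ≠ 0 → ContinuousOn (fun q => A q t) ThetaInt
  bdd : ∀ p ∈ ThetaInt, ∃ g ∈ B, ∀ᶠ q in 𝓝 p, ∀ t : ℝ, t ≠ 0 → ‖A q t‖ ≤ g t

def HasD (A : P4 → ℝ → ℂ) (A' : Fin 4 → P4 → ℝ → ℂ) : Prop :=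
  ∀ p ∈ ThetaInt, ∀ t : ℝ, t ≠ 0 → HasFDerivAt (fun q => A q t) (∑ i, A' i p t • LL i) p

def Sn (B : Set (ℝ → ℝ)) : ℕ → (P4 → ℝ → ℂ) → Prop
  | 0, A => Base B A
  | n + 1, A => Base B A ∧ ∃ A' : Fin 4 → P4 → ℝ → ℂ, (∀ i, Sn B n (A' i)) ∧ HasD A A'

lemma Sn.base {B n A} (h : Sn B n A) : Base B A := by
  cases n with
  | zero => exact h
  | succ n => exact h.1

lemma Sn.mono {B n A} (h : Sn B (n+1) A) : Sn B n A := by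
  induction n generalizing A with
  | zero => exact h.1
  | succ n ih =>
    obtain ⟨hb, A', hA', hd⟩ := h
    exact ⟨hb, A', fun i => ih (hA' i), hd⟩

/-! Parametric integrals -/

def BI : Set (ℝ → ℝ) := {g | Integrable g}

lemma ae_ne_zero : ∀ᵐ t : ℝ, t ≠ 0 := by
  simp [ae_iff, measure_singleton]

lemma Base.integrable {A} (h : Base BI A) {p} (hp : p ∈ ThetaInt) : Integrable (A p) := by
  obtain ⟨g, hg, hb⟩ := h.bdd p hp
  refine Integrable.mono' (show Integrable g volume from hg) (h.meas p hp).aestronglyMeasurable ?_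
  filter_upwards [ae_ne_zero] with t ht using hb.self_of_nhds t ht

lemma Base.contInt {A} (h : Base BI A) : ContinuousOn (fun p => ∫ t, A p t) ThetaInt := by
  intro p hp
  obtain ⟨g, hg, hb⟩ := h.bdd p hp
  have hU := isOpen_ThetaInt.mem_nhds hp
  refine ContinuousAt.continuousWithinAt (continuousAt_of_dominated (bound := g) ?_ ?_ hg ?_)
  · filter_upwards [hU] with q hq using (h.meas q hq).aestronglyMeasurable
  · filter_upwards [hb] with q hq
    filter_upwards [ae_ne_zero] with t ht using hq t ht
  · filter_upwards [ae_ne_zero] with t ht using (h.cont t ht).continuousAt hU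

lemma integrable_sum4 {G : Type*} [NormedAddCommGroup G] {f : Fin 4 → ℝ → G}
    (h : ∀ i, Integrable (f i)) : Integrable (fun t => ∑ i, f i t) := by
  exact integrable_finsetSum _ fun i _ => h i

lemma hasFDerivAt_int_gen {E : Type*} [NormedAddCommGroup E] [NormedSpace ℝ E]
    (L : Fin 4 → E →L[ℝ] ℂ) (A : E → ℝ → ℂ) (A' : Fin 4 → E → ℝ → ℂ) (s : Set E) (p : E)
    (hs : s ∈ 𝓝 p) (g : Fin 4 → ℝ → ℝ) (hg : ∀ i, Integrable (g i))
    (hm : ∀ q ∈ s, AEStronglyMeasurable (A q)) (hi : Integrable (A p))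
    (hi' : ∀ i, Integrable (A' i p))
    (hb : ∀ q ∈ s, ∀ i, ∀ t : ℝ, t ≠ 0 → ‖A' i q t‖ ≤ g i t)
    (hd : ∀ q ∈ s, ∀ t : ℝ, t ≠ 0 → HasFDerivAt (fun q => A q t) (∑ i, A' i q t • L i) q) :
    HasFDerivAt (fun p => ∫ t, A p t) (∑ i, (∫ t, A' i p t) • L i) p := by
  have hint : ∀ i, Integrable (fun t => A' i p t • L i) volume :=
    fun i => (hi' i).smul_const (L i)
  have hsum : Integrable (fun t => ∑ i, A' i p t • L i) volume :=
    integrable_sum4 hint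
  have e : ∫ t, ∑ i, A' i p t • L i = ∑ i, (∫ t, A' i p t) • L i := by
    rw [integral_finsetSum _ fun i _ => hint i]
    exact Finset.sum_congr rfl fun i _ => integral_smul_const _ _
  rw [← e]
  refine hasFDerivAt_integral_of_dominated_of_fderiv_le (μ := volume) (𝕜 := ℝ)
    (F := A) (F' := fun q t => ∑ i, A' i q t • L i) (x₀ := p)
    (bound := fun t => ∑ i, g i t * ‖L i‖) hs ?_ hi
    hsum.aestronglyMeasurable ?_ ?_ ?_
  · filter_upwards [hs] with q hq using hm q hq
  · filter_upwards [ae_ne_zero] with t ht q hq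
    refine (norm_sum_le _ _).trans (Finset.sum_le_sum fun i _ => ?_)
    rw [norm_smul]
    exact mul_le_mul_of_nonneg_right (hb q hq i t ht) (norm_nonneg _)
  · exact integrable_finsetSum _ fun i _ => Integrable.mul_const (hg i) _
  · filter_upwards [ae_ne_zero] with t ht q hq
    exact hd q hq t ht

lemma hasFDerivAt_int {A A'} (h : Base BI A) (h' : ∀ i, Base BI (A' i)) (hd : HasD A A')
    {p : P4} (hp : p ∈ ThetaInt) :
    HasFDerivAt (fun p => ∫ t, A p t) (∑ i, (∫ t, A' i p t) • LL i) p := by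
  have hU := isOpen_ThetaInt.mem_nhds hp
  have hb0 := fun i => (h' i).bdd p hp
  choose g hg hb using hb0
  have hb' : ∀ᶠ q in 𝓝 p, ∀ i, ∀ t : ℝ, t ≠ 0 → ‖A' i q t‖ ≤ g i t := eventually_all.2 hb
  obtain ⟨s, hs, hs'⟩ := hb'.exists_mem
  exact hasFDerivAt_int_gen LL A A' (ThetaInt ∩ s) p (Filter.inter_mem hU hs) g hg
    (fun q hq => (h.meas q hq.1).aestronglyMeasurable) (h.integrable hp)
    (fun i => (h' i).integrable hp) (fun q hq => hs' q hq.2) (fun q hq => hd q hq.1)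

lemma Sn.contDiffOn {n A} (h : Sn BI n A) :
    ContDiffOn ℝ n (fun p => ∫ t, A p t) ThetaInt := by
  induction n generalizing A with
  | zero => exact contDiffOn_zero.2 (Base.contInt h)
  | succ n ih =>
    obtain ⟨hb, A', hA', hd⟩ := h
    have hf : ∀ p ∈ ThetaInt, HasFDerivAt (fun p => ∫ t, A p t) (∑ i, (∫ t, A' i p t) • LL i) p :=
      fun p hp => hasFDerivAt_int hb (fun i => (hA' i).base) hd hp
    push_cast
    rw [contDiffOn_succ_iff_fderiv_of_isOpen isOpen_ThetaInt]
    refine ⟨fun p hp => (hf p hp).differentiableAt.differentiableWithinAt, by simp, ?_⟩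
    refine ContDiffOn.congr (f := fun p => ∑ i, (∫ t, A' i p t) • LL i) ?_
      fun p hp => (hf p hp).fderiv
    exact ContDiffOn.sum fun i _ => (ih (hA' i)).smul contDiffOn_const

lemma sumLL_apply (a : Fin 4 → ℂ) (v : P4) :
    (∑ i, a i • LL i) v = a 0 * (v 0 : ℂ) + a 1 * (v 1 : ℂ) + a 2 * (v 2 : ℂ) + a 3 * (v 3 : ℂ) := by
  simp [Fin.sum_univ_four, LL_apply]

lemma hasD_intro {f : P4 → ℂ} {f' : P4 →L[ℝ] ℂ} {p : P4} {a : Fin 4 → ℂ}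
    (h : HasFDerivAt f f' p)
    (hv : ∀ v : P4, f' v = a 0 * (v 0 : ℂ) + a 1 * (v 1 : ℂ) + a 2 * (v 2 : ℂ) + a 3 * (v 3 : ℂ)) :
    HasFDerivAt f (∑ i, a i • LL i) p := by
  have : f' = ∑ i, a i • LL i := by
    ext v
    rw [hv, sumLL_apply]
  rw [← this]
  exact h

noncomputable def ww (t : ℝ) : ℝ := (1 + |t|) * (1 + |Real.log t|)

lemma one_le_ww (t : ℝ) : 1 ≤ ww t := by
  unfold ww
  nlinarith [abs_nonneg t, abs_nonneg (Real.log t), mul_nonneg (abs_nonneg t) (abs_nonneg (Real.log t))]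

lemma one_add_le_ww (t : ℝ) : 1 + |t| ≤ ww t := by
  unfold ww
  nlinarith [abs_nonneg t, abs_nonneg (Real.log t), mul_nonneg (abs_nonneg t) (abs_nonneg (Real.log t))]

lemma log_le_ww (t : ℝ) : |Real.log t| ≤ ww t := by
  unfold ww
  nlinarith [abs_nonneg t, abs_nonneg (Real.log t), mul_nonneg (abs_nonneg t) (abs_nonneg (Real.log t))]

def BP : Set (ℝ → ℝ) := {g | ∃ C : ℝ, ∃ N : ℕ, 0 ≤ C ∧ g = fun t => C * ww t ^ N}

lemma ww_pow_nonneg (t : ℝ) (N : ℕ) : 0 ≤ ww t ^ N :=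
  pow_nonneg (zero_le_one.trans (one_le_ww t)) N

lemma Base.add {A A2 : P4 → ℝ → ℂ} (h : Base BP A) (h2 : Base BP A2) :
    Base BP (fun p t => A p t + A2 p t) := by
  refine ⟨fun p hp => (h.meas p hp).add (h2.meas p hp), fun t ht => (h.cont t ht).add (h2.cont t ht),
    fun p hp => ?_⟩
  obtain ⟨_, ⟨C, N, hC, rfl⟩, hb⟩ := h.bdd p hp
  obtain ⟨_, ⟨C2, N2, hC2, rfl⟩, hb2⟩ := h2.bdd p hp
  refine ⟨_, ⟨C + C2, N + N2, by positivity, rfl⟩, ?_⟩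
  filter_upwards [hb, hb2] with q hq hq2 t ht
  have e1 : ww t ^ N ≤ ww t ^ (N + N2) := pow_le_pow_right₀ (one_le_ww t) (by omega)
  have e2 : ww t ^ N2 ≤ ww t ^ (N + N2) := pow_le_pow_right₀ (one_le_ww t) (by omega)
  calc ‖A q t + A2 q t‖ ≤ ‖A q t‖ + ‖A2 q t‖ := norm_add_le _ _
    _ ≤ C * ww t ^ N + C2 * ww t ^ N2 := add_le_add (hq t ht) (hq2 t ht)
    _ ≤ C * ww t ^ (N + N2) + C2 * ww t ^ (N + N2) := by gcongr
    _ = _ := by ring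

lemma Base.mul {A A2 : P4 → ℝ → ℂ} (h : Base BP A) (h2 : Base BP A2) :
    Base BP (fun p t => A p t * A2 p t) := by
  refine ⟨fun p hp => (h.meas p hp).mul (h2.meas p hp), fun t ht => (h.cont t ht).mul (h2.cont t ht),
    fun p hp => ?_⟩
  obtain ⟨_, ⟨C, N, hC, rfl⟩, hb⟩ := h.bdd p hp
  obtain ⟨_, ⟨C2, N2, hC2, rfl⟩, hb2⟩ := h2.bdd p hp
  refine ⟨_, ⟨C * C2, N + N2, by positivity, rfl⟩, ?_⟩
  filter_upwards [hb, hb2] with q hq hq2 t ht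
  rw [norm_mul]
  calc ‖A q t‖ * ‖A2 q t‖ ≤ (C * ww t ^ N) * (C2 * ww t ^ N2) :=
        mul_le_mul (hq t ht) (hq2 t ht) (norm_nonneg _) (mul_nonneg hC (ww_pow_nonneg t N))
    _ = _ := by ring

lemma Sn.add {n} {A A2 : P4 → ℝ → ℂ} (h : Sn BP n A) (h2 : Sn BP n A2) :
    Sn BP n (fun p t => A p t + A2 p t) := by
  induction n generalizing A A2 with
  | zero => exact Base.add h h2
  | succ n ih =>
    obtain ⟨hb, A', hA', hd⟩ := h
    obtain ⟨hb2, A2', hA2', hd2⟩ := h2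
    refine ⟨hb.add hb2, fun i p t => A' i p t + A2' i p t, fun i => ih (hA' i) (hA2' i), ?_⟩
    intro p hp t ht
    have := (hd p hp t ht).add (hd2 p hp t ht)
    refine hasD_intro this fun v => ?_
    rw [_root_.add_apply, sumLL_apply, sumLL_apply]
    ring

lemma Sn.mul {n} {A A2 : P4 → ℝ → ℂ} (h : Sn BP n A) (h2 : Sn BP n A2) :
    Sn BP n (fun p t => A p t * A2 p t) := by
  induction n generalizing A A2 with
  | zero => exact Base.mul h h2
  | succ n ih =>
    have hm := h.mono
    have hm2 := h2.mono
    obtain ⟨hb, A', hA', hd⟩ := h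
    obtain ⟨hb2, A2', hA2', hd2⟩ := h2
    refine ⟨hb.mul hb2, fun i p t => A p t * A2' i p t + A2 p t * A' i p t,
      fun i => (ih hm (hA2' i)).add (ih hm2 (hA' i)), ?_⟩
    intro p hp t ht
    have := (hd p hp t ht).mul (hd2 p hp t ht)
    refine hasD_intro this fun v => ?_
    rw [_root_.add_apply, _root_.smul_apply,
      _root_.smul_apply, sumLL_apply, sumLL_apply, smul_eq_mul, smul_eq_mul]
    ring

lemma sn_t (n : ℕ) {h : ℝ → ℂ} (hm : Measurable h) (C : ℝ) (N : ℕ) (hC : 0 ≤ C)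
    (hb : ∀ t, t ≠ 0 → ‖h t‖ ≤ C * ww t ^ N) : Sn BP n (fun _ t => h t) := by
  have base : ∀ {h : ℝ → ℂ} (_ : Measurable h) (C : ℝ) (N : ℕ) (_ : 0 ≤ C)
    (_ : ∀ t, t ≠ 0 → ‖h t‖ ≤ C * ww t ^ N), Base BP (fun _ t => h t) := by
    intro h hm C N hC hb
    exact ⟨fun p hp => hm, fun t ht => continuousOn_const,
      fun p hp => ⟨_, ⟨C, N, hC, rfl⟩, Filter.Eventually.of_forall fun _ => hb⟩⟩
  induction n generalizing h C N with
  | zero => exact base hm C N hC hb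
  | succ n ih =>
    refine ⟨base hm C N hC hb, fun _ _ _ => 0, fun i => ih measurable_const 0 0 le_rfl (by simp), ?_⟩
    intro p hp t ht
    exact hasD_intro (hasFDerivAt_const (h t) p) fun v => by simp

lemma sn_const (n : ℕ) (c : ℂ) : Sn BP n (fun _ _ => c) :=
  sn_t n measurable_const ‖c‖ 0 (norm_nonneg _) (by simp)

lemma sn_coord (n : ℕ) (i : Fin 4) {J : Set ℝ} (hJ : IsOpen J) (hi : ∀ p ∈ ThetaInt, p i ∈ J)
    {g : ℝ → ℝ} (hg : ContDiffOn ℝ (⊤ : ℕ∞) g J) : Sn BP n (fun p _ => ((g (p i) : ℝ) : ℂ)) := by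
  have base : ∀ {g : ℝ → ℝ} (_ : ContDiffOn ℝ (⊤ : ℕ∞) g J),
      Base BP (fun p _ => ((g (p i) : ℝ) : ℂ)) := by
    intro g hg
    have hc : ∀ p ∈ ThetaInt, ContinuousAt (fun p : P4 => ((g (p i) : ℝ) : ℂ)) p := by
      intro p hp
      have h1 : ContinuousAt g (p i) := hg.continuousOn.continuousAt (hJ.mem_nhds (hi p hp))
      have h2 : ContinuousAt (fun p : P4 => g (p i)) p :=
        ContinuousAt.comp (f := fun p : P4 => p i) h1 (continuous_apply i).continuousAt
      exact Complex.continuous_ofReal.continuousAt.comp h2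
    refine ⟨fun p hp => measurable_const, fun t ht p hp => (hc p hp).continuousWithinAt,
      fun p hp => ⟨_, ⟨‖((g (p i) : ℝ) : ℂ)‖ + 1, 0, by positivity, rfl⟩, ?_⟩⟩
    have := (hc p hp).norm.eventually (gt_mem_nhds (lt_add_one _))
    filter_upwards [this] with q hq t ht
    simpa using hq.le
  induction n generalizing g with
  | zero => exact base hg
  | succ n ih =>
    have hg' : ContDiffOn ℝ (⊤ : ℕ∞) (deriv g) J :=
      ((contDiffOn_infty_iff_deriv_of_isOpen hJ).1 hg).2
    refine ⟨base hg, fun j p t => if j = i then ((deriv g (p i) : ℝ) : ℂ) else 0, fun j => ?_, ?_⟩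
    · by_cases hj : j = i
      · simpa only [hj, if_true] using ih hg'
      · simpa only [hj, if_false] using sn_const n 0
    · intro p hp t ht
      have h1 : HasDerivAt g (deriv g (p i)) (p i) :=
        ((hg.contDiffAt (hJ.mem_nhds (hi p hp))).differentiableAt (by simp)).hasDerivAt
      have h2 := h1.comp_hasFDerivAt p
        (ContinuousLinearMap.proj (R := ℝ) (φ := fun _ : Fin 4 => ℝ) i).hasFDerivAt
      have h3 := Complex.ofRealCLM.hasFDerivAt.comp p h2
      refine hasD_intro h3 fun v => ?_
      fin_cases i <;> simp

lemma sn_exp {A : P4 → ℝ → ℂ} (h : ∀ n, Sn BP n A) (hb : Base BP (fun p t => Complex.exp (A p t)))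
    (n : ℕ) : Sn BP n (fun p t => Complex.exp (A p t)) := by
  induction n with
  | zero => exact hb
  | succ n ih =>
    obtain ⟨_, A', hA', hd⟩ := h (n+1)
    refine ⟨hb, fun i p t => Complex.exp (A p t) * A' i p t, fun i => ih.mul (hA' i), ?_⟩
    intro p hp t ht
    have := (hd p hp t ht).cexp
    simp only [mul_smul, ← Finset.smul_sum]
    exact this

/-- moments of the exponential on [0,1] -/
noncomputable def EE (k : ℕ) (z : ℂ) : ℂ := ∫ s in (0:ℝ)..1, (s : ℂ) ^ k * Complex.exp (s * z)

lemma hasDerivAt_EE (k : ℕ) (z : ℂ) : HasDerivAt (EE k) (EE (k+1) z) z := by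
  unfold EE
  refine (intervalIntegral.hasDerivAt_integral_of_dominated_loc_of_deriv_le (μ := volume)
    (F := fun z (s : ℝ) => (s : ℂ) ^ k * Complex.exp (s * z))
    (F' := fun z (s : ℝ) => (s : ℂ) ^ (k+1) * Complex.exp (s * z))
    (bound := fun _ => Real.exp (‖z‖ + 1)) (Metric.ball_mem_nhds z one_pos)
    ?_ ?_ ?_ ?_ ?_ ?_).2
  · refine Filter.Eventually.of_forall fun y => Continuous.aestronglyMeasurable (by fun_prop)
  · exact Continuous.intervalIntegrable (by fun_prop) _ _
  · exact Continuous.aestronglyMeasurable (by fun_prop)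
  · refine Filter.Eventually.of_forall fun s hs y hy => ?_
    rw [Set.uIoc_of_le zero_le_one] at hs
    have hs1 : |s| ≤ 1 := by rw [abs_of_pos hs.1]; exact hs.2
    have hy1 : ‖y‖ ≤ ‖z‖ + 1 := by
      have := norm_sub_norm_le y z
      rw [Metric.mem_ball, dist_eq_norm] at hy
      linarith
    rw [norm_mul, norm_pow, Complex.norm_real, Complex.norm_exp, Real.norm_eq_abs]
    have : (s * y).re ≤ ‖z‖ + 1 := by
      refine (Complex.re_le_norm _).trans ?_
      rw [norm_mul, Complex.norm_real, Real.norm_eq_abs]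
      calc |s| * ‖y‖ ≤ 1 * ‖y‖ := by gcongr
        _ ≤ _ := by linarith
    calc |s| ^ (k+1) * Real.exp (s * y).re ≤ 1 * Real.exp (‖z‖ + 1) := by
          gcongr
          exact pow_le_one₀ (abs_nonneg _) hs1
      _ = _ := one_mul _
  · exact intervalIntegrable_const
  · refine Filter.Eventually.of_forall fun s hs y hy => ?_
    have h1 : HasDerivAt (fun y : ℂ => (s : ℂ) * y) s y := by
      simpa using (hasDerivAt_id y).const_mul (s : ℂ)
    have := (h1.cexp).const_mul ((s : ℂ) ^ k)
    convert! this using 1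
    ring

lemma continuous_EE (k : ℕ) : Continuous (EE k) :=
  continuous_iff_continuousAt.2 fun z => (hasDerivAt_EE k z).continuousAt

lemma norm_EE_le (k : ℕ) (x : ℝ) : ‖EE k x‖ ≤ 1 + Real.exp x := by
  unfold EE
  have := intervalIntegral.norm_integral_le_of_norm_le_const (a := (0:ℝ)) (b := 1)
    (f := fun s : ℝ => (s : ℂ) ^ k * Complex.exp (s * (x : ℂ))) (C := 1 + Real.exp x) ?_
  · simpa using this
  · intro s hs
    rw [Set.uIoc_of_le zero_le_one] at hs
    rw [norm_mul, norm_pow, Complex.norm_real, Complex.norm_exp, Real.norm_eq_abs, abs_of_pos hs.1]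
    have e : ((s : ℂ) * (x : ℂ)).re = s * x := by simp
    rw [e]
    have h1 : Real.exp (s * x) ≤ 1 + Real.exp x := by
      rcases le_total x 0 with hx | hx
      · have : Real.exp (s * x) ≤ 1 := Real.exp_le_one_iff.2 (mul_nonpos_of_nonneg_of_nonpos hs.1.le hx)
        linarith [Real.exp_pos x]
      · have : Real.exp (s * x) ≤ Real.exp x := Real.exp_le_exp.2 (by nlinarith [hs.2])
        linarith
    calc s ^ k * Real.exp (s * x) ≤ 1 * Real.exp (s * x) := by
          gcongr
          exact pow_le_one₀ hs.1.le hs.2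
      _ ≤ _ := by linarith

lemma mul_EE_zero (z : ℂ) : z * EE 0 z = Complex.exp z - 1 := by
  unfold EE
  rcases eq_or_ne z 0 with rfl | hz
  · simp
  · have := integral_exp_mul_complex (a := 0) (b := 1) hz
    simp only [pow_zero, one_mul]
    simp only [mul_comm _ z]
    rw [this]
    field_simp
    simp

lemma sn_G {V Z : P4 → ℝ → ℂ} (hV : ∀ n, Sn BP n V) (hZ : ∀ n, Sn BP n Z)
    (hb : ∀ k, Base BP (fun p t => Complex.exp (V p t) * EE k (Z p t))) (n k : ℕ) :
    Sn BP n (fun p t => Complex.exp (V p t) * EE k (Z p t)) := by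
  induction n generalizing k with
  | zero => exact hb k
  | succ n ih =>
    obtain ⟨_, V', hV', hdV⟩ := hV (n+1)
    obtain ⟨_, Z', hZ', hdZ⟩ := hZ (n+1)
    refine ⟨hb k, fun i p t => (Complex.exp (V p t) * EE (k+1) (Z p t)) * Z' i p t +
      (Complex.exp (V p t) * EE k (Z p t)) * V' i p t,
      fun i => ((ih (k+1)).mul (hZ' i)).add ((ih k).mul (hV' i)), ?_⟩
    intro p hp t ht
    have h1 := (hdV p hp t ht).cexp
    have h2 := ((hasDerivAt_EE k (Z p t)).hasFDerivAt.restrictScalars ℝ).comp p (hdZ p hp t ht)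
    have h3 := h1.mul h2
    refine hasD_intro h3 fun v => ?_
    have e : (Complex.exp (V p t) •
        ContinuousLinearMap.restrictScalars ℝ (ContinuousLinearMap.toSpanSingleton ℂ (EE (k + 1) (Z p t))) ∘SL
          ∑ i, Z' i p t • LL i +
      (EE k ∘ fun q => Z q t) p • Complex.exp (V p t) • ∑ i, V' i p t • LL i) v =
      Complex.exp (V p t) * ((∑ i, Z' i p t • LL i) v * EE (k + 1) (Z p t)) +
        EE k (Z p t) * (Complex.exp (V p t) * (∑ i, V' i p t • LL i) v) := rfl
    rw [e, sumLL_apply, sumLL_apply]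
    ring

lemma contDiff_sinc : ContDiff ℝ (⊤ : ℕ∞) Real.sinc := by
  rw [contDiff_iff_contDiffAt]
  intro x
  rcases eq_or_ne x 0 with rfl | hx
  · have h : AnalyticAt ℝ Real.sin 0 := Real.analyticAt_sin
    obtain ⟨q, hq⟩ := h
    have h2 : AnalyticAt ℝ (dslope Real.sin 0) 0 := ⟨_, hq.has_fpower_series_dslope_fslope⟩
    rw [Real.sinc_eq_dslope]
    exact h2.contDiffAt
  · have : Real.sinc =ᶠ[𝓝 x] fun y => Real.sin y / y := by
      filter_upwards [isOpen_ne.mem_nhds hx] with y hy using Real.sinc_of_ne_zero hy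
    refine ContDiffAt.congr_of_eventuallyEq ?_ this
    exact Real.contDiff_sin.contDiffAt.div contDiffAt_id hx

lemma sinc_pos {x : ℝ} (h1 : -(Real.pi / 2) < x) (h2 : x < Real.pi / 2) : 0 < Real.sinc x := by
  rcases lt_trichotomy x 0 with hx | rfl | hx
  · rw [Real.sinc_of_ne_zero hx.ne]
    exact div_pos_of_neg_of_neg (Real.sin_neg_of_neg_of_neg_pi_lt hx (by linarith [Real.pi_pos])) hx
  · simp
  · rw [Real.sinc_of_ne_zero hx.ne']
    exact div_pos (Real.sin_pos_of_pos_of_lt_pi hx (by linarith [Real.pi_pos])) hx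

noncomputable def TT (a : ℝ) : ℝ :=
  Real.sin (Real.pi * a / 2) / ((Real.pi / 2) * Real.sinc (Real.pi * (1 - a) / 2))

lemma sinc_pos' {a : ℝ} (ha : a ∈ Set.Ioo (0:ℝ) 2) : 0 < Real.sinc (Real.pi * (1 - a) / 2) := by
  have := Real.pi_pos
  apply sinc_pos <;> nlinarith [ha.1, ha.2]

lemma contDiffOn_TT : ContDiffOn ℝ (⊤ : ℕ∞) TT (Set.Ioo (0:ℝ) 2) := by
  unfold TT
  refine ContDiffOn.div ?_ ?_ ?_
  · exact (Real.contDiff_sin.comp (by fun_prop)).contDiffOn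
  · exact (contDiff_const.mul (contDiff_sinc.comp (by fun_prop))).contDiffOn
  · intro a ha
    exact (mul_pos (by linarith [Real.pi_pos]) (sinc_pos' ha)).ne'

lemma TT_one : TT 1 = 2 / Real.pi := by
  simp [TT]

lemma TT_ne {a : ℝ} (ha : a ∈ Set.Ioo (0:ℝ) 2) (h1 : a ≠ 1) :
    TT a = (1 - a) * Real.tan (Real.pi * a / 2) := by
  have hp := Real.pi_pos
  have hs := sinc_pos' ha
  have hy : Real.pi * (1 - a) / 2 ≠ 0 := by
    have : 1 - a ≠ 0 := sub_ne_zero.2 h1.symm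
    positivity
  have hc : Real.cos (Real.pi * a / 2) = Real.sin (Real.pi * (1 - a) / 2) := by
    rw [← Real.sin_pi_div_two_sub]; congr 1; ring
  unfold TT
  rw [Real.tan_eq_sin_div_cos, hc]
  rw [Real.sinc_of_ne_zero hy] at hs ⊢
  have hsin : Real.sin (Real.pi * (1 - a) / 2) ≠ 0 := by
    intro h; rw [h] at hs; simp at hs
  field_simp

/-! The concrete exponent -/

noncomputable def vv (p : P4) (t : ℝ) : ℝ := Real.log (p 1) + Real.log t

lemma exp_vv {p : P4} (hp : p ∈ ThetaInt) {t : ℝ} (ht : t ≠ 0) :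
    Real.exp (vv p t) = |p 1 * t| := by
  unfold vv
  rw [Real.exp_add, Real.exp_log hp.1, Real.exp_log_eq_abs ht, abs_mul, abs_of_pos hp.1]

lemma exp_mul_vv {p : P4} (hp : p ∈ ThetaInt) {t : ℝ} (ht : t ≠ 0) (a : ℝ) :
    Real.exp (a * vv p t) = |p 1 * t| ^ a := by
  rw [← exp_vv hp ht, ← Real.exp_mul, mul_comm]

lemma exp_le_poly {p : P4} (hp : p ∈ ThetaInt) {t : ℝ} (ht : t ≠ 0) {a : ℝ} (h0 : 0 ≤ a)
    (h2 : a ≤ 2) : Real.exp (a * vv p t) ≤ (1 + p 1) ^ 2 * ww t ^ 2 := by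
  have hσ := hp.1
  have h1 : Real.exp (a * vv p t) ≤ 1 + Real.exp (vv p t) ^ 2 := by
    rcases le_total (vv p t) 0 with h | h
    · have : Real.exp (a * vv p t) ≤ 1 := Real.exp_le_one_iff.2 (mul_nonpos_of_nonneg_of_nonpos h0 h)
      nlinarith [sq_nonneg (Real.exp (vv p t))]
    · have : Real.exp (a * vv p t) ≤ Real.exp (vv p t) ^ 2 := by
        rw [sq, ← Real.exp_add]
        exact Real.exp_le_exp.2 (by nlinarith)
      linarith
  rw [exp_vv hp ht, abs_mul, abs_of_pos hσ] at h1
  have hw := one_add_le_ww t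
  have h3 : (1 + |t|) ^ 2 ≤ ww t ^ 2 := by gcongr
  have h4 : 0 ≤ p 1 * |t| := by positivity
  have h5 : 1 + (p 1 * |t|) ^ 2 ≤ ((1 + p 1) * (1 + |t|)) ^ 2 := by
    have h6 : 1 + p 1 * |t| ≤ (1 + p 1) * (1 + |t|) := by nlinarith [abs_nonneg t]
    nlinarith [h6, h4]
  refine (h1.trans h5).trans ?_
  rw [mul_pow]
  gcongr

noncomputable def VV (p : P4) (t : ℝ) : ℂ := ((Real.log (p 1) : ℝ) : ℂ) + ((Real.log t : ℝ) : ℂ)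

lemma VV_eq (p : P4) (t : ℝ) : VV p t = ((vv p t : ℝ) : ℂ) := by
  simp [VV, vv]

noncomputable def ZZ (p : P4) (t : ℝ) : ℂ := (((p 2 - 1 : ℝ)) : ℂ) * VV p t

noncomputable def AV (p : P4) (t : ℝ) : ℂ := ((p 2 : ℝ) : ℂ) * VV p t

lemma sn_id (n : ℕ) (i : Fin 4) : Sn BP n (fun p _ => ((p i : ℝ) : ℂ)) :=
  sn_coord n i isOpen_univ (fun _ _ => Set.mem_univ _) (g := fun x => x) contDiffOn_id

lemma sn_log (n : ℕ) : Sn BP n (fun _ t => ((Real.log t : ℝ) : ℂ)) := by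
  refine sn_t n (by fun_prop) 1 1 zero_le_one fun t ht => ?_
  rw [Complex.norm_real, Real.norm_eq_abs]
  simpa using log_le_ww t

lemma sn_VV (n : ℕ) : Sn BP n VV := by
  refine Sn.add (sn_coord n 1 isOpen_Ioi (fun p hp => hp.1) (g := Real.log) ?_) (sn_log n)
  exact Real.contDiffOn_log.mono (fun x (hx : 0 < x) => hx.ne')

lemma sn_ZZ (n : ℕ) : Sn BP n ZZ :=
  Sn.mul (sn_coord n 2 isOpen_univ (fun _ _ => Set.mem_univ _) (g := fun x => x - 1)
    (contDiff_id.sub contDiff_const).contDiffOn) (sn_VV n)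

lemma sn_AV (n : ℕ) : Sn BP n AV := Sn.mul (sn_id n 2) (sn_VV n)

lemma ev_sigma {p : P4} (hp : p ∈ ThetaInt) : ∀ᶠ q in 𝓝 p, q ∈ ThetaInt ∧ q 1 ≤ p 1 + 1 := by
  have h1 := isOpen_ThetaInt.mem_nhds hp
  have h2 : ∀ᶠ q : P4 in 𝓝 p, q 1 < p 1 + 1 :=
    (continuous_apply (1 : Fin 4)).continuousAt.eventually (gt_mem_nhds (lt_add_one (p 1)))
  filter_upwards [h1, h2] with q hq hq2 using ⟨hq, hq2.le⟩

lemma sn_expAV (n : ℕ) : Sn BP n (fun p t => Complex.exp (AV p t)) := by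
  refine sn_exp sn_AV ?_ n
  have hb := (sn_AV 0).base
  refine ⟨fun p hp => (hb.meas p hp).cexp, fun t ht => (hb.cont t ht).cexp, fun p hp => ?_⟩
  have := hp.1
  refine ⟨_, ⟨(1 + (p 1 + 1)) ^ 2, 2, by positivity, rfl⟩, ?_⟩
  filter_upwards [ev_sigma hp] with q ⟨hq, hq1⟩ t ht
  have hq0 := hq.1
  have e : ‖Complex.exp (AV q t)‖ = Real.exp (q 2 * vv q t) := by
    rw [Complex.norm_exp, AV, VV_eq, ← Complex.ofReal_mul, Complex.ofReal_re]
  rw [e]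
  refine (exp_le_poly hq ht hq.2.1.1.le hq.2.1.2.le).trans ?_
  gcongr

lemma sn_GG (n k : ℕ) : Sn BP n (fun p t => Complex.exp (VV p t) * EE k (ZZ p t)) := by
  refine sn_G sn_VV sn_ZZ (fun k => ?_) n k
  have hb := (sn_VV 0).base
  have hz := (sn_ZZ 0).base
  refine ⟨fun p hp => (hb.meas p hp).cexp.mul ((continuous_EE k).measurable.comp (hz.meas p hp)),
    fun t ht => (hb.cont t ht).cexp.mul ((continuous_EE k).comp_continuousOn (hz.cont t ht)),
    fun p hp => ?_⟩
  have := hp.1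
  refine ⟨_, ⟨(1 + (p 1 + 1)) ^ 2 + (1 + (p 1 + 1)) ^ 2, 2, by positivity, rfl⟩, ?_⟩
  filter_upwards [ev_sigma hp] with q ⟨hq, hq1⟩ t ht
  have hq0 := hq.1
  have e : ‖Complex.exp (VV q t)‖ = Real.exp (1 * vv q t) := by
    rw [Complex.norm_exp, VV_eq, Complex.ofReal_re, one_mul]
  have e2 : ‖EE k (ZZ q t)‖ ≤ 1 + Real.exp ((q 2 - 1) * vv q t) := by
    rw [ZZ, VV_eq, ← Complex.ofReal_mul]
    exact norm_EE_le k _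
  have b1 := exp_le_poly hq ht zero_le_one one_le_two
  have b2 := exp_le_poly hq ht hq.2.1.1.le hq.2.1.2.le
  have b3 : (1 + q 1) ^ 2 * ww t ^ 2 ≤ (1 + (p 1 + 1)) ^ 2 * ww t ^ 2 := by gcongr
  rw [norm_mul, e]
  calc _ ≤ Real.exp (1 * vv q t) * (1 + Real.exp ((q 2 - 1) * vv q t)) := by gcongr
    _ = Real.exp (1 * vv q t) + Real.exp (q 2 * vv q t) := by
      rw [mul_add, ← Real.exp_add, mul_one]; congr 2; ring
    _ ≤ _ := by rw [add_mul]; linarith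

noncomputable def PsiA (p : P4) (t : ℝ) : ℂ :=
  (Complex.I * (t : ℂ)) * ((p 0 : ℝ) : ℂ) + (-1) * Complex.exp (AV p t) +
    (-Complex.I * ((Real.sign t : ℝ) : ℂ)) * (((p 3 : ℝ) : ℂ) * (((TT (p 2) : ℝ) : ℂ) *
      (VV p t * (Complex.exp (VV p t) * EE 0 (ZZ p t)))))

lemma measurable_sign : Measurable Real.sign := by
  unfold Real.sign
  exact Measurable.ite measurableSet_Iio measurable_const
    (Measurable.ite measurableSet_Ioi measurable_const measurable_const)

lemma abs_sign_le (t : ℝ) : |Real.sign t| ≤ 1 := by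
  rcases Real.sign_apply_eq t with h | h | h <;> rw [h] <;> simp

lemma sn_PsiA (n : ℕ) : Sn BP n PsiA := by
  refine Sn.add (Sn.add (Sn.mul ?_ (sn_id n 0)) (Sn.mul (sn_const n _) (sn_expAV n)))
    (Sn.mul ?_ (Sn.mul (sn_id n 3) (Sn.mul ?_ (Sn.mul (sn_VV n) (sn_GG n 0)))))
  · refine sn_t n (by fun_prop) 1 1 zero_le_one fun t ht => ?_
    have := one_add_le_ww t
    simp only [norm_mul, Complex.norm_I, Complex.norm_real, Real.norm_eq_abs, one_mul, pow_one]
    linarith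
  · refine sn_t n ?_ 1 0 zero_le_one fun t ht => ?_
    · exact measurable_const.mul (Complex.measurable_ofReal.comp measurable_sign)
    · simpa using abs_sign_le t
  · exact sn_coord n 2 isOpen_Ioo (fun p hp => hp.2.1) contDiffOn_TT

lemma sign_mul_abs' (t : ℝ) : Real.sign t * |t| = t := by
  rcases lt_trichotomy t 0 with h | rfl | h
  · rw [Real.sign_of_neg h, abs_of_neg h]; ring
  · simp
  · rw [Real.sign_of_pos h, abs_of_pos h]; ring

lemma psi_eq {p : P4} (hp : p ∈ ThetaInt) {t : ℝ} (ht : t ≠ 0) : psiM p t = PsiA p t := by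
  have hσ := hp.1
  have hE : Complex.exp (AV p t) = ((|p 1 * t| ^ (p 2) : ℝ) : ℂ) := by
    rw [AV, VV_eq, ← exp_mul_vv hp ht]; push_cast; rfl
  have hV : Complex.exp (VV p t) = ((|p 1 * t| : ℝ) : ℂ) := by
    rw [VV_eq, ← exp_vv hp ht]; push_cast; rfl
  have hlog : vv p t = Real.log |p 1 * t| := by
    rw [← exp_vv hp ht, Real.log_exp]
  unfold psiM PsiA
  rw [hE, hV]
  split_ifs with h1
  · have hz : ZZ p t = 0 := by simp [ZZ, h1]
    have h0 : EE 0 0 = 1 := by simp [EE]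
    rw [hz, h0, h1, TT_one, VV_eq, hlog, Real.rpow_one, mul_one]
    have hs : p 1 * t = Real.sign t * |p 1 * t| := by
      rw [abs_mul, abs_of_pos hσ]; linear_combination (-(p 1)) * sign_mul_abs' t
    have hs' : ((p 1 * t : ℝ) : ℂ) = (Real.sign t : ℂ) * ((|p 1 * t| : ℝ) : ℂ) := by
      exact_mod_cast hs
    generalize hL : Real.log |p 1 * t| = L
    rw [Complex.ofReal_mul (2 * p 3 / Real.pi * (p 1 * t)) L, Complex.ofReal_mul (2 * p 3 / Real.pi) (p 1 * t), hs']
    push_cast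
    ring
  · have hm := mul_EE_zero (ZZ p t)
    have hez : ((|p 1 * t| : ℝ) : ℂ) * Complex.exp (ZZ p t) = ((|p 1 * t| ^ (p 2) : ℝ) : ℂ) := by
      rw [← hV, ← hE, ← Complex.exp_add]; congr 1; rw [ZZ, AV]; push_cast; ring
    have hpow : |p 1 * t| ^ (p 2) * |p 1 * t| ^ (1 - p 2) = |p 1 * t| := by
      rw [← Real.rpow_add (abs_pos.2 (mul_ne_zero hσ.ne' ht))]; simp
    have hpow' : ((|p 1 * t| ^ (p 2) : ℝ) : ℂ) * ((|p 1 * t| ^ (1 - p 2) : ℝ) : ℂ) =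
      ((|p 1 * t| : ℝ) : ℂ) := by exact_mod_cast hpow
    rw [TT_ne hp.2.1 h1]
    generalize hU : ((|p 1 * t| : ℝ) : ℂ) = U at *
    have hm2 : (1 - (p 2 : ℂ)) * (VV p t * (U * EE 0 (ZZ p t))) =
        U - ((|p 1 * t| ^ (p 2) : ℝ) : ℂ) := by
      rw [← hez]
      have : ZZ p t * EE 0 (ZZ p t) = ((p 2 : ℂ) - 1) * VV p t * EE 0 (ZZ p t) := by
        congr 1
        rw [ZZ]
        push_cast; rfl
      rw [this] at hm
      linear_combination (-U) * hm
    simp only [Complex.ofReal_neg, Complex.ofReal_mul, Complex.ofReal_sub, Complex.ofReal_one]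
    linear_combination (-Complex.I * (p 3 : ℂ) * (Real.sign t : ℂ) * (Real.tan (Real.pi * p 2 / 2) : ℂ)) * hpow' + (Complex.I * (p 3 : ℂ) * (Real.sign t : ℂ) * (Real.tan (Real.pi * p 2 / 2) : ℂ)) * hm2

lemma re_psiM (p : P4) (t : ℝ) : (psiM p t).re = -(|p 1 * t| ^ (p 2)) := by
  unfold psiM
  split_ifs with h
  · simp [h]
  · have key : ∀ a r b : ℝ,
        ((a : ℂ) * (1 + Complex.I * (r : ℂ)) + Complex.I * (b : ℂ)).re = a := by
      intro a r b; simp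
    exact key _ _ _

lemma ww_abs (t : ℝ) : ww |t| = ww t := by simp [ww]

lemma ww_pow_le (N : ℕ) {u : ℝ} (hu : 0 < u) :
    ww u ^ N ≤ (4 * N + 6 : ℝ) ^ N * (u ^ (-(1/2) : ℝ) + u ^ (2 * N : ℝ)) := by
  have hK : (0:ℝ) ≤ (4 * N + 6 : ℝ) ^ N := by positivity
  have hw0 : 0 ≤ ww u := zero_le_one.trans (one_le_ww u)
  have hp1 : 0 ≤ u ^ (-(1/2) : ℝ) := by positivity
  have hp2 : 0 ≤ u ^ (2 * N : ℝ) := by positivity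
  rcases le_total u 1 with h | h
  · set d : ℝ := 1 / (2 * (N + 1)) with hd
    have hd0 : 0 < d := by positivity
    have h1 := Real.abs_log_mul_self_rpow_lt u d hu h hd0
    have h1d : 1 / d = 2 * (N + 1) := by rw [hd]; field_simp
    rw [h1d, abs_mul, abs_of_pos (Real.rpow_pos_of_pos hu d)] at h1
    have hone : 1 ≤ u ^ (-d) := Real.one_le_rpow_of_pos_of_le_one_of_nonpos hu h (by linarith)
    have hmul : u ^ d * u ^ (-d) = 1 := by rw [← Real.rpow_add hu]; simp
    have hlog : |Real.log u| ≤ 2 * (N + 1) * u ^ (-d) := by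
      calc |Real.log u| = (|Real.log u| * u ^ d) * u ^ (-d) := by rw [mul_assoc, hmul, mul_one]
        _ ≤ _ := by gcongr
    have hww : ww u ≤ (4 * N + 6) * u ^ (-d) := by
      unfold ww
      rw [abs_of_pos hu]
      have : (1 + u) * (1 + |Real.log u|) ≤ 2 * (u ^ (-d) + 2 * (N + 1) * u ^ (-d)) := by
        gcongr
        linarith
      linarith
    calc ww u ^ N ≤ ((4 * N + 6) * u ^ (-d)) ^ N := by gcongr
      _ = (4 * N + 6) ^ N * (u ^ (-d * N)) := by rw [mul_pow, Real.rpow_mul_natCast hu.le]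
      _ ≤ (4 * N + 6) ^ N * u ^ (-(1/2) : ℝ) := by
        gcongr ?_ * ?_
        apply Real.rpow_le_rpow_of_exponent_ge hu h
        have : d * N ≤ 1 / 2 := by
          rw [hd, div_mul_eq_mul_div, div_le_div_iff₀ (by positivity) (by positivity)]
          linarith
        linarith
      _ ≤ _ := by gcongr; linarith
  · have hl : |Real.log u| ≤ u := by
      rw [abs_of_nonneg (Real.log_nonneg h)]
      linarith [Real.log_le_sub_one_of_pos hu]
    have hww : ww u ≤ (4 * N + 6) * u ^ 2 := by
      unfold ww
      rw [abs_of_pos hu]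
      have : (1 + u) * (1 + |Real.log u|) ≤ (2 * u) * (2 * u) := by gcongr <;> linarith
      have hN : (0:ℝ) ≤ N * u ^ 2 := by positivity
      nlinarith
    calc ww u ^ N ≤ ((4 * N + 6) * u ^ 2) ^ N := by gcongr
      _ = (4 * N + 6) ^ N * (u ^ (2 * N : ℝ)) := by
        rw [mul_pow, ← pow_mul]; congr 1
        rw [← Real.rpow_natCast]; push_cast; rfl
      _ ≤ _ := by gcongr; linarith

lemma measurable_ww : Measurable ww := by
  unfold ww
  fun_prop

lemma integrable_abs {f : ℝ → ℝ} (hf : IntegrableOn f (Set.Ioi 0)) : Integrable (fun t => f |t|) := by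
  have hf' : IntegrableOn (fun x => f |x|) (Set.Ioi 0) := by
    refine hf.congr_fun (fun x hx => ?_) measurableSet_Ioi
    rw [abs_of_pos hx]
  have int_Iic : IntegrableOn (fun x ↦ f |x|) (Set.Iic 0) := by
    rw [← Measure.map_neg_eq_self (volume : Measure ℝ)]
    let m : MeasurableEmbedding fun x : ℝ => -x := (Homeomorph.neg ℝ).measurableEmbedding
    rw [m.integrableOn_map_iff]
    simp_rw [Function.comp_def, abs_neg, Set.neg_preimage, Set.neg_Iic, neg_zero]
    exact Iff.mpr integrableOn_Ici_iff_integrableOn_Ioi hf'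
  rw [← integrableOn_univ, ← Set.Iic_union_Ioi (a := (0:ℝ))]
  exact int_Iic.union hf'

lemma integrable_decay {c a : ℝ} (hc : 0 < c) (ha : 0 < a) (N : ℕ) :
    Integrable (fun t => Real.exp (-(c * |t|) ^ a) * ww t ^ N) := by
  have h : IntegrableOn (fun u => Real.exp (-(c * u) ^ a) * ww u ^ N) (Set.Ioi 0) := by
    have h1 := integrableOn_rpow_mul_exp_neg_mul_rpow (p := a) (s := -(1/2)) (b := c ^ a)
      (by norm_num) ha (by positivity)
    have h2 := integrableOn_rpow_mul_exp_neg_mul_rpow (p := a) (s := 2 * N) (b := c ^ a)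
      (by have : (0:ℝ) ≤ N := Nat.cast_nonneg N
          linarith) ha (by positivity)
    have h3 := (h1.add h2).const_mul ((4 * N + 6 : ℝ) ^ N)
    refine Integrable.mono' h3 ?_ ?_
    · refine Measurable.aestronglyMeasurable ?_
      have := measurable_ww
      fun_prop
    · filter_upwards [ae_restrict_mem measurableSet_Ioi] with u hu
      have hu' : 0 < u := hu
      rw [Real.norm_eq_abs, abs_of_nonneg (mul_nonneg (Real.exp_pos _).le (ww_pow_nonneg u N)),
        Real.mul_rpow hc.le hu'.le]
      have := ww_pow_le N hu'
      calc _ ≤ Real.exp (-(c ^ a * u ^ a)) *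
            ((4 * N + 6 : ℝ) ^ N * (u ^ (-(1/2) : ℝ) + u ^ (2 * N : ℝ))) := by gcongr
        _ = _ := by
          simp only [Pi.add_apply, neg_mul]
          ring
  refine (integrable_abs h).congr (Filter.Eventually.of_forall fun t => ?_)
  simp only [ww_abs]

lemma norm_exp_PsiA {p : P4} (hp : p ∈ ThetaInt) {t : ℝ} (ht : t ≠ 0) :
    ‖Complex.exp (PsiA p t)‖ = Real.exp (-(|p 1 * t| ^ (p 2))) := by
  rw [← psi_eq hp ht, Complex.norm_exp, re_psiM]

lemma base_decay {A : P4 → ℝ → ℂ} (h : Base BP A) :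
    Base BI (fun p t => Complex.exp (PsiA p t) * A p t) := by
  have hb := (sn_PsiA 0).base
  refine ⟨fun p hp => (hb.meas p hp).cexp.mul (h.meas p hp),
    fun t ht => (hb.cont t ht).cexp.mul (h.cont t ht), fun p hp => ?_⟩
  obtain ⟨_, ⟨C, N, hC, rfl⟩, hbd⟩ := h.bdd p hp
  have hσ := hp.1
  have hα := hp.2.1.1
  refine ⟨fun t => (Real.exp 1 * C) *
    (Real.exp (-(p 1 / 2 * |t|) ^ (p 2 / 2)) * ww t ^ N),
    (integrable_decay (by positivity) (by positivity) N).const_mul _, ?_⟩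
  have e1 : ∀ᶠ q : P4 in 𝓝 p, p 1 / 2 < q 1 :=
    (continuous_apply (1 : Fin 4)).continuousAt.eventually (lt_mem_nhds (by linarith))
  have e2 : ∀ᶠ q : P4 in 𝓝 p, p 2 / 2 < q 2 :=
    (continuous_apply (2 : Fin 4)).continuousAt.eventually (lt_mem_nhds (by linarith))
  filter_upwards [hbd, e1, e2, isOpen_ThetaInt.mem_nhds hp] with q hq h1 h2 hqT t ht
  have hw := ww_pow_nonneg t N
  have key : (p 1 / 2 * |t|) ^ (p 2 / 2) ≤ 1 + |q 1 * t| ^ (q 2) := by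
    have hnn : 0 ≤ |q 1 * t| ^ (q 2) := by positivity
    have hle : p 1 / 2 * |t| ≤ |q 1 * t| := by
      rw [abs_mul, abs_of_pos hqT.1]; gcongr
    rcases le_total (p 1 / 2 * |t|) 1 with h | h
    · have := Real.rpow_le_one (by positivity) h (by positivity : 0 ≤ p 2 / 2)
      linarith
    · have a1 := Real.rpow_le_rpow_of_exponent_le h h2.le
      have a2 := Real.rpow_le_rpow (by positivity) hle hqT.2.1.1.le
      linarith
  rw [norm_mul, norm_exp_PsiA hqT ht]
  calc _ ≤ (Real.exp 1 * Real.exp (-(p 1 / 2 * |t|) ^ (p 2 / 2))) * (C * ww t ^ N) := by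
        refine mul_le_mul ?_ (hq t ht) (norm_nonneg _) (by positivity)
        rw [← Real.exp_add]
        exact Real.exp_le_exp.2 (by linarith)
    _ = _ := by ring

lemma sn_decay {n : ℕ} {A : P4 → ℝ → ℂ} (h : Sn BP n A) :
    Sn BI n (fun p t => Complex.exp (PsiA p t) * A p t) := by
  induction n generalizing A with
  | zero => exact base_decay h
  | succ n ih =>
    have hm := h.mono
    obtain ⟨hb, A', hA', hd⟩ := h
    obtain ⟨_, Q', hQ', hdQ⟩ := sn_PsiA (n+1)
    refine ⟨base_decay hb, fun i p t => Complex.exp (PsiA p t) * (A' i p t + A p t * Q' i p t),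
      fun i => ih ((hA' i).add (hm.mul (hQ' i))), ?_⟩
    intro p hp t ht
    have := (hdQ p hp t ht).cexp.mul (hd p hp t ht)
    refine hasD_intro this fun v => ?_
    rw [_root_.add_apply, _root_.smul_apply, _root_.smul_apply, _root_.smul_apply,
      sumLL_apply, sumLL_apply]
    simp only [smul_eq_mul]
    ring

/-! Final assembly -/

noncomputable def gg (p : P4) : ℝ := fM p 0

lemma contDiffOn_gg : ContDiffOn ℝ 2 gg ThetaInt := by
  have h : Sn BI 2 (fun p t => Complex.exp (PsiA p t) * 1) := sn_decay (sn_const 2 1)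
  have h2 := h.contDiffOn
  have h3 : ContDiffOn ℝ 2 (fun p => (1 / (2 * Real.pi)) *
      Complex.reCLM (∫ t : ℝ, Complex.exp (PsiA p t) * 1)) ThetaInt :=
    contDiffOn_const.mul (Complex.reCLM.contDiff.comp_contDiffOn h2)
  refine h3.congr fun p hp => ?_
  unfold gg fM
  rw [Complex.reCLM_apply]
  congr 2
  refine integral_congr_ae ?_
  filter_upwards [ae_ne_zero] with t ht
  simp [phiM, psi_eq hp ht]

noncomputable def e0 : P4 := Pi.single 0 1

lemma fM_eq (θ : P4) (x : ℝ) : fM θ x = gg (θ - x • e0) := by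
  unfold gg fM
  congr 3
  ext t
  unfold phiM
  rw [← Complex.exp_add, ← Complex.exp_add]
  congr 1
  unfold psiM
  simp only [e0, Pi.sub_apply, Pi.smul_apply, Pi.single_apply, smul_eq_mul]
  simp only [show (1 : Fin 4) ≠ 0 by decide, show (2 : Fin 4) ≠ 0 by decide,
    show (3 : Fin 4) ≠ 0 by decide, if_false, mul_zero, sub_zero, if_true, mul_one]
  split_ifs <;> push_cast <;> ring

lemma shift_mem {θ : P4} (h : θ ∈ ThetaInt) (x : ℝ) : θ - x • e0 ∈ ThetaInt := by
  have : ∀ i : Fin 4, i ≠ 0 → (θ - x • e0) i = θ i := by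
    intro i hi; simp [e0, hi]
  unfold ThetaInt at *
  simp only [Set.mem_setOf_eq] at *
  rw [this 1 (by decide), this 2 (by decide), this 3 (by decide)]
  exact h

lemma update_sub (θ : P4) (i : Fin 4) (s x : ℝ) :
    Function.update θ i s - x • e0 = (θ - x • e0) + (s - θ i) • (Pi.single i 1 : P4) := by
  ext j
  by_cases hj : j = i
  · subst hj; simp
  · simp [hj]

/-- directional derivative along coordinate `i` of `h (θ - x e0)` -/
lemma deriv_update {h : P4 → ℝ} (θ : P4) (x : ℝ) (i : Fin 4)
    (hd : DifferentiableAt ℝ h (θ - x • e0)) :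
    deriv (fun s => h (Function.update θ i s - x • e0)) (θ i) =
      fderiv ℝ h (θ - x • e0) (Pi.single i 1) := by
  simp only [update_sub]
  have h1 : HasDerivAt (fun s : ℝ => (θ - x • e0) + (s - θ i) • (Pi.single i 1 : P4))
      (Pi.single i 1 : P4) (θ i) := by
    have := ((hasDerivAt_id (θ i)).sub_const (θ i)).smul_const (Pi.single i 1 : P4)
    simpa using this.const_add (θ - x • e0)
  have h2 : HasFDerivAt h (fderiv ℝ h (θ - x • e0))
      ((θ - x • e0) + (θ i - θ i) • (Pi.single i 1 : P4)) := by
    simpa using hd.hasFDerivAt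
  exact (h2.comp_hasDerivAt (θ i) h1).deriv

noncomputable def gP (i : Fin 4) (p : P4) : ℝ := fderiv ℝ gg p (Pi.single i 1)

lemma fP_eq (i : Fin 4) {θ : P4} (hθ : θ ∈ ThetaInt) (x : ℝ) : fP i θ x = gP i (θ - x • e0) := by
  unfold fP gP
  simp only [fM_eq]
  refine deriv_update θ x i ?_
  exact (contDiffOn_gg.contDiffAt (isOpen_ThetaInt.mem_nhds (shift_mem hθ x))).differentiableAt
    (by simp)

lemma contDiffOn_gP (i : Fin 4) : ContDiffOn ℝ 1 (gP i) ThetaInt := by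
  have h := contDiffOn_gg.fderiv_of_isOpen isOpen_ThetaInt (m := 1) (by norm_num)
  exact h.clm_apply contDiffOn_const

lemma contDiffAt_gP (i : Fin 4) {p : P4} (hp : p ∈ ThetaInt) : DifferentiableAt ℝ (gP i) p :=
  ((contDiffOn_gP i).contDiffAt (isOpen_ThetaInt.mem_nhds hp)).differentiableAt (by simp)

lemma fPP_eq (i j : Fin 4) {θ : P4} (hθ : θ ∈ ThetaInt) (x : ℝ) :
    fPP i j θ x = fderiv ℝ (gP i) (θ - x • e0) (Pi.single j 1) := by
  unfold fPP
  rw [← deriv_update θ x j (contDiffAt_gP i (shift_mem hθ x))]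
  refine Filter.EventuallyEq.deriv_eq ?_
  have hc : ContinuousAt (fun s => Function.update θ j s) (θ j) :=
    (continuous_const.update j continuous_id).continuousAt
  have : ∀ᶠ s in 𝓝 (θ j), Function.update θ j s ∈ ThetaInt := by
    refine hc.eventually (isOpen_ThetaInt.mem_nhds ?_)
    simpa using hθ
  filter_upwards [this] with s hs
  exact fP_eq i hs x

lemma hasDeriv_fP (i : Fin 4) {θ : P4} (hθ : θ ∈ ThetaInt) (x : ℝ) :
    HasDerivAt (fun y => fP i θ y) (fderiv ℝ (gP i) (θ - x • e0) (-e0)) x := by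
  simp only [fP_eq i hθ]
  have h1 : HasDerivAt (fun y : ℝ => θ - y • e0) (-e0) x := by
    simpa using ((hasDerivAt_id x).smul_const e0).const_sub θ
  exact (contDiffAt_gP i (shift_mem hθ x)).hasFDerivAt.comp_hasDerivAt x h1

lemma cont_shift {G : Type*} [TopologicalSpace G] {h : P4 → G} (hc : ContinuousOn h ThetaInt) :
    ContinuousOn (fun p : ℝ × (Fin 4 → ℝ) => h (p.2 - p.1 • e0))
      {p : ℝ × (Fin 4 → ℝ) | p.2 ∈ ThetaInt} := by
  refine hc.comp (Continuous.continuousOn (by fun_prop)) ?_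
  intro p hp
  exact shift_mem hp _

lemma cont_fderiv_gP (i : Fin 4) (v : P4) :
    ContinuousOn (fun p => fderiv ℝ (gP i) p v) ThetaInt := by
  have h := (contDiffOn_gP i).fderiv_of_isOpen isOpen_ThetaInt (m := 0) (by norm_num)
  exact h.continuousOn.clm_apply continuousOn_const

lemma contOn_fPP (i j : Fin 4) : ContinuousOn (fun p : ℝ × (Fin 4 → ℝ) => fPP i j p.2 p.1)
    {p : ℝ × (Fin 4 → ℝ) | p.2 ∈ ThetaInt} := by
  have h := cont_shift (cont_fderiv_gP i (Pi.single j 1 : P4))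
  have e : ∀ p : ℝ × (Fin 4 → ℝ), p.2 ∈ ThetaInt →
      fPP i j p.2 p.1 = fderiv ℝ (gP i) (p.2 - p.1 • e0) (Pi.single j 1 : P4) := by
    intro p hp
    rw [fPP_eq i j hp p.1]
  exact ContinuousOn.congr h e

lemma contOn_fPX (i : Fin 4) : ContinuousOn (fun p : ℝ × (Fin 4 → ℝ) => fPX i p.2 p.1)
    {p : ℝ × (Fin 4 → ℝ) | p.2 ∈ ThetaInt} := by
  have h := cont_shift (cont_fderiv_gP i (-e0))
  have e : ∀ p : ℝ × (Fin 4 → ℝ), p.2 ∈ ThetaInt →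
      fPX i p.2 p.1 = fderiv ℝ (gP i) (p.2 - p.1 • e0) (-e0) := by
    intro p hp
    unfold fPX
    rw [(hasDeriv_fP i hp p.1).deriv]
  exact ContinuousOn.congr h e

lemma contOn_fP (i : Fin 4) : ContinuousOn (fun p : ℝ × (Fin 4 → ℝ) => fP i p.2 p.1)
    {p : ℝ × (Fin 4 → ℝ) | p.2 ∈ ThetaInt} := by
  have h := cont_shift (contDiffOn_gP i).continuousOn
  have e : ∀ p : ℝ × (Fin 4 → ℝ), p.2 ∈ ThetaInt →
      fP i p.2 p.1 = gP i (p.2 - p.1 • e0) := by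
    intro p hp
    rw [fP_eq i hp p.1]
  exact ContinuousOn.congr h e

lemma contDiffOn_fM (x : ℝ) : ContDiffOn ℝ 2 (fun θ : Fin 4 → ℝ => fM θ x) ThetaInt := by
  simp only [fM_eq]
  exact contDiffOn_gg.comp (contDiff_id.sub contDiff_const).contDiffOn
    (fun θ hθ => shift_mem hθ x)

lemma cont_fPX (i : Fin 4) (θ : Fin 4 → ℝ) (hθ : θ ∈ ThetaInt) :
    Continuous (fun y => fPX i θ y) := by
  have hc : Continuous (fun y : ℝ => ((y, θ) : ℝ × (Fin 4 → ℝ))) := by fun_prop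
  have hm : ∀ y : ℝ, ((y, θ) : ℝ × (Fin 4 → ℝ)) ∈ {p : ℝ × (Fin 4 → ℝ) | p.2 ∈ ThetaInt} :=
    fun _ => hθ
  have h := contOn_fPX i
  generalize hS : {p : ℝ × (Fin 4 → ℝ) | p.2 ∈ ThetaInt} = S at h hm
  generalize hF : fPX i = F at h ⊢
  exact ContinuousOn.comp_continuous (f := fun y : ℝ => ((y, θ) : ℝ × (Fin 4 → ℝ))) h hc hm

end StableAux

/-- For every `x`, the map `θ ↦ f(x;θ)` is twice continuously differentiable
on `Θ_M°`; each `f_{θᵢ}(·;θ)` is continuously differentiable in `x`; and `f_{θᵢ}`,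
`f_{θᵢ}' = ∂f_{θᵢ}/∂x` and `f_{θᵢθⱼ}` are jointly continuous in `(x,θ)` on `ℝ × Θ_M°`. -/
theorem density_parameter_smoothness :
    (∀ x : ℝ, ContDiffOn ℝ 2 (fun θ : Fin 4 → ℝ => fM θ x) ThetaInt) ∧
    (∀ i : Fin 4, ∀ θ ∈ ThetaInt, ∀ x : ℝ, DifferentiableAt ℝ (fun y => fP i θ y) x) ∧
    (∀ i : Fin 4, ∀ θ ∈ ThetaInt, Continuous (fun y => fPX i θ y)) ∧
    (∀ i : Fin 4, ContinuousOn (fun p : ℝ × (Fin 4 → ℝ) => fP i p.2 p.1)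
      {p : ℝ × (Fin 4 → ℝ) | p.2 ∈ ThetaInt}) ∧
    (∀ i : Fin 4, ContinuousOn (fun p : ℝ × (Fin 4 → ℝ) => fPX i p.2 p.1)
      {p : ℝ × (Fin 4 → ℝ) | p.2 ∈ ThetaInt}) ∧
    (∀ i j : Fin 4, ContinuousOn (fun p : ℝ × (Fin 4 → ℝ) => fPP i j p.2 p.1)
      {p : ℝ × (Fin 4 → ℝ) | p.2 ∈ ThetaInt}) := by
  refine ⟨StableAux.contDiffOn_fM, ?_, StableAux.cont_fPX, StableAux.contOn_fP,
    StableAux.contOn_fPX, StableAux.contOn_fPP⟩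
  intro i θ hθ x
  exact (StableAux.hasDeriv_fP i hθ x).differentiableAt
end
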